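/- arXiv:2208.14773 — 6 statements merged into one kernel-verified Lean document; each statement's English description precedes it below -/
import Mathlib

section
/- Let q be a prime power, k ≥ 1, and n = 2k+1. Let Σ be a (k+1)-space and σ ⊂ Σ a (k-1)-space of PG(2k+1,q), let K_1, K_2 be two nonempty sets partitioning the set of all k-spaces κ with σ ⊂ κ ⊂ Σ, let B_0 be the set of all points lying in some κ ∈ K_1 but not in σ, and let B_{n-1} be the set of all hyperplanes containing some κ ∈ K_2 but not containing Σ. Then every k-space of PG(2k+1,q) contains a point of B_0 or is contained in a hyperplane of B_{n-1}. -/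
/-- Construction 1 blocks every `k`-space of `PG(2k+1,q)`.
`PG(2k+1,q)` is modelled via the vector space `F^(2k+2)` over a finite field `F`
with `q = Fintype.card F` elements; a projective `m`-space is a linear subspace of
vector dimension `m+1`.  `SIG` is a `(k+1)`-space, `sig ⊂ SIG` is a `(k-1)`-space,
`K1, K2` partition the `k`-spaces `κ` with `sig ⊂ κ ⊂ SIG` into two nonempty sets,
`B0` is the set of points in some `κ ∈ K1` but not in `sig`, and `Bn` is the set of
hyperplanes through some `κ ∈ K2` not containing `SIG`.  Then every `k`-space
contains a point of `B0` or is contained in a hyperplane of `Bn`. -/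
theorem stmt_0 {F : Type} [Field F] [Fintype F] (k : ℕ) (hk : 1 ≤ k)
    (SIG sig : Submodule F (Fin (2 * k + 2) → F))
    (hSIG : Module.finrank F SIG = k + 2)
    (hsig : Module.finrank F sig = k)
    (hsub : sig < SIG)
    (K1 K2 : Set (Submodule F (Fin (2 * k + 2) → F)))
    (hK1 : K1.Nonempty) (hK2 : K2.Nonempty) (hdisj : Disjoint K1 K2)
    (hpart : K1 ∪ K2 =
      {κ : Submodule F (Fin (2 * k + 2) → F) | Module.finrank F κ = k + 1 ∧ sig ≤ κ ∧ κ ≤ SIG})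
    (B0 Bn : Set (Submodule F (Fin (2 * k + 2) → F)))
    (hB0 : B0 = {p : Submodule F (Fin (2 * k + 2) → F) | Module.finrank F p = 1 ∧ ∃ κ ∈ K1, p ≤ κ ∧ ¬ p ≤ sig})
    (hBn : Bn = {H : Submodule F (Fin (2 * k + 2) → F) | Module.finrank F H = 2 * k + 1 ∧ ∃ κ ∈ K2, κ ≤ H ∧ ¬ SIG ≤ H}) :
    ∀ W : Submodule F (Fin (2 * k + 2) → F), Module.finrank F W = k + 1 →
      (∃ p ∈ B0, p ≤ W) ∨ (∃ H ∈ Bn, W ≤ H) := by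
  classical
  intro W hW
  have key : ∀ κ ∈ K2, W ⊓ SIG ≤ κ → ∃ H ∈ Bn, W ≤ H := by
    intro κ hκ hle
    have hκ' : κ ∈ K1 ∪ K2 := Or.inr hκ
    rw [hpart] at hκ'
    obtain ⟨hd, h1, h2⟩ := hκ'
    have hnot : ¬ SIG ≤ κ ⊔ W := by
      intro h
      have hS : SIG ≤ κ := by
        intro v hv
        obtain ⟨a, ha, b, hb, rfl⟩ := Submodule.mem_sup.1 (h hv)
        have hbS : b ∈ SIG := by
          have := SIG.sub_mem hv (h2 ha)
          simpa using this
        exact κ.add_mem ha (hle ⟨hb, hbS⟩)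
      have := Submodule.finrank_mono hS
      omega
    obtain ⟨v, hv, hvn⟩ := SetLike.not_le_iff_exists.1 hnot
    obtain ⟨f, hf, hfk⟩ := Submodule.exists_le_ker_of_notMem hvn
    refine ⟨LinearMap.ker f, ?_, le_sup_right.trans hfk⟩
    rw [hBn]
    refine ⟨?_, κ, hκ, le_sup_left.trans hfk, fun h => hf (h hv)⟩
    have hsurj : LinearMap.range f = ⊤ := by
      apply LinearMap.range_eq_top.2
      apply LinearMap.surjective
      intro h0
      exact hf (by simp [h0])
    have := LinearMap.finrank_range_add_finrank_ker f
    rw [hsurj] at this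
    simp at this
    omega
  have point : ∀ κ ∈ K1, ∀ w ∈ W, w ∈ κ → w ∉ sig → ∃ p ∈ B0, p ≤ W := by
    intro κ hκ w hw hwκ hws
    refine ⟨Submodule.span F {w}, ?_, by simpa using hw⟩
    rw [hB0]
    refine ⟨finrank_span_singleton ?_, κ, hκ, by simpa using hwκ, by simpa using hws⟩
    rintro rfl
    exact hws sig.zero_mem
  have ext1 : ∀ (U : Submodule F (Fin (2 * k + 2) → F)) (x : Fin (2 * k + 2) → F), x ∉ U →
      Module.finrank F U + 1 ≤ Module.finrank F (U ⊔ Submodule.span F {x} : Submodule F _) := by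
    intro U x hx
    apply Submodule.finrank_lt_finrank_of_lt
    refine lt_of_le_of_ne le_sup_left fun h => hx ?_
    rw [h]
    exact Submodule.mem_sup_right (Submodule.mem_span_singleton_self x)
  by_cases hex : ∃ κ ∈ K2, W ⊓ SIG ≤ κ
  · obtain ⟨κ, h1, h2⟩ := hex
    exact Or.inr (key κ h1 h2)
  left
  push Not at hex
  obtain ⟨κ2, hκ2⟩ := hK2
  have hκ2' : κ2 ∈ K1 ∪ K2 := Or.inr hκ2
  rw [hpart] at hκ2'
  obtain ⟨x, hx, hxn⟩ := SetLike.not_le_iff_exists.1 (hex κ2 hκ2)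
  have hxs : x ∉ sig := fun h => hxn (hκ2'.2.1 h)
  have hκ : sig ⊔ Submodule.span F {x} ∈ K1 ∪ K2 := by
    rw [hpart]
    refine ⟨?_, le_sup_left, sup_le hsub.le (by simpa using hx.2)⟩
    have h1 := ext1 sig x hxs
    have h2 := Submodule.finrank_add_le_finrank_add_finrank sig (Submodule.span F {x})
    have h3 : Module.finrank F (Submodule.span F {x}) ≤ 1 := by
      simpa using finrank_span_le_card (R := F) ({x} : Set (Fin (2 * k + 2) → F))
    omega
  have hxm : x ∈ sig ⊔ Submodule.span F {x} :=
    Submodule.mem_sup_right (Submodule.mem_span_singleton_self x)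
  rcases hκ with hκ | hκ
  · exact point _ hκ x hx.1 hxm hxs
  obtain ⟨y, hy, hyn⟩ := SetLike.not_le_iff_exists.1 (hex _ hκ)
  have hS : sig ⊔ (W ⊓ SIG) = SIG := by
    apply Submodule.eq_of_le_of_finrank_le (sup_le hsub.le inf_le_right)
    have h1 := ext1 sig x hxs
    have h2 := ext1 _ y hyn
    have h3 : sig ⊔ Submodule.span F {x} ⊔ Submodule.span F {y} ≤ sig ⊔ (W ⊓ SIG) := by
      refine sup_le (sup_le le_sup_left ?_) ?_
      · exact le_sup_of_le_right ((Submodule.span_singleton_le_iff_mem _ _).2 hx)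
      · exact le_sup_of_le_right ((Submodule.span_singleton_le_iff_mem _ _).2 hy)
    have h4 := Submodule.finrank_mono h3
    omega
  obtain ⟨κ1, hκ1⟩ := hK1
  have hκ1' : κ1 ∈ K1 ∪ K2 := Or.inl hκ1
  rw [hpart] at hκ1'
  obtain ⟨hd, h1, h2⟩ := hκ1'
  have hnot : ¬ κ1 ≤ sig := by
    intro h
    have := Submodule.finrank_mono h
    omega
  obtain ⟨z, hz, hzn⟩ := SetLike.not_le_iff_exists.1 hnot
  have hzS := h2 hz
  rw [← hS] at hzS
  obtain ⟨s, hs, w, hw, rfl⟩ := Submodule.mem_sup.1 hzS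
  refine point κ1 hκ1 w hw.1 ?_ fun h => hzn (sig.add_mem hs h)
  have := κ1.sub_mem hz (h1 hs)
  simpa using this
end

section
/- Let q be a prime power and let k, n be integers with 0 ≤ k < n and k < (n-1)/2; if q = 2 suppose moreover that k ≠ (n-2)/2. Let B = B_0 ∪ B_{n-1} be a blocking set with respect to k-spaces in PG(n,q) consisting of points and hyperplanes. Then |B| ≥ θ_{k+1} = (q^{k+2}-1)/(q-1), with equality if and only if B_0 is empty and B_{n-1} consists of all hyperplanes containing a fixed (n-k-2)-space. -/
/-- `theta q m = (q^(m+1) - 1)/(q - 1)` is the number of points of `PG(m,q)`. -/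
def theta (q m : ℕ) : ℕ := (q ^ (m + 1) - 1) / (q - 1)

open Module Submodule

section Helpers
set_option linter.unusedSectionVars false
variable {F : Type*} [Field F] [Fintype F]

theorem bb_theta (q m : ℕ) : theta q m * (q - 1) = q ^ (m + 1) - 1 := by
  unfold theta
  apply Nat.div_mul_cancel
  simpa using Nat.sub_dvd_pow_sub_pow q 1 (m + 1)

theorem bb_avg {G X : Type*} [Group G] [Fintype G] [AddCommGroup X] [Module F X] [Fintype X]
    (ρ : G →* (X ≃ₗ[F] X)) (D : Submodule F X)
    (htr : ∀ x y : X, x ≠ 0 → y ≠ 0 → ∃ g, ρ g x = y) (x : X) (hx : x ≠ 0) :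
    {g : G | ρ g x ∈ D}.ncard * (Nat.card X - 1) = Nat.card G * (Nat.card D - 1) := by
  classical
  have h1 : ∀ y : X, y ≠ 0 → {g : G | ρ g y ∈ D}.ncard = {g : G | ρ g x ∈ D}.ncard := by
    intro y hy
    obtain ⟨h, rfl⟩ := htr x y hx hy
    refine Set.ncard_congr (fun g _ => g * h) ?_ ?_ ?_
    · intro g hg; simpa using hg
    · intro a b _ _ hab; simpa using hab
    · intro b hb
      refine ⟨b * h⁻¹, ?_, by simp⟩
      simpa [← LinearEquiv.mul_apply, ← map_mul] using hb
  have h2 : ∀ g : G, (Finset.univ.filter (fun y : X => y ≠ 0 ∧ ρ g y ∈ D)).card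
      = Nat.card D - 1 := by
    intro g
    have e1 : (Finset.univ.filter (fun y : X => y ≠ 0 ∧ ρ g y ∈ D)).card
      = (Finset.univ.filter (fun y : X => y ∈ D ∧ y ≠ 0)).card := by
      refine Finset.card_bij (fun y _ => ρ g y) ?_ ?_ ?_
      · intro a ha; simp at ha ⊢; exact ⟨ha.2, ha.1⟩
      · intro a _ b _ h; simpa using h
      · intro b hb
        refine ⟨(ρ g).symm b, ?_, by simp⟩
        simp at hb ⊢; exact ⟨hb.2, hb.1⟩
    rw [e1]
    have e2 : (Finset.univ.filter (fun y : X => y ∈ D ∧ y ≠ 0))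
        = (Finset.univ.filter (fun y : X => y ∈ D)).erase 0 := by
      ext y; simp [and_comm]
    rw [e2, Finset.card_erase_of_mem (by simp)]
    congr 1
    rw [Nat.card_eq_fintype_card, Fintype.card_subtype]
  have h3 := Finset.sum_card_bipartiteAbove_eq_sum_card_bipartiteBelow
    (s := (Finset.univ.erase (0 : X))) (t := (Finset.univ : Finset G)) (fun y g => ρ g y ∈ D)
  have h4 : ∀ y ∈ (Finset.univ.erase (0 : X)),
      ((Finset.univ : Finset G).bipartiteAbove (fun y g => ρ g y ∈ D) y).card
        = {g : G | ρ g x ∈ D}.ncard := by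
    intro y hy
    rw [← h1 y (by simpa using hy), Set.ncard_eq_toFinset_card']
    congr 1
    ext g; simp [Finset.bipartiteAbove]
  have h5 : ∀ g ∈ (Finset.univ : Finset G),
      ((Finset.univ.erase (0 : X)).bipartiteBelow (fun y g => ρ g y ∈ D) g).card
        = Nat.card D - 1 := by
    intro g _
    rw [← h2 g]
    congr 1
    ext y; simp [Finset.bipartiteBelow]
  rw [Finset.sum_congr rfl h4, Finset.sum_congr rfl h5] at h3
  simp only [Finset.sum_const, smul_eq_mul, Finset.card_univ] at h3
  rw [Finset.card_erase_of_mem (by simp), Finset.card_univ] at h3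
  rw [Nat.card_eq_fintype_card (α := X), mul_comm, h3, Nat.card_eq_fintype_card (α := G)]

variable {V : Type*} [AddCommGroup V] [Module F V] [FiniteDimensional F V]

theorem bb_trans (x y : V) (hx : x ≠ 0) (hy : y ≠ 0) : ∃ g : V ≃ₗ[F] V, g x = y := by
  let f := (LinearEquiv.toSpanNonzeroSingleton F V x hx).symm ≪≫ₗ
    (LinearEquiv.toSpanNonzeroSingleton F V y hy)
  obtain ⟨g, hg⟩ := Submodule.exists_linearEquiv_restrict_eq f
  refine ⟨g, ?_⟩
  have h := hg ⟨x, mem_span_singleton_self x⟩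
  rw [← h]
  have : (LinearEquiv.toSpanNonzeroSingleton F V x hx).symm ⟨x, mem_span_singleton_self x⟩ = 1 := by
    rw [LinearEquiv.symm_apply_eq]; ext; simp
  simp [f, this]

theorem bb_trans_dual (x y : Dual F V) (hx : x ≠ 0) (hy : y ≠ 0) :
    ∃ g : V ≃ₗ[F] V, x ∘ₗ (g : V →ₗ[F] V) = y := by
  obtain ⟨e, he⟩ := bb_trans (F := F) x y hx hy
  refine ⟨evalEquiv F V ≪≫ₗ e.dualMap ≪≫ₗ (evalEquiv F V).symm, ?_⟩
  ext v
  simp [he]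

def bb_rho : (V ≃ₗ[F] V) →* (Dual F V ≃ₗ[F] Dual F V) where
  toFun g := g.symm.dualMap
  map_one' := by ext; rfl
  map_mul' a b := by ext; rfl

theorem bb_card (X : Type*) [AddCommGroup X] [Module F X] [FiniteDimensional F X] :
    Nat.card X = Fintype.card F ^ finrank F X := by
  rw [Module.natCard_eq_pow_finrank (K := F), Nat.card_eq_fintype_card]

theorem bb_exists_sub (d : ℕ) (hd : d ≤ finrank F V) :
    ∃ W : Submodule F V, finrank F W = d := by
  let b := finBasis F V
  refine ⟨span F (Set.range (b ∘ Fin.castLE hd)), ?_⟩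
  rw [finrank_span_eq_card]
  · simp
  · exact b.linearIndependent.comp _ (Fin.castLE_injective hd)

theorem bb_hyp (H : Submodule F V) (hH : finrank F H + 1 = finrank F V) :
    ∃ f : Dual F V, f ≠ 0 ∧ LinearMap.ker f = H := by
  have hlt : H < ⊤ := by
    rw [lt_top_iff_ne_top]; rintro rfl; simp at hH
  obtain ⟨f, hf, hf2⟩ := Submodule.exists_le_ker_of_lt_top H hlt
  refine ⟨f, hf, ?_⟩
  have := Module.Dual.finrank_ker_add_one_of_ne_zero hf
  exact (Submodule.eq_of_le_of_finrank_eq hf2 (by omega)).symm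

/-- the union bound -/
theorem bb_union (d : ℕ) (hd : d ≤ finrank F V) (B0 Bn : Set (Submodule F V))
    (hB0 : ∀ p ∈ B0, finrank F p = 1) (hBn : ∀ H ∈ Bn, finrank F H + 1 = finrank F V)
    (hblock : ∀ W : Submodule F V, finrank F W = d → (∃ p ∈ B0, p ≤ W) ∨ (∃ H ∈ Bn, W ≤ H)) :
    Fintype.card F ^ finrank F V - 1 ≤ B0.ncard * (Fintype.card F ^ d - 1)
      + Bn.ncard * (Fintype.card F ^ (finrank F V - d) - 1) := by
  classical
  have : Finite V := Module.finite_of_finite F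
  have : Finite (Dual F V) := Module.finite_of_finite F
  have : Fintype V := Fintype.ofFinite V
  have : Fintype (Dual F V) := Fintype.ofFinite _
  have : Finite (V ≃ₗ[F] V) := Finite.of_injective (fun g => (g : V → V)) DFunLike.coe_injective
  have : Fintype (V ≃ₗ[F] V) := Fintype.ofFinite _
  have : Finite (Submodule F V) := Finite.of_injective (fun g => (g : Set V)) SetLike.coe_injective
  obtain ⟨W0, hW0⟩ := bb_exists_sub (F := F) (V := V) d hd
  set N := finrank F V with hN
  set q := Fintype.card F with hq
  let P : Submodule F V → Set (V ≃ₗ[F] V) := fun p => {g | p ≤ W0.map (g.symm : V →ₗ[F] V)}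
  let Q : Submodule F V → Set (V ≃ₗ[F] V) := fun p => {g | W0.map (g.symm : V →ₗ[F] V) ≤ p}
  have hP : ∀ p ∈ B0, (P p).ncard * (q ^ N - 1) = Nat.card (V ≃ₗ[F] V) * (q ^ d - 1) := by
    intro p hp
    obtain ⟨v, hv, hvp⟩ := finrank_eq_one_iff'.mp (hB0 p hp)
    have hv0 : (v : V) ≠ 0 := by simpa using hv
    have hps : p = span F {(v : V)} := by
      apply le_antisymm
      · intro w hw
        obtain ⟨c, hc⟩ := hvp ⟨w, hw⟩
        rw [mem_span_singleton]
        exact ⟨c, by simpa using congrArg Subtype.val hc⟩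
      · simp
    have := bb_avg (F := F) (MonoidHom.id (V ≃ₗ[F] V)) W0 (fun x y hx hy => bb_trans x y hx hy) v hv0
    rw [bb_card (F := F) V, bb_card (F := F) W0, hW0] at this
    rw [← this]
    congr 2
    ext g
    simp only [P, Set.mem_ofPred_eq, MonoidHom.id_apply]
    have hle : p ≤ W0.map (g.symm : V →ₗ[F] V) ↔ (v : V) ∈ W0.map (g.symm : V →ₗ[F] V) :=
      ⟨fun h => h v.2, fun h => hps.le.trans ((span_singleton_le_iff_mem _ _).mpr h)⟩
    rw [hle]
    constructor
    · rintro ⟨w, hw, h⟩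
      rw [← h]; simpa using hw
    · intro h
      exact ⟨_, h, by simp⟩
  have hQ : ∀ p ∈ Bn, (Q p).ncard * (q ^ N - 1) = Nat.card (V ≃ₗ[F] V) * (q ^ (N - d) - 1) := by
    intro p hp
    obtain ⟨f, hf, hfp⟩ := bb_hyp p (hBn p hp)
    have := bb_avg (F := F) (bb_rho (F := F) (V := V)) W0.dualAnnihilator (fun x y hx hy => by
      obtain ⟨g, hg⟩ := bb_trans_dual x y hx hy
      exact ⟨g.symm, hg⟩) f hf
    have hd2 := Subspace.finrank_add_finrank_dualAnnihilator_eq W0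
    rw [bb_card (F := F) (Dual F V), bb_card (F := F) W0.dualAnnihilator,
      Subspace.dual_finrank_eq, show finrank F W0.dualAnnihilator = N - d by omega] at this
    rw [← this]
    congr 2
    ext g
    simp only [Q, Set.mem_ofPred_eq]
    rw [← hfp, Submodule.mem_dualAnnihilator, map_le_iff_le_comap]
    rfl
  have hcov : (Set.univ : Set (V ≃ₗ[F] V)) ⊆ (⋃ p ∈ B0.toFinite.toFinset, P p) ∪
      ⋃ p ∈ Bn.toFinite.toFinset, Q p := by
    intro g _
    have := hblock (W0.map (g.symm : V →ₗ[F] V)) (by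
      rw [← hW0]; exact LinearEquiv.finrank_map_eq g.symm W0)
    rcases this with ⟨p, hp, h⟩ | ⟨p, hp, h⟩
    · left; simp only [Set.mem_iUnion]; exact ⟨p, by simpa using hp, h⟩
    · right; simp only [Set.mem_iUnion]; exact ⟨p, by simpa using hp, h⟩
  have h1 := (Set.ncard_le_ncard hcov).trans (Set.ncard_union_le _ _)
  have h2 := Finset.set_ncard_biUnion_le B0.toFinite.toFinset P
  have h3 := Finset.set_ncard_biUnion_le Bn.toFinite.toFinset Q
  rw [Set.ncard_univ] at h1
  have hG : 0 < Nat.card (V ≃ₗ[F] V) := Nat.card_pos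
  have h4 : (∑ i ∈ B0.toFinite.toFinset, (P i).ncard) * (q ^ N - 1)
      = B0.ncard * (Nat.card (V ≃ₗ[F] V) * (q ^ d - 1)) := by
    rw [Finset.sum_mul, Finset.sum_congr rfl (fun p hp => hP p (by simpa using hp))]
    rw [Finset.sum_const, smul_eq_mul, Set.ncard_eq_toFinset_card B0]
  have h5 : (∑ i ∈ Bn.toFinite.toFinset, (Q i).ncard) * (q ^ N - 1)
      = Bn.ncard * (Nat.card (V ≃ₗ[F] V) * (q ^ (N - d) - 1)) := by
    rw [Finset.sum_mul, Finset.sum_congr rfl (fun p hp => hQ p (by simpa using hp))]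
    rw [Finset.sum_const, smul_eq_mul, Set.ncard_eq_toFinset_card Bn]
  refine Nat.le_of_mul_le_mul_left ?_ hG
  calc _ ≤ ((∑ i ∈ B0.toFinite.toFinset, (P i).ncard)
          + (∑ i ∈ Bn.toFinite.toFinset, (Q i).ncard)) * (q ^ N - 1) :=
        Nat.mul_le_mul_right _ (by omega)
    _ = _ := by rw [add_mul, h4, h5]; ring

/-- number of hyperplanes through a subspace -/
theorem bb_count (W : Submodule F V) :
    {H : Submodule F V | finrank F H + 1 = finrank F V ∧ W ≤ H}.ncard * (Fintype.card F - 1)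
      = Fintype.card F ^ (finrank F V - finrank F W) - 1 := by
  have hd2 := Subspace.finrank_add_finrank_dualAnnihilator_eq W
  have hc := Projectivization.card F W.dualAnnihilator
  rw [bb_card (F := F), show finrank F W.dualAnnihilator = finrank F V - finrank F W by omega,
    Nat.card_eq_fintype_card (α := F)] at hc
  rw [hc]
  congr 1
  let Φ : Projectivization F W.dualAnnihilator → Submodule F V :=
    fun p => (p.submodule.map W.dualAnnihilator.subtype).dualCoannihilator
  have hinj : Function.Injective Φ := by
    intro p p' h
    have h' := congrArg Submodule.dualAnnihilator h
    simp only [Φ] at h'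
    rw [Subspace.dualCoannihilator_dualAnnihilator_eq,
      Subspace.dualCoannihilator_dualAnnihilator_eq] at h'
    exact Projectivization.submodule_injective
      (Submodule.map_injective_of_injective W.dualAnnihilator.injective_subtype h')
  have hr : {H : Submodule F V | finrank F H + 1 = finrank F V ∧ W ≤ H} = Set.range Φ := by
    ext H
    constructor
    · rintro ⟨h1, h2⟩
      have h3 : H.dualAnnihilator ≤ W.dualAnnihilator := Submodule.dualAnnihilator_anti h2
      have h4 := Subspace.finrank_add_finrank_dualAnnihilator_eq H
      let E := H.dualAnnihilator.comap W.dualAnnihilator.subtype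
      have hE : E.map W.dualAnnihilator.subtype = H.dualAnnihilator := by
        simp only [E]
        rw [Submodule.map_comap_subtype, inf_eq_right.mpr h3]
      have hE1 : finrank F E = 1 := by
        rw [← Submodule.finrank_map_subtype_eq, hE]; omega
      refine ⟨Projectivization.mk'' E hE1, ?_⟩
      simp only [Φ, Projectivization.submodule_mk'']
      rw [hE, Subspace.dualAnnihilator_dualCoannihilator_eq]
    · rintro ⟨p, rfl⟩
      have h1 : finrank F (p.submodule.map W.dualAnnihilator.subtype) = 1 := by
        rw [Submodule.finrank_map_subtype_eq]
        exact Projectivization.finrank_submodule p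
      have h2 := Subspace.finrank_add_finrank_dualCoannihilator_eq
        (p.submodule.map W.dualAnnihilator.subtype)
      refine ⟨by simp only [Φ]; omega, ?_⟩
      rw [← Subspace.dualAnnihilator_dualCoannihilator_eq (W := W)]
      exact Submodule.dualCoannihilator_anti (Submodule.map_subtype_le _ _)
  rw [hr, ← Set.image_univ, Set.ncard_image_of_injective _ hinj, Set.ncard_univ]

end Helpers
section Main
set_option linter.unusedSectionVars false
variable {F : Type*} [Field F] [Fintype F]
variable {V : Type*} [AddCommGroup V] [Module F V] [FiniteDimensional F V]

theorem bb_comap_finrank (S H : Submodule F V) (hH : finrank F H + 1 = finrank F V)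
    (hS : ¬ S ≤ H) : finrank F (H.comap S.subtype) + 1 = finrank F S := by
  obtain ⟨f, hf, rfl⟩ := bb_hyp H hH
  have h : f ∘ₗ S.subtype ≠ 0 := by
    intro h
    apply hS
    intro x hx
    exact LinearMap.congr_fun h ⟨x, hx⟩
  have h1 := Module.Dual.finrank_ker_add_one_of_ne_zero (f := (f ∘ₗ S.subtype : Dual F S)) h
  rw [LinearMap.ker_comp] at h1
  exact h1

/-- a `(k+1)`-space which is not blocked -/
theorem bb_key (k : ℕ) (B0 Bn : Set (Submodule F V))
    (hBn : ∀ H ∈ Bn, finrank F H + 1 = finrank F V)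
    (hblock : ∀ W : Submodule F V, finrank F W = k + 1 →
      (∃ p ∈ B0, p ≤ W) ∨ (∃ H ∈ Bn, W ≤ H))
    (S : Submodule F V) (hS : finrank F S = k + 2) (h0 : ∀ p ∈ B0, ¬ p ≤ S)
    (hn : ∀ H ∈ Bn, ¬ S ≤ H) :
    theta (Fintype.card F) (k + 1) ≤ Bn.ncard ∧
    (Bn.ncard = theta (Fintype.card F) (k + 1) →
      Set.InjOn (fun H : Submodule F V => H.comap S.subtype) Bn) := by
  have : Finite V := Module.finite_of_finite F
  have : Finite (Submodule F V) := Finite.of_injective (fun g => (g : Set V)) SetLike.coe_injective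
  have : Finite (Submodule F S) := Finite.of_injective (fun g => (g : Set S)) SetLike.coe_injective
  have hq : 1 < Fintype.card F := Fintype.one_lt_card
  have hc := bb_count (F := F) (V := S) ⊥
  have ht := bb_theta (Fintype.card F) (k + 1)
  simp only [finrank_bot, hS, bot_le, and_true, Nat.sub_zero] at hc
  have hc2 : {H : Submodule F S | finrank F H + 1 = k + 2}.ncard
      = theta (Fintype.card F) (k + 1) :=
    Nat.eq_of_mul_eq_mul_right (by omega) (hc.trans ht.symm)
  have hsub : {H : Submodule F S | finrank F H + 1 = k + 2} ⊆
      (fun H : Submodule F V => H.comap S.subtype) '' Bn := by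
    intro T hT
    have hT' : finrank F T + 1 = k + 2 := hT
    rcases hblock (T.map S.subtype) (by rw [Submodule.finrank_map_subtype_eq]; omega) with
      ⟨p, hp, h⟩ | ⟨H, hH, h⟩
    · exact absurd (h.trans (Submodule.map_subtype_le _ _)) (h0 p hp)
    · refine ⟨H, hH, ?_⟩
      have h1 := bb_comap_finrank S H (hBn H hH) (hn H hH)
      exact (Submodule.eq_of_le_of_finrank_eq (map_le_iff_le_comap.mp h) (by omega)).symm
  have h1 := Set.ncard_le_ncard hsub
  have h2 := Set.ncard_image_le (f := fun H : Submodule F V => H.comap S.subtype) Bn.toFinite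
  refine ⟨by omega, fun h => ?_⟩
  exact Set.injOn_of_ncard_image_eq (by omega)

theorem bb_arith1 (a b x y : ℕ) (ha : 1 < a) (hb : 1 < b) (hab : a ≤ b) (hxy : x + y ≤ a - 1) :
    x * (a - 1) + y * (b - 1) < a * b - 1 := by
  obtain ⟨a, rfl⟩ := Nat.exists_eq_add_of_lt ha
  obtain ⟨c, rfl⟩ := Nat.exists_eq_add_of_le hab
  have e : (1 + a + 1) * (1 + a + 1 + c) - 1 = (1 + a) * (1 + a + c) + (a + 1 + a + 1 + c) := by
    apply Nat.sub_eq_of_eq_add; ring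
  rw [e]
  have e1 : 1 + a + 1 - 1 = 1 + a := by omega
  have e2 : 1 + a + 1 + c - 1 = 1 + a + c := by omega
  rw [e1] at hxy
  rw [e1, e2]
  nlinarith [Nat.mul_le_mul_right (1 + a + c) hxy, Nat.zero_le (x * c)]

theorem bb_arith2 (q Q x y : ℕ) (hq : 3 ≤ q) (hQ : 1 ≤ Q) (hxy : (x + y) * (q - 1) ≤ q * Q - 1)
    (h1 : q * Q * Q - 1 ≤ x * (q * Q - 1) + y * (Q - 1))
    (h2 : q * Q * Q - 1 ≤ x * (Q - 1) + y * (q * Q - 1)) : False := by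
  have p1 : 1 ≤ q * Q := Nat.mul_pos (by omega) hQ
  have p2 : 1 ≤ q * Q * Q := Nat.mul_pos p1 hQ
  have p3 : 1 ≤ q := by omega
  have q1 : (1 : ℤ) ≤ Q := by exact_mod_cast hQ
  have q2 : (1 : ℤ) ≤ q * Q := by exact_mod_cast p1
  have q3 : (3 : ℤ) ≤ q := by exact_mod_cast hq
  zify [p1, p2, p3, hQ] at hxy h1 h2
  have hs : 2 * ((q : ℤ) * Q * Q - 1) ≤ (x + y) * (q * Q + Q - 2) := by linarith
  have h3 : (0 : ℤ) ≤ q * Q + Q - 2 := by linarith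
  have h4 := mul_le_mul_of_nonneg_right hs (show (0 : ℤ) ≤ q - 1 by linarith)
  have h5 := mul_le_mul_of_nonneg_right hxy h3
  have h6 : (0 : ℤ) ≤ (q * Q * Q) * (q - 3) := mul_nonneg (by positivity) (by linarith)
  have h7 : (0 : ℤ) ≤ q * (Q - 1) := mul_nonneg (by linarith) (by linarith)
  nlinarith

theorem bb_theta_le (q m : ℕ) (hq : 2 ≤ q) : theta q m ≤ q ^ (m + 1) - 1 := by
  rw [← bb_theta]
  exact Nat.le_mul_of_pos_right _ (by omega)

/-- dual Bose-Burton closure -/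
theorem bb_closed (k n : ℕ) (hkn : 2 * k + 1 < n) (hV : finrank F V = n + 1)
    (Bn : Set (Submodule F V)) (hBn : ∀ H ∈ Bn, finrank F H = n)
    (hblock : ∀ W : Submodule F V, finrank F W = k + 1 → ∃ H ∈ Bn, W ≤ H)
    (hcard : Bn.ncard = theta (Fintype.card F) (k + 1))
    (H1 H2 H3 : Submodule F V) (h1 : H1 ∈ Bn) (h2 : H2 ∈ Bn) (h3 : finrank F H3 = n)
    (hle : H1 ⊓ H2 ≤ H3) : H3 ∈ Bn := by
  have : Finite V := Module.finite_of_finite F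
  have : Finite (Submodule F V) := Finite.of_injective (fun g => (g : Set V)) SetLike.coe_injective
  have hq : 1 < Fintype.card F := Fintype.one_lt_card
  by_contra hcon
  have hnle : ∀ H ∈ Bn, ¬ H3 ≤ H := by
    intro H hH hl
    have := Submodule.eq_of_le_of_finrank_eq hl (by rw [h3, hBn H hH])
    exact hcon (this ▸ hH)
  have hnb : ¬ ∀ W : Submodule F H3, finrank F W = k + 2 →
      (∃ p ∈ (∅ : Set (Submodule F H3)), p ≤ W) ∨
      (∃ H ∈ (fun H : Submodule F V => H.comap H3.subtype) '' Bn, W ≤ H) := by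
    intro hb
    have hu := bb_union (F := F) (V := H3) (k + 2) (by omega) ∅ _ (by simp) (by
      rintro _ ⟨H, hH, rfl⟩
      exact bb_comap_finrank H3 H (by rw [hBn H hH, hV]) (hnle H hH)) hb
    have hi := Set.ncard_image_le (f := fun H : Submodule F V => H.comap H3.subtype) Bn.toFinite
    have ht := bb_theta_le (Fintype.card F) (k + 1) hq
    rw [h3, Set.ncard_empty, zero_mul, zero_add] at hu
    have ha : 1 < Fintype.card F ^ (k + 2) := Nat.one_lt_pow (by omega) hq
    have hb : 1 ≤ Fintype.card F ^ (n - (k + 2)) := Nat.one_le_pow _ _ (by omega)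
    have he : Fintype.card F ^ n = Fintype.card F ^ (k + 2) * Fintype.card F ^ (n - (k + 2)) := by
      rw [← pow_add]; congr 1; omega
    rw [he] at hu
    rw [show k + 1 + 1 = k + 2 by rfl] at ht
    have h6 := hu.trans (Nat.mul_le_mul_right _ (hi.trans (hcard.le.trans ht)))
    generalize Fintype.card F ^ (k + 2) = a at *
    generalize Fintype.card F ^ (n - (k + 2)) = b at *
    have h7 : 1 ≤ a * b := Nat.mul_pos (by omega) hb
    zify [h7, hb, ha.le] at h6
    nlinarith
  push Not at hnb
  obtain ⟨W, hW, -, hWn⟩ := hnb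
  have hS : finrank F (W.map H3.subtype) = k + 2 := by
    rw [Submodule.finrank_map_subtype_eq, hW]
  have hSn : ∀ H ∈ Bn, ¬ W.map H3.subtype ≤ H := by
    intro H hH hl
    exact hWn _ ⟨H, hH, rfl⟩ (map_le_iff_le_comap.mp hl)
  have hk := (bb_key k ∅ Bn (fun H hH => by rw [hBn H hH, hV])
    (fun W hW => Or.inr (hblock W hW)) _ hS (by simp) hSn).2 hcard
  have hS3 : W.map H3.subtype ≤ H3 := Submodule.map_subtype_le _ _
  by_cases h12 : H1 = H2
  · subst h12
    rw [inf_idem] at hle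
    exact hcon (Submodule.eq_of_le_of_finrank_eq hle (by rw [h3, hBn H1 h1]) ▸ h1)
  -- both meet H3 in H1 ⊓ H2
  have hM : finrank F ↥(H1 ⊓ H2) + 2 = n + 1 := by
    have e1 := Submodule.finrank_sup_add_finrank_inf_eq H1 H2
    have e2 : H1 ⊔ H2 ≤ ⊤ := le_top
    have e3 := Submodule.finrank_le (H1 ⊔ H2)
    have e4 : H1 < H1 ⊔ H2 := by
      refine lt_of_le_of_ne le_sup_left fun h => h12 ?_
      exact (Submodule.eq_of_le_of_finrank_eq (h ▸ le_sup_right) (by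
        rw [hBn H1 h1, hBn H2 h2])).symm
    have e5 := Submodule.finrank_lt_finrank_of_lt e4
    rw [hBn H1 h1, hBn H2 h2] at e1
    rw [hBn H1 h1] at e5
    omega
  have key : ∀ H ∈ Bn, H1 ⊓ H2 ≤ H → H ⊓ H3 = H1 ⊓ H2 := by
    intro H hH hl
    refine (Submodule.eq_of_le_of_finrank_le (le_inf hl hle) ?_).symm
    have e4 : H ⊓ H3 < H3 := by
      refine lt_of_le_of_ne inf_le_right fun h => hnle H hH (inf_eq_right.mp h)
    have e5 := Submodule.finrank_lt_finrank_of_lt e4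
    omega
  apply h12
  apply hk h1 h2
  have k1 := key H1 h1 inf_le_left
  have k2 := key H2 h2 inf_le_right
  ext ⟨x, hx⟩
  have hx3 := hS3 hx
  have : x ∈ H1 ⊓ H3 ↔ x ∈ H2 ⊓ H3 := by rw [k1, k2]
  simpa [hx3] using this

theorem bb_main (k n : ℕ) (hkn : 2 * k + 1 < n) (hV : finrank F V = n + 1)
    (h2 : Fintype.card F = 2 → n ≠ 2 * k + 2)
    (B0 Bn : Set (Submodule F V))
    (hB0 : ∀ p ∈ B0, Module.finrank F p = 1)
    (hBn : ∀ H ∈ Bn, Module.finrank F H = n)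
    (hblock : ∀ W : Submodule F V, Module.finrank F W = k + 1 →
      (∃ p ∈ B0, p ≤ W) ∨ (∃ H ∈ Bn, W ≤ H))
    (hle : B0.ncard + Bn.ncard ≤ theta (Fintype.card F) (k + 1)) :
    theta (Fintype.card F) (k + 1) ≤ Bn.ncard := by
  have hq : 1 < Fintype.card F := Fintype.one_lt_card
  have hBn' : ∀ H ∈ Bn, finrank F H + 1 = finrank F V := fun H hH => by rw [hBn H hH, hV]
  have hnb : ¬ ∀ W : Submodule F V, finrank F W = k + 2 →
      (∃ p ∈ B0, p ≤ W) ∨ (∃ H ∈ Bn, W ≤ H) := by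
    intro hb
    have hu := bb_union (F := F) (k + 2) (by omega) B0 Bn hB0 hBn' hb
    have ht := bb_theta_le (Fintype.card F) (k + 1) hq
    rw [hV] at hu
    by_cases hn : n = 2 * k + 2
    · have hu' := bb_union (F := F) (k + 1) (by omega) B0 Bn hB0 hBn' hblock
      rw [hV] at hu'
      subst hn
      have hq3 : 3 ≤ Fintype.card F := by
        have : Fintype.card F ≠ 2 := fun h => h2 h rfl
        omega
      rw [show 2 * k + 2 + 1 - (k + 2) = k + 1 by omega] at hu
      rw [show 2 * k + 2 + 1 - (k + 1) = k + 2 by omega] at hu'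
      have hm := (Nat.mul_le_mul_right (Fintype.card F - 1) hle).trans (bb_theta _ _).le
      have e1 : Fintype.card F ^ (k + 2) = Fintype.card F * Fintype.card F ^ (k + 1) := by ring
      have e2 : Fintype.card F ^ (2 * k + 2 + 1) =
        Fintype.card F * Fintype.card F ^ (k + 1) * Fintype.card F ^ (k + 1) := by ring
      rw [show k + 1 + 1 = k + 2 by rfl, e1] at hm
      rw [e2, e1] at hu hu'
      exact bb_arith2 _ _ _ _ hq3 (Nat.one_le_pow _ _ (by omega)) hm hu hu'
    · have he : Fintype.card F ^ (n + 1) =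
          Fintype.card F ^ (k + 2) * Fintype.card F ^ (n + 1 - (k + 2)) := by
        rw [← pow_add]; congr 1; omega
      rw [he] at hu
      have := bb_arith1 (Fintype.card F ^ (k + 2)) (Fintype.card F ^ (n + 1 - (k + 2)))
        B0.ncard Bn.ncard (Nat.one_lt_pow (by omega) hq) (Nat.one_lt_pow (by omega) hq)
        (Nat.pow_le_pow_right (by omega) (by omega)) (hle.trans ht)
      omega
  push Not at hnb
  obtain ⟨S, hS, hS0, hSn⟩ := hnb
  exact (bb_key k B0 Bn hBn' hblock S hS hS0 hSn).1

theorem bb_struct (k n : ℕ) (hkn : 2 * k + 1 < n) (hV : finrank F V = n + 1)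
    (Bn : Set (Submodule F V)) (hBn : ∀ H ∈ Bn, finrank F H = n)
    (hblock : ∀ W : Submodule F V, finrank F W = k + 1 → ∃ H ∈ Bn, W ≤ H)
    (hcard : Bn.ncard = theta (Fintype.card F) (k + 1)) :
    ∃ W : Submodule F V, finrank F W = n - k - 1 ∧
      Bn = {H : Submodule F V | finrank F H = n ∧ W ≤ H} := by
  have hq : 1 < Fintype.card F := Fintype.one_lt_card
  have hcl := bb_closed k n hkn hV Bn hBn hblock hcard
  have hker : ∀ f : Dual F V, f ≠ 0 → finrank F (LinearMap.ker f) = n := by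
    intro f hf
    have := Module.Dual.finrank_ker_add_one_of_ne_zero hf
    omega
  let D : Submodule F (Dual F V) :=
    { carrier := {f | f = 0 ∨ LinearMap.ker f ∈ Bn}
      zero_mem' := Or.inl rfl
      add_mem' := by
        rintro f g (rfl | hf) (rfl | hg)
        · left; simp
        · right; simpa using hg
        · right; simpa using hf
        · by_cases h : f + g = 0
          · exact Or.inl h
          · right
            refine hcl _ _ _ hf hg (hker _ h) ?_
            rintro x ⟨h1, h2⟩
            have h1' : f x = 0 := h1
            have h2' : g x = 0 := h2
            simp [h1', h2']
      smul_mem' := by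
        rintro c f (rfl | hf)
        · left; simp
        · by_cases hc : c = 0
          · left; simp [hc]
          · right; rw [LinearMap.ker_smul _ _ hc]; exact hf }
  have hset : Bn = {H : Submodule F V | finrank F H = n ∧ D.dualCoannihilator ≤ H} := by
    ext H
    constructor
    · intro hH
      refine ⟨hBn H hH, ?_⟩
      obtain ⟨f, hf, rfl⟩ := bb_hyp H (by rw [hBn H hH, hV])
      intro x hx
      rw [Submodule.mem_dualCoannihilator] at hx
      exact hx f (Or.inr hH)
    · rintro ⟨h1, h2⟩
      obtain ⟨f, hf, rfl⟩ := bb_hyp H (by rw [h1, hV])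
      have : f ∈ D.dualCoannihilator.dualAnnihilator := by
        rw [Submodule.mem_dualAnnihilator]
        exact fun w hw => h2 hw
      rw [Subspace.dualCoannihilator_dualAnnihilator_eq] at this
      exact this.resolve_left hf
  refine ⟨D.dualCoannihilator, ?_, hset⟩
  have hc := bb_count D.dualCoannihilator
  rw [hV] at hc
  simp only [Nat.add_right_cancel_iff] at hc
  rw [← hset, hcard, bb_theta] at hc
  have p1 : 1 ≤ Fintype.card F ^ (k + 1 + 1) := Nat.one_le_pow _ _ (by omega)
  have p2 : 1 ≤ Fintype.card F ^ (n + 1 - finrank F D.dualCoannihilator) :=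
    Nat.one_le_pow _ _ (by omega)
  have := Nat.pow_right_injective hq (show _ = _ from (by omega :
    Fintype.card F ^ (k + 1 + 1) = Fintype.card F ^ (n + 1 - finrank F D.dualCoannihilator)))
  omega

end Main

/-- Let `0 ≤ k < n` with `k < (n-1)/2` (i.e. `2k+1 < n`), and if
`q = 2` suppose `k ≠ (n-2)/2` (i.e. `n ≠ 2k+2`).  For a blocking set `B = B0 ∪ Bn`
of points and hyperplanes with respect to `k`-spaces in `PG(n,q)`, we have
`|B| ≥ θ_(k+1)`, with equality iff `B` consists of all hyperplanes through a fixed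
`(n-k-2)`-space (a subspace of vector dimension `n-k-1`). -/
theorem stmt_3 {F : Type} [Field F] [Fintype F] (k n : ℕ)
    (hkn : 2 * k + 1 < n)
    (h2 : Fintype.card F = 2 → n ≠ 2 * k + 2)
    (B0 Bn : Set (Submodule F (Fin (n + 1) → F)))
    (hB0 : ∀ p ∈ B0, Module.finrank F p = 1)
    (hBn : ∀ H ∈ Bn, Module.finrank F H = n)
    (hblock : ∀ W : Submodule F (Fin (n + 1) → F), Module.finrank F W = k + 1 →
      (∃ p ∈ B0, p ≤ W) ∨ (∃ H ∈ Bn, W ≤ H)) :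
    theta (Fintype.card F) (k + 1) ≤ B0.ncard + Bn.ncard ∧
    (B0.ncard + Bn.ncard = theta (Fintype.card F) (k + 1) ↔
      B0 = ∅ ∧ ∃ W : Submodule F (Fin (n + 1) → F), Module.finrank F W = n - k - 1 ∧
        Bn = {H : Submodule F (Fin (n + 1) → F) | Module.finrank F H = n ∧ W ≤ H}) := by
  have : Finite (Submodule F (Fin (n + 1) → F)) :=
    Finite.of_injective (fun g => (g : Set (Fin (n + 1) → F))) SetLike.coe_injective
  have hq : 1 < Fintype.card F := Fintype.one_lt_card
  have hV : Module.finrank F (Fin (n + 1) → F) = n + 1 := by simp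
  have hmain := bb_main k n hkn hV h2 B0 Bn hB0 hBn hblock
  refine ⟨?_, ?_, ?_⟩
  · by_contra hlt
    have := hmain (by omega)
    omega
  · intro heq
    have h := hmain heq.le
    have h0 : B0.ncard = 0 := by omega
    have hB : B0 = ∅ := (Set.ncard_eq_zero B0.toFinite).mp h0
    refine ⟨hB, ?_⟩
    subst hB
    refine bb_struct k n hkn hV Bn hBn (fun W hW => ?_) (by omega)
    simpa using hblock W hW
  · rintro ⟨rfl, W, hW, rfl⟩
    have hc := bb_count W
    rw [hV, hW, show n + 1 - (n - k - 1) = k + 1 + 1 by omega, ← bb_theta] at hc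
    simp only [Nat.add_right_cancel_iff] at hc
    rw [Set.ncard_empty, zero_add]
    exact Nat.eq_of_mul_eq_mul_right (by omega) hc
end

section
/- Let q be a prime power and let k, n be integers with 0 ≤ k < n and k > (n-1)/2; if q = 2 suppose moreover that k ≠ n/2. Let B = B_0 ∪ B_{n-1} be a blocking set with respect to k-spaces in PG(n,q) consisting of points and hyperplanes. Then |B| ≥ θ_{n-k} = (q^{n-k+1}-1)/(q-1), with equality if and only if B_{n-1} is empty and B_0 consists of all points of a fixed (n-k)-space. -/
open Finset in
/-- Number of vectors in a subspace. -/
lemma card_vec {F V : Type} [Field F] [Fintype F] [AddCommGroup V] [Module F V] [Fintype V]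
    (S : Submodule F V) [DecidablePred (· ∈ S)] :
    (univ.filter (fun v => v ∈ S)).card = Fintype.card F ^ Module.finrank F S := by
  rw [← Module.card_eq_pow_finrank (K := F) (V := S), Fintype.card_subtype]

open Finset Classical in
lemma greedy_step {F V : Type} [Field F] [Fintype F] [AddCommGroup V] [Module F V] [Fintype V]
    (n j : ℕ) (hV : Module.finrank F V = n + 1) (U : Submodule F V)
    (hU : Module.finrank F U = j) (P Hs : Finset (Submodule F V))
    (hP : ∀ p ∈ P, Module.finrank F p = 1) (hPU : ∀ p ∈ P, ¬ p ≤ U)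
    (hH : ∀ H ∈ Hs, Module.finrank F H = n)
    (hc : 0 < (Fintype.card F : ℝ) ^ (n + 1) - (Fintype.card F : ℝ) ^ j
      - P.card * ((Fintype.card F : ℝ) ^ (j + 1) - (Fintype.card F : ℝ) ^ j)) :
    ∃ U' : Submodule F V, U ≤ U' ∧ Module.finrank F U' = j + 1 ∧ (∀ p ∈ P, ¬ p ≤ U') ∧
      ((Hs.filter (fun H => U' ≤ H)).card : ℝ) *
        ((Fintype.card F : ℝ) ^ (n + 1) - (Fintype.card F : ℝ) ^ j
      - P.card * ((Fintype.card F : ℝ) ^ (j + 1) - (Fintype.card F : ℝ) ^ j)) ≤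
      ((Hs.filter (fun H => U ≤ H)).card : ℝ) *
        ((Fintype.card F : ℝ) ^ n - (Fintype.card F : ℝ) ^ j) := by
  set q := Fintype.card F with hq
  have hq1 : 1 ≤ q := Fintype.card_pos
  let T : Submodule F V → Finset V := fun S => univ.filter (fun v => v ∈ S)
  have hT : ∀ S, (T S).card = q ^ Module.finrank F S := fun S => card_vec S
  have hTd : ∀ S, U ≤ S → ((T S \ T U).card : ℝ) = (q : ℝ) ^ Module.finrank F S - (q : ℝ) ^ j := by
    intro S hS
    have hsub : T U ⊆ T S := by
      intro v; simp only [T, mem_filter, mem_univ, true_and]; exact fun h => hS h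
    rw [Finset.card_sdiff_of_subset hsub, Nat.cast_sub (Finset.card_le_card hsub), hT, hT, hU]
    push_cast; rfl
  let G : Finset V := univ.filter (fun v => v ∉ U ∧ ∀ p ∈ P, v ∉ U ⊔ p)
  have hG : (q : ℝ) ^ (n + 1) - (q : ℝ) ^ j - P.card * ((q : ℝ) ^ (j + 1) - (q : ℝ) ^ j)
      ≤ G.card := by
    have hcov : (univ : Finset V) ⊆ G ∪ T U ∪ P.biUnion (fun p => T (U ⊔ p) \ T U) := by
      intro v _
      simp only [G, T, mem_union, mem_filter, mem_univ, true_and, mem_biUnion, mem_sdiff]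
      by_cases h1 : v ∈ U
      · exact Or.inl (Or.inr h1)
      · by_cases h2 : ∀ p ∈ P, v ∉ U ⊔ p
        · exact Or.inl (Or.inl ⟨h1, h2⟩)
        · push Not at h2
          obtain ⟨p, hp, hv⟩ := h2
          exact Or.inr ⟨p, hp, hv, h1⟩
    have h1 := Finset.card_le_card hcov
    have h2 : (univ : Finset V).card = q ^ (n + 1) := by
      rw [Finset.card_univ, Module.card_eq_pow_finrank (K := F), hV]
    have h3 := (h1.trans (card_union_le _ _)).trans
      (Nat.add_le_add (card_union_le _ _) Finset.card_biUnion_le)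
    rw [h2, hT, hU] at h3
    have h4 : (q : ℝ) ^ (n + 1) ≤ G.card + (q : ℝ) ^ j +
        ∑ p ∈ P, ((T (U ⊔ p) \ T U).card : ℝ) := by exact_mod_cast h3
    have h5 : ∑ p ∈ P, ((T (U ⊔ p) \ T U).card : ℝ) ≤
        P.card * ((q : ℝ) ^ (j + 1) - (q : ℝ) ^ j) := by
      rw [← nsmul_eq_mul]
      refine Finset.sum_le_card_nsmul _ _ _ ?_
      intro p hp
      rw [hTd _ le_sup_left]
      have h6 : Module.finrank F ↥(U ⊔ p) ≤ j + 1 := by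
        have := Submodule.finrank_add_le_finrank_add_finrank U p
        rw [hU, hP p hp] at this; exact this
      have h7 : (q : ℝ) ^ Module.finrank F ↥(U ⊔ p) ≤ (q : ℝ) ^ (j + 1) :=
        pow_le_pow_right₀ (by exact_mod_cast hq1) h6
      linarith
    linarith
  have hGpos : (0 : ℝ) < G.card := lt_of_lt_of_le hc hG
  have hGne : G.Nonempty := by
    rw [← Finset.card_pos]; exact_mod_cast hGpos
  let f : V → ℝ := fun v => (((Hs.filter (fun H => U ≤ H)).filter (fun H => v ∈ H)).card : ℝ)
  have hsum : ∑ v ∈ G, f v ≤ ((Hs.filter (fun H => U ≤ H)).card : ℝ) *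
        ((q : ℝ) ^ n - (q : ℝ) ^ j) := by
    have e : ∑ v ∈ G, f v =
        ∑ H ∈ Hs.filter (fun H => U ≤ H), ((G.filter (fun v => v ∈ H)).card : ℝ) := by
      simp only [f]
      have := Finset.sum_card_bipartiteAbove_eq_sum_card_bipartiteBelow
        (s := G) (t := Hs.filter (fun H => U ≤ H)) (fun v H => v ∈ H)
      simp only [Finset.bipartiteAbove, Finset.bipartiteBelow] at this
      exact_mod_cast this
    rw [e, ← nsmul_eq_mul]
    refine Finset.sum_le_card_nsmul _ _ _ ?_
    intro H hHm
    rw [mem_filter] at hHm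
    have := hTd H hHm.2
    rw [hH H hHm.1] at this
    rw [← this]
    have hs : G.filter (fun v => v ∈ H) ⊆ T H \ T U := by
      intro v
      simp only [G, T, mem_filter, mem_univ, true_and, mem_sdiff]
      tauto
    exact_mod_cast Finset.card_le_card hs
  obtain ⟨v, hvG, hv⟩ := Finset.exists_le_of_sum_le (s := G) (f := f)
    (g := fun _ => (∑ v ∈ G, f v) / G.card) hGne (by
      rw [Finset.sum_const, nsmul_eq_mul, mul_div_cancel₀ _ hGpos.ne'])
  rw [le_div_iff₀ hGpos] at hv
  simp only [G, mem_filter, mem_univ, true_and] at hvG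
  refine ⟨U ⊔ Submodule.span F {v}, le_sup_left, ?_, ?_, ?_⟩
  · have hv0 : v ≠ 0 := fun h => hvG.1 (h ▸ U.zero_mem)
    have := Submodule.finrank_sup_add_finrank_inf_eq U (Submodule.span F {v})
    rw [finrank_span_singleton hv0, hU] at this
    have hd : U ⊓ Submodule.span F {v} = ⊥ := by
      rw [eq_bot_iff]
      rintro x ⟨hx1, hx2⟩
      obtain ⟨c, rfl⟩ := Submodule.mem_span_singleton.1 hx2
      by_cases hc0 : c = 0
      · simp [hc0]
      · exact absurd ((Submodule.smul_mem_iff U hc0).1 hx1) hvG.1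
    rw [hd, finrank_bot] at this
    exact this
  · intro p hp hle
    obtain ⟨x, hxp, hxU⟩ := SetLike.not_le_iff_exists.1 (hPU p hp)
    obtain ⟨u, hu, z, hz, huz⟩ := Submodule.mem_sup.1 (hle hxp)
    obtain ⟨c, rfl⟩ := Submodule.mem_span_singleton.1 hz
    have hc0 : c ≠ 0 := by
      rintro rfl
      apply hxU
      rw [← huz]; simpa using hu
    apply hvG.2 p hp
    rw [← Submodule.smul_mem_iff _ hc0]
    have : c • v = x - u := by rw [← huz]; abel
    rw [this]
    exact Submodule.sub_mem _ (Submodule.mem_sup_right hxp) (Submodule.mem_sup_left hu)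
  · have e : (Hs.filter (fun H => U ⊔ Submodule.span F {v} ≤ H)) =
        ((Hs.filter (fun H => U ≤ H)).filter (fun H => v ∈ H)) := by
      ext H
      simp only [mem_filter, sup_le_iff, Submodule.span_singleton_le_iff_mem, and_assoc]
    rw [e]
    refine le_trans ?_ (hv.trans hsum)
    exact mul_le_mul_of_nonneg_left hG (Nat.cast_nonneg _)

/-- Number of points of a subspace. -/
lemma card_points {F V : Type} [Field F] [Fintype F] [AddCommGroup V] [Module F V]
    (W : Submodule F V) :
    Set.ncard {p : Submodule F V | Module.finrank F p = 1 ∧ p ≤ W} =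
      ∑ i ∈ Finset.range (Module.finrank F W), Fintype.card F ^ i := by
  rw [← Nat.card_eq_fintype_card, ← Projectivization.card_of_finrank F W rfl,
    Nat.card_congr (Projectivization.equivSubmodule F W), ← Nat.card_coe_set_eq]
  symm
  refine Nat.card_congr (Equiv.ofBijective
    (fun H => ⟨H.1.map W.subtype, ?_, Submodule.map_subtype_le _ _⟩) ⟨?_, ?_⟩)
  · rw [Submodule.finrank_map_subtype_eq]; exact H.2
  · intro H H' h
    apply Subtype.ext
    exact Submodule.map_injective_of_injective W.injective_subtype (congrArg Subtype.val h)
  · rintro ⟨p, hp1, hp2⟩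
    have e : (p.comap W.subtype).map W.subtype = p := by
      rw [Submodule.map_comap_subtype]; exact inf_eq_right.2 hp2
    refine ⟨⟨p.comap W.subtype, ?_⟩, Subtype.ext e⟩
    rw [← Submodule.finrank_map_subtype_eq, e]; exact hp1

lemma theta_mul (q m : ℕ) (hq : 2 ≤ q) : (theta q m : ℝ) * (q - 1) = (q : ℝ) ^ (m + 1) - 1 := by
  rw [theta, ← Nat.geomSum_eq hq]
  push_cast
  exact geom_sum_mul _ _

lemma arith_step (q a Q M β h h' b1 X : ℝ) (hq : 2 ≤ q) (ha : 1 ≤ a) (haQ : a ≤ Q)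
    (hβ : 0 ≤ β) (hM : β < M) (hX : X - Q = M * Q) (hh : 0 ≤ h) (hh' : 0 ≤ h')
    (h1 : h' * (X - a - β * a) ≤ h * (X / q - a))
    (ih : h * a * ((q - 1) * (M * Q) - β * (a - 1)) ≤ b1 * ((q - 1) * (M * Q))) :
    h' * (a * q) * ((q - 1) * (M * Q) - β * (a * q - 1)) ≤ b1 * ((q - 1) * (M * Q)) := by
  have hD0 : 0 < M * Q := mul_pos (by linarith) (by linarith)
  set D0 := M * Q with hD0def
  have s1 : h' * q * ((X - a) - β * a) ≤ h * (X - a) := by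
    have e1 : h' * q * ((X - a) - β * a) ≤ q * (h * (X / q - a)) := by
      calc h' * q * ((X - a) - β * a) = q * (h' * (X - a - β * a)) := by ring
        _ ≤ _ := mul_le_mul_of_nonneg_left h1 (by linarith)
    have e2 : q * (h * (X / q - a)) = h * (X - q * a) := by field_simp
    rw [e2] at e1
    refine e1.trans (mul_le_mul_of_nonneg_left ?_ hh)
    nlinarith
  have hD : D0 ≤ X - a := by linarith
  have s2 : h' * q * (D0 - β * a) ≤ h * D0 := by
    have hp : 0 ≤ h' * q * (β * a) := by positivity
    rcases le_total (h' * q) h with hc | hc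
    · nlinarith
    · nlinarith [mul_le_mul_of_nonneg_left hD (sub_nonneg.2 hc)]
  have hR : 0 ≤ (q - 1) * D0 - β * (a - 1) := by
    have : β * (a - 1) ≤ M * Q := mul_le_mul hM.le (by linarith) (by linarith) (by linarith)
    nlinarith
  have s3 : ((q - 1) * D0 - β * (a * q - 1)) * D0 ≤
      ((q - 1) * D0 - β * (a - 1)) * (D0 - β * a) := by
    have : 0 ≤ β * β * (a * (a - 1)) :=
      mul_nonneg (mul_nonneg hβ hβ) (mul_nonneg (by linarith) (by linarith))
    nlinarith
  have hc : 0 ≤ h' * (a * q) := by positivity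
  refine le_of_mul_le_mul_right ?_ hD0
  calc h' * (a * q) * ((q - 1) * D0 - β * (a * q - 1)) * D0
      = h' * (a * q) * (((q - 1) * D0 - β * (a * q - 1)) * D0) := by ring
    _ ≤ h' * (a * q) * (((q - 1) * D0 - β * (a - 1)) * (D0 - β * a)) :=
        mul_le_mul_of_nonneg_left s3 hc
    _ = (a * ((q - 1) * D0 - β * (a - 1))) * (h' * q * (D0 - β * a)) := by ring
    _ ≤ (a * ((q - 1) * D0 - β * (a - 1))) * (h * D0) :=
        mul_le_mul_of_nonneg_left s2 (mul_nonneg (by linarith) hR)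
    _ = (h * a * ((q - 1) * D0 - β * (a - 1))) * D0 := by ring
    _ ≤ _ := mul_le_mul_of_nonneg_right ih hD0.le

/-- Positivity of the count of good vectors. -/
lemma pos_count (q : ℕ) (hq : 2 ≤ q) (k m j : ℕ) (hj : j ≤ k) (b : ℝ)
    (hb : b * (q - 1) < (q : ℝ) ^ (m + 1) - 1 ∨ (j < k ∧ b * (q - 1) ≤ (q : ℝ) ^ (m + 1) - 1)) :
    0 < (q : ℝ) ^ (k + m + 1) - (q : ℝ) ^ j - b * ((q : ℝ) ^ (j + 1) - (q : ℝ) ^ j) := by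
  have hq1 : (1 : ℝ) < q := by exact_mod_cast hq
  have e : (q : ℝ) ^ (k + m + 1) - (q : ℝ) ^ j - b * ((q : ℝ) ^ (j + 1) - (q : ℝ) ^ j) =
      (q : ℝ) ^ j * ((q : ℝ) ^ (k - j + (m + 1)) - 1 - b * (q - 1)) := by
    have : k + m + 1 = j + (k - j + (m + 1)) := by omega
    rw [this, pow_add, pow_succ _ j]; ring
  rw [e]
  refine mul_pos (by positivity) ?_
  rcases hb with hb | ⟨hjk, hb⟩
  · have : (q : ℝ) ^ (m + 1) ≤ (q : ℝ) ^ (k - j + (m + 1)) :=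
      pow_le_pow_right₀ hq1.le (by omega)
    linarith
  · have : (q : ℝ) ^ (m + 1) < (q : ℝ) ^ (k - j + (m + 1)) :=
      pow_lt_pow_right₀ hq1 (by omega)
    linarith

open Finset Classical in
lemma greedy_chain {F V : Type} [Field F] [Fintype F] [AddCommGroup V] [Module F V] [Fintype V]
    (k m : ℕ) (hV : Module.finrank F V = k + m + 1)
    (P Hs : Finset (Submodule F V))
    (hP : ∀ p ∈ P, Module.finrank F p = 1)
    (hH : ∀ H ∈ Hs, Module.finrank F H = k + m)
    (hb : (P.card : ℝ) * ((Fintype.card F : ℝ) - 1) < (Fintype.card F : ℝ) ^ (m + 1) - 1)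
    (j : ℕ) (hj : j ≤ k) :
    ∃ U : Submodule F V, Module.finrank F U = j ∧ (∀ p ∈ P, ¬ p ≤ U) ∧
      ((Hs.filter (fun H => U ≤ H)).card : ℝ) * (Fintype.card F : ℝ) ^ j *
        (((Fintype.card F : ℝ) - 1) *
          (((Fintype.card F : ℝ) ^ (m + 1) - 1) * (Fintype.card F : ℝ) ^ k)
          - (P.card : ℝ) * ((Fintype.card F : ℝ) - 1) * ((Fintype.card F : ℝ) ^ j - 1))
      ≤ (Hs.card : ℝ) * (((Fintype.card F : ℝ) - 1) *
          (((Fintype.card F : ℝ) ^ (m + 1) - 1) * (Fintype.card F : ℝ) ^ k)) := by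
  have hq : 2 ≤ Fintype.card F := Fintype.one_lt_card
  have hqr : (2 : ℝ) ≤ Fintype.card F := by exact_mod_cast hq
  induction j with
  | zero =>
    refine ⟨⊥, finrank_bot F V, ?_, ?_⟩
    · intro p hp hle
      have h1 := hP p hp
      rw [le_bot_iff.1 hle, finrank_bot] at h1
      exact absurd h1 (by norm_num)
    · simp
  | succ j ih =>
    obtain ⟨U, hU, hPU, hI⟩ := ih (by omega)
    obtain ⟨U', hUU', hU', hPU', hI'⟩ := greedy_step (k + m) j hV U hU P Hs hP hPU hH
      (pos_count _ hq k m j (by omega) _ (Or.inl hb))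
    refine ⟨U', hU', hPU', ?_⟩
    rw [pow_succ _ j]
    refine arith_step _ _ _ _ _ _ _ _ ((Fintype.card F : ℝ) ^ (k + m + 1)) hqr
      (one_le_pow₀ (by linarith)) (pow_le_pow_right₀ (by linarith) (by omega))
      (mul_nonneg (Nat.cast_nonneg _) (by linarith)) hb ?_ (Nat.cast_nonneg _) (Nat.cast_nonneg _)
      ?_ hI
    · rw [add_assoc, pow_add]; ring
    · have e1 : (Fintype.card F : ℝ) ^ (k + m + 1) / Fintype.card F =
        (Fintype.card F : ℝ) ^ (k + m) := by
        rw [pow_succ]; field_simp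
      rw [e1]
      convert hI' using 2
      ring

open Finset Classical in
lemma exists_unblocked {F V : Type} [Field F] [Fintype F] [AddCommGroup V] [Module F V] [Fintype V]
    (k m : ℕ) (hV : Module.finrank F V = k + m + 1) (hmk : m ≤ k)
    (h2 : Fintype.card F = 2 → m < k)
    (P Hs : Finset (Submodule F V))
    (hP : ∀ p ∈ P, Module.finrank F p = 1)
    (hH : ∀ H ∈ Hs, Module.finrank F H = k + m)
    (hb : (P.card : ℝ) * ((Fintype.card F : ℝ) - 1) < (Fintype.card F : ℝ) ^ (m + 1) - 1)
    (hb1 : (P.card : ℝ) * ((Fintype.card F : ℝ) - 1) + (Hs.card : ℝ) * ((Fintype.card F : ℝ) - 1)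
      ≤ (Fintype.card F : ℝ) ^ (m + 1) - 1) :
    ∃ U : Submodule F V, Module.finrank F U = k + 1 ∧ (∀ p ∈ P, ¬ p ≤ U) ∧
      (∀ H ∈ Hs, ¬ U ≤ H) := by
  have hq : 2 ≤ Fintype.card F := Fintype.one_lt_card
  obtain ⟨U, hU, hPU, hI⟩ := greedy_chain k m hV P Hs hP hH hb k le_rfl
  obtain ⟨U', hUU', hU', hPU', hI'⟩ := greedy_step (k + m) k hV U hU P Hs hP hPU hH
      (pos_count _ hq k m k (by omega) _ (Or.inl hb))
  refine ⟨U', hU', hPU', ?_⟩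
  set q := Fintype.card F with hqdef
  have hqr : (2 : ℝ) ≤ q := by exact_mod_cast hq
  set β := (P.card : ℝ) * ((q : ℝ) - 1) with hβdef
  have hβ : 0 ≤ β := mul_nonneg (Nat.cast_nonneg _) (by linarith)
  set hk := (Hs.filter (fun H => U ≤ H)).card with hkdef
  set hk' := (Hs.filter (fun H => U' ≤ H)).card with hk'def
  have hQ : (1 : ℝ) ≤ (q : ℝ) ^ k := one_le_pow₀ (by linarith)
  have I1 : (hk' : ℝ) * ((q : ℝ) ^ (m + 1) - 1 - β) ≤ hk * ((q : ℝ) ^ m - 1) := by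
    refine le_of_mul_le_mul_right ?_ (lt_of_lt_of_le one_pos hQ)
    refine le_of_eq_of_le ?_ (hI'.trans_eq ?_)
    · rw [hβdef, add_assoc k m 1, pow_add _ k (m + 1), pow_succ _ k]; ring
    · rw [pow_add]; ring
  set M := (q : ℝ) ^ (m + 1) - 1 with hMdef
  have hMpos : 0 < M - β := by linarith
  have key : (hk : ℝ) * ((q : ℝ) ^ m - 1) < M - β := by
    rcases Nat.eq_zero_or_pos hk with h0 | hpos
    · rw [h0]; simpa using hMpos
    have hpos' : (0 : ℝ) < hk := by exact_mod_cast hpos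
    have hM0 : 0 < M := by linarith
    -- cancel one factor of `q ^ k`
    have hI2 : (hk : ℝ) * ((q - 1) * (M * (q : ℝ) ^ k) - β * ((q : ℝ) ^ k - 1)) ≤
        Hs.card * ((q - 1) * M) := by
      refine le_of_mul_le_mul_right ?_ (lt_of_lt_of_le one_pos hQ)
      refine le_of_eq_of_le ?_ (hI.trans_eq ?_) <;> ring
    have hI3 : (hk : ℝ) * ((q - 1) * (M * (q : ℝ) ^ k) - β * ((q : ℝ) ^ k - 1)) ≤
        (M - β) * M := by
      refine hI2.trans ?_
      rw [← mul_assoc]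
      exact mul_le_mul_of_nonneg_right (by linarith) hM0.le
    by_cases hq2 : q = 2
    · exfalso
      have hmk' := h2 hq2
      have hq2r : (q : ℝ) = 2 := by exact_mod_cast hq2
      have hlt : M < (q : ℝ) ^ k := by
        have : (q : ℝ) ^ (m + 1) ≤ (q : ℝ) ^ k := pow_le_pow_right₀ (by linarith) (by omega)
        linarith
      have h4 : (hk : ℝ) * ((M - β) * (q : ℝ) ^ k) ≤ (M - β) * M := by
        refine le_trans (mul_le_mul_of_nonneg_left ?_ hpos'.le) hI3
        have : (q : ℝ) - 1 = 1 := by linarith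
        rw [this]; nlinarith
      have h5 : (1 : ℝ) ≤ hk := by exact_mod_cast hpos
      have h6 : (M - β) * M < (M - β) * (q : ℝ) ^ k := mul_lt_mul_of_pos_left hlt hMpos
      have h7 : 0 ≤ (M - β) * (q : ℝ) ^ k := by positivity
      nlinarith
    · have hq3 : (3 : ℝ) ≤ q := by
        have : 3 ≤ q := by omega
        exact_mod_cast this
      have h4 : (hk : ℝ) * (M * (q : ℝ) ^ k) ≤ (M - β) * M := by
        refine le_trans (mul_le_mul_of_nonneg_left ?_ hpos'.le) hI3
        have a1 : β * ((q : ℝ) ^ k - 1) ≤ M * (q : ℝ) ^ k :=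
          mul_le_mul hb.le (by linarith) (by linarith) hM0.le
        have a2 : 0 ≤ M * (q : ℝ) ^ k := by positivity
        nlinarith
      have h5 : (hk : ℝ) * (q : ℝ) ^ k ≤ M - β := by
        refine le_of_mul_le_mul_right ?_ hM0
        linarith
      have h6 : (q : ℝ) ^ m ≤ (q : ℝ) ^ k := pow_le_pow_right₀ (by linarith) hmk
      nlinarith
  have hz : hk' = 0 := by
    by_contra hne
    have : (1 : ℝ) ≤ hk' := by exact_mod_cast Nat.one_le_iff_ne_zero.2 hne
    nlinarith
  rw [hk'def, Finset.card_eq_zero, Finset.filter_eq_empty_iff] at hz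
  exact fun H hHm => hz hHm

open Finset Classical in
/-- Extending a point off `P` to a `k`-dimensional subspace missing `P`. -/
lemma extend_point {F V : Type} [Field F] [Fintype F] [AddCommGroup V] [Module F V] [Fintype V]
    (k m : ℕ) (hV : Module.finrank F V = k + m + 1)
    (P : Finset (Submodule F V))
    (hP : ∀ p ∈ P, Module.finrank F p = 1)
    (hb : (P.card : ℝ) * ((Fintype.card F : ℝ) - 1) ≤ (Fintype.card F : ℝ) ^ (m + 1) - 1)
    (R : Submodule F V) (hR : Module.finrank F R = 1) (hPR : ∀ p ∈ P, ¬ p ≤ R)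
    (j : ℕ) (hj : j + 1 ≤ k) :
    ∃ U : Submodule F V, R ≤ U ∧ Module.finrank F U = j + 1 ∧ (∀ p ∈ P, ¬ p ≤ U) := by
  induction j with
  | zero => exact ⟨R, le_rfl, hR, hPR⟩
  | succ j ih =>
    obtain ⟨U, hRU, hU, hPU⟩ := ih (by omega)
    obtain ⟨U', hUU', hU', hPU', -⟩ := greedy_step (k + m) (j + 1) hV U hU P ∅ hP hPU (by simp)
      (pos_count _ Fintype.one_lt_card k m (j + 1) (by omega) _ (Or.inr ⟨by omega, hb⟩))
    exact ⟨U', hRU.trans hUU', hU', hPU'⟩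

open Finset Classical in
/-- The equality case: the point set is closed under lines. -/
lemma line_closed {F V : Type} [Field F] [Fintype F] [AddCommGroup V] [Module F V] [Fintype V]
    (k m : ℕ) (hV : Module.finrank F V = k + m + 1) (hk : 1 ≤ k)
    (P : Finset (Submodule F V))
    (hP : ∀ p ∈ P, Module.finrank F p = 1)
    (hb : (P.card : ℝ) * ((Fintype.card F : ℝ) - 1) ≤ (Fintype.card F : ℝ) ^ (m + 1) - 1)
    (hblock : ∀ W : Submodule F V, Module.finrank F W = k + 1 → ∃ p ∈ P, p ≤ W)
    (x y : V) (hx : Submodule.span F {x} ∈ P) (hy : Submodule.span F {y} ∈ P)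
    (hxy : x + y ≠ 0) : Submodule.span F {x + y} ∈ P := by
  by_contra hR
  have hRP : ∀ p ∈ P, ¬ p ≤ Submodule.span F {x + y} := by
    intro p hp hle
    have := Submodule.eq_of_le_of_finrank_eq hle (by rw [hP p hp, finrank_span_singleton hxy])
    exact hR (this ▸ hp)
  obtain ⟨U, hRU, hU, hPU⟩ := extend_point k m hV P hP hb _ (finrank_span_singleton hxy) hRP
    (k - 1) (by omega)
  have hxyU : x + y ∈ U := hRU (Submodule.mem_span_singleton_self _)
  rw [Nat.sub_add_cancel hk] at hU
  have hne : Submodule.span F {x} ≠ Submodule.span F {y} := by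
    intro h
    apply hRP _ hx
    have hxm : x + y ∈ Submodule.span F {x} :=
      Submodule.add_mem _ (Submodule.mem_span_singleton_self _)
        (h ▸ Submodule.mem_span_singleton_self y)
    have := Submodule.eq_of_le_of_finrank_eq
      ((Submodule.span_singleton_le_iff_mem _ _).2 hxm)
      (by rw [hP _ hx, finrank_span_singleton hxy])
    exact this.ge
  have hq1 : (1 : ℝ) < Fintype.card F := by exact_mod_cast (Fintype.one_lt_card (α := F))
  have hlt : ((P.erase (Submodule.span F {y})).card : ℝ) < P.card := by
    exact_mod_cast Finset.card_erase_lt_of_mem hy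
  obtain ⟨U', hUU', hU', hPU', -⟩ := greedy_step (k + m) k hV U hU
    (P.erase (Submodule.span F {y})) ∅ (fun p hp => hP p (Finset.mem_of_mem_erase hp))
    (fun p hp => hPU p (Finset.mem_of_mem_erase hp)) (by simp)
    (pos_count _ Fintype.one_lt_card k m k le_rfl _ (Or.inl (by nlinarith)))
  obtain ⟨p, hp, hpU⟩ := hblock U' hU'
  by_cases hpy : p = Submodule.span F {y}
  · subst hpy
    rw [Submodule.span_singleton_le_iff_mem] at hpU
    refine hPU' _ (Finset.mem_erase.2 ⟨hne, hx⟩) ?_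
    rw [Submodule.span_singleton_le_iff_mem]
    have := U'.sub_mem (hUU' hxyU) hpU
    simpa using this
  · exact hPU' p (Finset.mem_erase.2 ⟨hpy, hp⟩) hpU

lemma span_of_mem_point {F V : Type} [Field F] [AddCommGroup V] [Module F V]
    {p : Submodule F V} (hp : Module.finrank F p = 1) {x : V} (hx : x ∈ p) (hx0 : x ≠ 0) :
    p = Submodule.span F {x} := by
  have : FiniteDimensional F p := Module.finite_of_finrank_eq_succ hp
  exact (Submodule.eq_of_le_of_finrank_eq ((Submodule.span_singleton_le_iff_mem _ _).2 hx)
    (by rw [hp, finrank_span_singleton hx0])).symm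

open Finset Classical in
lemma points_subspace {F V : Type} [Field F] [Fintype F] [AddCommGroup V] [Module F V] [Fintype V]
    (k m : ℕ) (hV : Module.finrank F V = k + m + 1) (hk : 1 ≤ k)
    (P : Finset (Submodule F V))
    (hP : ∀ p ∈ P, Module.finrank F p = 1)
    (hb : (P.card : ℝ) * ((Fintype.card F : ℝ) - 1) ≤ (Fintype.card F : ℝ) ^ (m + 1) - 1)
    (hblock : ∀ W : Submodule F V, Module.finrank F W = k + 1 → ∃ p ∈ P, p ≤ W) :
    ∃ S : Submodule F V, ∀ p : Submodule F V, p ∈ P ↔ Module.finrank F p = 1 ∧ p ≤ S := by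
  let S : Submodule F V :=
    { carrier := {x | x ≠ 0 → Submodule.span F {x} ∈ P}
      zero_mem' := fun h => absurd rfl h
      add_mem' := by
        intro x y hx hy hxy
        by_cases hx0 : x = 0
        · subst hx0; rw [zero_add] at hxy ⊢; exact hy hxy
        by_cases hy0 : y = 0
        · subst hy0; rw [add_zero] at hxy ⊢; exact hx hxy
        exact line_closed k m hV hk P hP hb hblock x y (hx hx0) (hy hy0) hxy
      smul_mem' := by
        intro c x hx hcx
        have hc : c ≠ 0 := fun h => hcx (by simp [h])
        have hx0 : x ≠ 0 := fun h => hcx (by simp [h])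
        have := Submodule.span_singleton_smul_eq (IsUnit.mk0 c hc) x
        rw [this]; exact hx hx0 }
  refine ⟨S, fun p => ⟨fun hp => ⟨hP p hp, ?_⟩, ?_⟩⟩
  · intro x hx hx0
    rw [← span_of_mem_point (hP p hp) hx hx0]; exact hp
  · rintro ⟨hp1, hpS⟩
    have hne : p ≠ ⊥ := by
      rintro rfl; rw [finrank_bot] at hp1; exact absurd hp1 (by norm_num)
    obtain ⟨x, hx, hx0⟩ := Submodule.exists_mem_ne_zero_of_ne_bot hne
    rw [span_of_mem_point hp1 hx hx0]
    exact hpS hx hx0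

/-- Let `0 ≤ k < n` with `k > (n-1)/2` (i.e. `n ≤ 2k`), and if
`q = 2` suppose `k ≠ n/2` (i.e. `n ≠ 2k`).  For a blocking set `B = B0 ∪ Bn` of
points and hyperplanes with respect to `k`-spaces in `PG(n,q)`, we have
`|B| ≥ θ_(n-k)`, with equality iff `B` consists of all points of a fixed
`(n-k)`-space (a subspace of vector dimension `n-k+1`). -/
theorem stmt_4 {F : Type} [Field F] [Fintype F] (k n : ℕ)
    (hk : k < n) (hkn : n ≤ 2 * k)
    (h2 : Fintype.card F = 2 → n ≠ 2 * k)
    (B0 Bn : Set (Submodule F (Fin (n + 1) → F)))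
    (hB0 : ∀ p ∈ B0, Module.finrank F p = 1)
    (hBn : ∀ H ∈ Bn, Module.finrank F H = n)
    (hblock : ∀ W : Submodule F (Fin (n + 1) → F), Module.finrank F W = k + 1 →
      (∃ p ∈ B0, p ≤ W) ∨ (∃ H ∈ Bn, W ≤ H)) :
    theta (Fintype.card F) (n - k) ≤ B0.ncard + Bn.ncard ∧
    (B0.ncard + Bn.ncard = theta (Fintype.card F) (n - k) ↔
      Bn = ∅ ∧ ∃ W : Submodule F (Fin (n + 1) → F), Module.finrank F W = n - k + 1 ∧
        B0 = {p : Submodule F (Fin (n + 1) → F) | Module.finrank F p = 1 ∧ p ≤ W}) := by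
  classical
  obtain ⟨m, rfl⟩ : ∃ m, n = k + m := ⟨n - k, by omega⟩
  have hm : k + m - k = m := by omega
  rw [hm]
  have hq : 2 ≤ Fintype.card F := Fintype.one_lt_card
  have hqr : (1 : ℝ) < Fintype.card F := by exact_mod_cast hq
  have hV : Module.finrank F (Fin (k + m + 1) → F) = k + m + 1 := by simp
  have hth := theta_mul (Fintype.card F) m hq
  have hB0f : B0.Finite := Set.toFinite _
  have hBnf : Bn.Finite := Set.toFinite _
  have hc0 : hB0f.toFinset.card = B0.ncard := (Set.ncard_eq_toFinset_card B0 hB0f).symm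
  have hcn : hBnf.toFinset.card = Bn.ncard := (Set.ncard_eq_toFinset_card Bn hBnf).symm
  -- the main point: a small blocking set has `θ_m` points at least
  have main : B0.ncard + Bn.ncard ≤ theta (Fintype.card F) m →
      theta (Fintype.card F) m ≤ B0.ncard := by
    intro hle
    by_contra hlt
    push Not at hlt
    have r1 : (B0.ncard : ℝ) < theta (Fintype.card F) m := by exact_mod_cast hlt
    have r2 : (B0.ncard : ℝ) + Bn.ncard ≤ theta (Fintype.card F) m := by exact_mod_cast hle
    obtain ⟨U, hU, hPU, hHU⟩ := exists_unblocked k m hV (by omega)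
      (fun h => by have := h2 h; omega) hB0f.toFinset hBnf.toFinset
      (fun p hp => hB0 p (by simpa using hp)) (fun p hp => hBn p (by simpa using hp))
      (by rw [hc0, ← hth]; nlinarith) (by rw [hc0, hcn, ← hth]; nlinarith)
    rcases hblock U hU with ⟨p, hp, hpU⟩ | ⟨H, hH, hUH⟩
    · exact hPU p (by simpa using hp) hpU
    · exact hHU H (by simpa using hH) hUH
  refine ⟨?_, ?_, ?_⟩
  · by_contra hlt
    push Not at hlt
    have := main hlt.le
    omega
  · intro heq
    have h1 := main heq.le
    have hn0 : Bn.ncard = 0 := by omega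
    have h00 : B0.ncard = theta (Fintype.card F) m := by omega
    have hBe : Bn = ∅ := (Set.ncard_eq_zero hBnf).1 hn0
    refine ⟨hBe, ?_⟩
    obtain ⟨S, hS⟩ := points_subspace k m hV (by omega) hB0f.toFinset
      (fun p hp => hB0 p (by simpa using hp)) (by rw [hc0, h00, hth])
      (by
        intro W hW
        rcases hblock W hW with ⟨p, hp, hpU⟩ | ⟨H, hH, hUH⟩
        · exact ⟨p, by simpa using hp, hpU⟩
        · rw [hBe] at hH; exact absurd hH (by simp))
    have hSe : B0 = {p : Submodule F (Fin (k + m + 1) → F) | Module.finrank F p = 1 ∧ p ≤ S} := by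
      ext p
      have := hS p
      simpa using this
    refine ⟨S, ?_, hSe⟩
    have hc := card_points S
    rw [← hSe, h00, theta, ← Nat.geomSum_eq hq] at hc
    have hmono : StrictMono (fun d => ∑ i ∈ Finset.range d, Fintype.card F ^ i) := by
      refine strictMono_nat_of_lt_succ fun d => ?_
      simp only [Finset.sum_range_succ]
      have : 0 < Fintype.card F ^ d := by positivity
      omega
    exact (hmono.injective hc).symm
  · rintro ⟨rfl, W, hW, rfl⟩
    rw [card_points, hW, theta, ← Nat.geomSum_eq hq]
    simp
end

section
/- Let q be a prime power, k ≥ 1, and n = 2k+1. Let B = B_0 ∪ B_{n-1} be a blocking set with respect to k-spaces in PG(2k+1,q) consisting of points and hyperplanes. Then |B| ≥ (q+1)·q^k, with equality if and only if there exist a (k+1)-space Σ, a (k-1)-space σ ⊂ Σ, and nonempty sets K_1, K_2 partitioning the set of all k-spaces κ with σ ⊂ κ ⊂ Σ, such that B_0 is exactly the set of points lying in some κ ∈ K_1 but not in σ, and B_{n-1} is exactly the set of hyperplanes containing some κ ∈ K_2 but not containing Σ. -/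
open Module

section BlockingHelpers

variable {F V : Type} [Field F] [Fintype F] [AddCommGroup V] [Module F V] [Finite V]

/-- adding a vector outside raises the dimension by one -/
lemma bs_finrank_sup_span (U : Submodule F V) {v : V} (hv : v ∉ U) :
    finrank F (U ⊔ Submodule.span F {v} : Submodule F V) = finrank F U + 1 := by
  have hv0 : v ≠ 0 := fun h => hv (h ▸ U.zero_mem)
  have h := Submodule.finrank_sup_add_finrank_inf_eq U (Submodule.span F {v})
  have hinf : U ⊓ Submodule.span F {v} = ⊥ := by
    rw [← disjoint_iff, Submodule.disjoint_span_singleton]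
    intro h
    exact absurd h hv
  rw [hinf, finrank_bot, finrank_span_singleton hv0] at h
  simpa using h

lemma bs_exists_le_finrank (U : Submodule F V) (n : ℕ) (h : n ≤ finrank F U) :
    ∃ S : Submodule F V, S ≤ U ∧ finrank F S = n := by
  induction n with
  | zero => exact ⟨⊥, bot_le, finrank_bot F V⟩
  | succ n ih =>
    obtain ⟨S, hS, hn⟩ := ih (by omega)
    have : ¬ U ≤ S := by
      intro hle
      have := Submodule.finrank_mono hle
      omega
    obtain ⟨v, hvU, hvS⟩ := SetLike.not_le_iff_exists.1 this
    refine ⟨S ⊔ Submodule.span F {v}, sup_le hS ?_, ?_⟩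
    · simpa [Submodule.span_singleton_le_iff_mem] using hvU
    · rw [bs_finrank_sup_span S hvS, hn]

lemma bs_ncard_coe (C : Submodule F V) : (C : Set V).ncard = Fintype.card F ^ finrank F C := by
  rw [← Nat.card_coe_set_eq]
  have := Module.natCard_eq_pow_finrank (K := F) (V := C)
  rw [Nat.card_eq_fintype_card (α := F)] at this
  exact this

/-- the number of `1`-steps above `U` inside `M` which avoid the hyperplane `K` of `M` -/
lemma bs_cnt1 (U K M : Submodule F V) (d : ℕ) (hUK : U ≤ K) (hKM : K ≤ M)
    (hM : finrank F M = finrank F K + 1) (hK : finrank F K = finrank F U + d) :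
    {G : Submodule F V | U ≤ G ∧ G ≤ M ∧ finrank F G = finrank F U + 1 ∧ ¬ G ≤ K}.ncard
      = Fintype.card F ^ d := by
  obtain ⟨C0, hC0⟩ := Submodule.exists_isCompl U
  set C := C0 ⊓ K with hC
  have hsup : U ⊔ C = K := by
    rw [hC, ← sup_inf_assoc_of_le C0 hUK, hC0.sup_eq_top, top_inf_eq]
  have hinf : U ⊓ C = ⊥ := by
    rw [hC, ← inf_assoc, hC0.inf_eq_bot, bot_inf_eq]
  have hCd : finrank F C = d := by
    have h := Submodule.finrank_sup_add_finrank_inf_eq U C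
    rw [hsup, hinf, finrank_bot] at h
    omega
  have hnot : ¬ M ≤ K := by
    intro hle
    have := Submodule.finrank_mono hle
    omega
  obtain ⟨v0, hvM, hvK⟩ := SetLike.not_le_iff_exists.1 hnot
  have hMeq : K ⊔ Submodule.span F {v0} = M := by
    apply Submodule.eq_of_le_of_finrank_le
    · exact sup_le hKM (by simpa [Submodule.span_singleton_le_iff_mem] using hvM)
    · rw [bs_finrank_sup_span K hvK, hM]
  have hCK : C ≤ K := inf_le_right
  have hnotK : ∀ c ∈ C, v0 + c ∉ K := by
    intro c hc h
    exact hvK (by simpa using K.sub_mem h (hCK hc))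
  have himg : {G : Submodule F V | U ≤ G ∧ G ≤ M ∧ finrank F G = finrank F U + 1 ∧ ¬ G ≤ K}
      = (fun c => U ⊔ Submodule.span F {v0 + c}) '' (C : Set V) := by
    ext G
    constructor
    · rintro ⟨hUG, hGM, hGd, hGK⟩
      obtain ⟨g, hgG, hgK⟩ := SetLike.not_le_iff_exists.1 hGK
      have hg : g ∈ K ⊔ Submodule.span F {v0} := hMeq ▸ hGM hgG
      obtain ⟨κ, hκ, w, hw, rfl⟩ := Submodule.mem_sup.1 hg
      obtain ⟨t, rfl⟩ := Submodule.mem_span_singleton.1 hw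
      have ht : t ≠ 0 := by
        rintro rfl
        apply hgK
        simpa using hκ
      have hκ2 : t⁻¹ • κ ∈ U ⊔ C := hsup ▸ K.smul_mem _ hκ
      obtain ⟨u, hu, c, hc, huc⟩ := Submodule.mem_sup.1 hκ2
      have hmem : v0 + c ∈ G := by
        have h1 := G.sub_mem (G.smul_mem t⁻¹ hgG) (hUG hu)
        have h2 : t⁻¹ • (κ + t • v0) - u = v0 + c := by
          rw [smul_add, smul_smul, inv_mul_cancel₀ ht, one_smul, ← huc]
          abel
        rwa [h2] at h1
      refine ⟨c, hc, ?_⟩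
      apply Submodule.eq_of_le_of_finrank_le
      · exact sup_le hUG (by simpa [Submodule.span_singleton_le_iff_mem] using hmem)
      · rw [bs_finrank_sup_span U (fun h => hnotK c hc (hUK h)), hGd]
    · rintro ⟨c, hc, rfl⟩
      refine ⟨le_sup_left, sup_le (hUK.trans hKM) ?_, bs_finrank_sup_span U
        (fun h => hnotK c hc (hUK h)), ?_⟩
      · rw [Submodule.span_singleton_le_iff_mem]
        exact M.add_mem hvM (hKM (hCK hc))
      · intro h
        exact hnotK c hc (h (Submodule.mem_sup_right (Submodule.mem_span_singleton_self _)))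
  rw [himg, Set.InjOn.ncard_image, bs_ncard_coe, hCd]
  intro c hc c' hc' heq
  have heq' : U ⊔ Submodule.span F {v0 + c} = U ⊔ Submodule.span F {v0 + c'} := heq
  have hm : v0 + c ∈ U ⊔ Submodule.span F {v0 + c'} := by
    rw [← heq']
    exact Submodule.mem_sup_right (Submodule.mem_span_singleton_self _)
  obtain ⟨u, hu, w, hw, hsum⟩ := Submodule.mem_sup.1 hm
  obtain ⟨t, rfl⟩ := Submodule.mem_span_singleton.1 hw
  have ht : t = 1 := by
    by_contra hne
    have h1 : (1 - t) • v0 ∈ K := by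
      have : (1 - t) • v0 = u + t • c' - c := by
        rw [sub_smul, one_smul, sub_eq_sub_iff_add_eq_add, hsum.symm, smul_add]
        abel
      rw [this]
      exact K.sub_mem (K.add_mem (hUK hu) (K.smul_mem _ (hCK hc'))) (hCK hc)
    exact hvK ((K.smul_mem_iff (sub_ne_zero.2 (Ne.symm hne))).1 h1)
  subst ht
  have h2 : c - c' = u := by
    rw [one_smul] at hsum
    have : u = (v0 + c) - (v0 + c') := by rw [← hsum]; abel
    rw [this]; abel
  have h3 : c - c' ∈ U ⊓ C := ⟨h2 ▸ hu, C.sub_mem hc hc'⟩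
  rw [hinf, Submodule.mem_bot] at h3
  exact sub_eq_zero.1 h3

/-- dual version of `bs_cnt1`: hyperplanes `H` of `M` through `X` not containing `S` -/
lemma bs_cnt2 (X S M : Submodule F V) (d : ℕ) (hXS : X ≤ S) (hSM : S ≤ M)
    (hS : finrank F S = finrank F X + 1) (hM : finrank F M = finrank F S + d) :
    {H : Submodule F V | X ≤ H ∧ H ≤ M ∧ finrank F H + 1 = finrank F M ∧ ¬ S ≤ H}.ncard
      = Fintype.card F ^ d := by
  have : Finite (Dual F V) := Module.finite_of_finite F
  have e := fun W : Submodule F V => Subspace.finrank_add_finrank_dualAnnihilator_eq W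
  have le_iff : ∀ A B : Submodule F V, A.dualAnnihilator ≤ B.dualAnnihilator ↔ B ≤ A :=
    fun A B => Subspace.dualAnnihilator_le_dualAnnihilator_iff
  have key := bs_cnt1 (F := F) M.dualAnnihilator S.dualAnnihilator X.dualAnnihilator d
    ((le_iff _ _).2 hSM) ((le_iff _ _).2 hXS)
    (by have := e S; have := e X; omega) (by have := e S; have := e M; omega)
  rw [← key]
  have himg : {G : Submodule F (Dual F V) | M.dualAnnihilator ≤ G ∧ G ≤ X.dualAnnihilator ∧
      finrank F G = finrank F M.dualAnnihilator + 1 ∧ ¬ G ≤ S.dualAnnihilator}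
      = (fun H : Submodule F V => H.dualAnnihilator) ''
        {H : Submodule F V | X ≤ H ∧ H ≤ M ∧ finrank F H + 1 = finrank F M ∧ ¬ S ≤ H} := by
    ext G
    constructor
    · rintro ⟨h1, h2, h3, h4⟩
      obtain ⟨H, rfl⟩ : ∃ H : Submodule F V, H.dualAnnihilator = G :=
        ⟨G.dualCoannihilator, Subspace.dualCoannihilator_dualAnnihilator_eq⟩
      rw [le_iff] at h1 h2 h4
      exact ⟨H, ⟨h2, h1, by have := e H; have := e M; omega, h4⟩, rfl⟩
    · rintro ⟨H, ⟨h1, h2, h3, h4⟩, rfl⟩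
      refine ⟨(le_iff _ _).2 h2, (le_iff _ _).2 h1, ?_, fun h => h4 ((le_iff _ _).1 h)⟩
      have := e H; have := e M
      show finrank F H.dualAnnihilator = _
      omega
  rw [himg, Set.ncard_image_of_injective]
  intro A B h
  exact Subspace.dualAnnihilator_inj.1 h

/-- a subspace is not a union of at most `q` proper subspaces -/
lemma bs_cover (T : Submodule F V) (S : Set (Submodule F V)) (hS : S.ncard ≤ Fintype.card F)
    (hcov : ∀ v ∈ T, ∃ H ∈ S, v ∈ H) : ∃ H ∈ S, T ≤ H := by
  classical
  by_contra! hcon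
  have hq : 1 < Fintype.card F := Fintype.one_lt_card
  obtain ⟨H0, hH0, -⟩ := hcov 0 T.zero_mem
  have hT : 1 ≤ finrank F T := by
    by_contra hlt
    have h0 : finrank F T = 0 := by omega
    rw [Submodule.finrank_eq_zero] at h0
    exact hcon H0 hH0 (h0 ▸ bot_le)
  obtain ⟨t, ht⟩ : ∃ t, finrank F T = t + 1 := ⟨finrank F T - 1, by omega⟩
  set q := Fintype.card F
  have hpos : 0 < q ^ t := by positivity
  have hfin : S.Finite := Set.toFinite S
  have hsub : (T : Set V) \ {0} ⊆ ⋃ H ∈ hfin.toFinset, (((T ⊓ H : Submodule F V) : Set V) \ {0}) := by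
    rintro v ⟨hv, hv0⟩
    obtain ⟨H, hH, hvH⟩ := hcov v hv
    simp only [Set.mem_iUnion]
    exact ⟨H, by simpa using hH, ⟨hv, hvH⟩, hv0⟩
  have h1 := Set.ncard_le_ncard hsub
  have h2 := Finset.set_ncard_biUnion_le hfin.toFinset
    (fun H => (((T ⊓ H : Submodule F V) : Set V) \ {0}))
  have h3 : ∀ H ∈ hfin.toFinset, (((T ⊓ H : Submodule F V) : Set V) \ {0}).ncard ≤ q ^ t - 1 := by
    intro H hH
    rw [Set.ncard_sdiff_singleton_of_mem (Submodule.zero_mem _), bs_ncard_coe]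
    apply Nat.sub_le_sub_right
    apply Nat.pow_le_pow_right (by omega)
    have hlt : T ⊓ H < T := by
      refine lt_of_le_of_ne inf_le_left (fun h => hcon H (by simpa using hH) (inf_eq_left.1 h))
    have := Submodule.finrank_lt_finrank_of_lt hlt
    omega
  have h4 := Finset.sum_le_card_nsmul _ _ _ h3
  rw [Set.ncard_sdiff_singleton_of_mem (Submodule.zero_mem _), bs_ncard_coe, ht] at h1
  rw [← Set.ncard_eq_toFinset_card S hfin, smul_eq_mul] at h4
  have h5 : S.ncard * (q ^ t - 1) ≤ q * (q ^ t - 1) := Nat.mul_le_mul_right _ hS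
  have h5' : q * (q ^ t - 1) = q * q ^ t - q := by rw [Nat.mul_sub, mul_one]
  have hqd : Fintype.card F = q := rfl
  rw [hqd] at h1
  have h6 : q ^ (t+1) = q * q ^ t := by ring
  have h7 : q ≤ q * q ^ t := Nat.le_mul_of_pos_right _ hpos
  omega

/-- counting helper: sizes of unions -/
lemma bs_union_le {α β : Type} [Finite α] [Finite β] (T : Set α) (f : α → Set β) (c : ℕ)
    (h : ∀ a ∈ T, (f a).ncard ≤ c) : (⋃ a ∈ T, f a).ncard ≤ T.ncard * c := by
  have hfin : T.Finite := Set.toFinite T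
  have h2 := Finset.set_ncard_biUnion_le hfin.toFinset f
  have h4 := Finset.sum_le_card_nsmul hfin.toFinset (fun a => (f a).ncard) c (by simpa using h)
  rw [← Set.ncard_eq_toFinset_card T hfin, smul_eq_mul] at h4
  have h5 : (⋃ a ∈ T, f a) = ⋃ a ∈ hfin.toFinset, f a := by simp
  rw [h5]
  exact h2.trans h4

lemma bs_union_ge {α β : Type} [Finite α] [Finite β] (T : Set α) (f : α → Set β) (c : ℕ)
    (h : ∀ a ∈ T, c ≤ (f a).ncard)
    (hd : ∀ a ∈ T, ∀ b ∈ T, ∀ x, x ∈ f a → x ∈ f b → a = b) :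
    T.ncard * c ≤ (⋃ a ∈ T, f a).ncard := by
  have hfin : T.Finite := Set.toFinite T
  rw [hfin.ncard_biUnion (fun i _ => Set.toFinite _), finsum_mem_eq_finite_toFinset_sum _ hfin]
  · have h4 := Finset.card_nsmul_le_sum hfin.toFinset (fun a => (f a).ncard) c (by simpa using h)
    rwa [← Set.ncard_eq_toFinset_card T hfin, smul_eq_mul] at h4
  · intro a ha b hb hab
    rw [Function.onFun, Set.disjoint_left]
    intro x hx hx'
    exact hab (hd a ha b hb x hx hx')

lemma bs_union_eq {α β : Type} [Finite α] [Finite β] (T : Set α) (f : α → Set β) (c : ℕ)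
    (h : ∀ a ∈ T, (f a).ncard = c)
    (hd : ∀ a ∈ T, ∀ b ∈ T, ∀ x, x ∈ f a → x ∈ f b → a = b) :
    (⋃ a ∈ T, f a).ncard = T.ncard * c :=
  le_antisymm (bs_union_le T f c (fun a ha => (h a ha).le))
    (bs_union_ge T f c (fun a ha => (h a ha).ge) hd)

lemma bs_union_lt {α β : Type} [Finite α] [Finite β] (T : Set α) (f : α → Set β) (c : ℕ)
    (h : ∀ a ∈ T, (f a).ncard ≤ c) (a b : α) (ha : a ∈ T) (hb : b ∈ T) (hab : a ≠ b)
    (x : β) (hxa : x ∈ f a) (hxb : x ∈ f b) : (⋃ a ∈ T, f a).ncard < T.ncard * c := by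
  have h1 : (⋃ a ∈ T, f a) = f a ∪ ⋃ y ∈ T \ {a}, f y := by
    ext z
    simp only [Set.mem_iUnion, Set.mem_union, Set.mem_sdiff, Set.mem_singleton_iff]
    constructor
    · rintro ⟨y, hy, hz⟩
      by_cases hya : y = a
      · exact Or.inl (hya ▸ hz)
      · exact Or.inr ⟨y, ⟨hy, hya⟩, hz⟩
    · rintro (hz | ⟨y, ⟨hy, -⟩, hz⟩)
      · exact ⟨a, ha, hz⟩
      · exact ⟨y, hy, hz⟩
  have h2 := bs_union_le (T \ {a}) f c (fun y hy => h y hy.1)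
  have h3 := Set.ncard_union_add_ncard_inter (f a) (⋃ y ∈ T \ {a}, f y)
  have h4 : 0 < (f a ∩ ⋃ y ∈ T \ {a}, f y).ncard := by
    rw [Set.ncard_pos]
    refine ⟨x, hxa, ?_⟩
    simp only [Set.mem_iUnion]
    exact ⟨b, ⟨hb, fun h => hab h.symm⟩, hxb⟩
  have h5 := h a ha
  have h6 : (T \ {a}).ncard + 1 = T.ncard := Set.ncard_sdiff_singleton_add_one ha
  rw [h1, ← h6, add_mul, one_mul]
  omega

lemma bs_finrank_sup_pt (U p : Submodule F V) (hp : finrank F p = 1) (h : ¬ p ≤ U) :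
    finrank F (U ⊔ p : Submodule F V) = finrank F U + 1 := by
  obtain ⟨v, hv, hvU⟩ := SetLike.not_le_iff_exists.1 h
  have hv0 : v ≠ 0 := fun h => hvU (h ▸ U.zero_mem)
  have : Submodule.span F {v} = p := by
    apply Submodule.eq_of_le_of_finrank_le
    · rwa [Submodule.span_singleton_le_iff_mem]
    · rw [hp, finrank_span_singleton hv0]
  rw [← this]
  exact bs_finrank_sup_span U hvU

lemma bs_sup_pt_eq (U p G : Submodule F V) (hp : finrank F p = 1) (h : ¬ p ≤ U) (hU : U ≤ G)
    (hpG : p ≤ G) (hG : finrank F G = finrank F U + 1) : U ⊔ p = G := by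
  apply Submodule.eq_of_le_of_finrank_le (sup_le hU hpG)
  rw [bs_finrank_sup_pt U p hp h, hG]

lemma bs_inf_hyp (H L : Submodule F V) (hH : finrank F H + 1 = finrank F V) (h : ¬ L ≤ H) :
    finrank F (H ⊓ L : Submodule F V) + 1 = finrank F L := by
  have h1 := Submodule.finrank_sup_add_finrank_inf_eq H L
  have h2 : H < H ⊔ L := lt_of_le_of_ne le_sup_left (fun h' => h (h' ▸ le_sup_right))
  have h3 := Submodule.finrank_lt_finrank_of_lt h2
  have h4 := Submodule.finrank_le (H ⊔ L)
  omega

lemma bs_pt_eq (p r : Submodule F V) (hp : finrank F p = 1) (hr : finrank F r = 1) (h : p ≤ r) :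
    p = r := Submodule.eq_of_le_of_finrank_le h (by omega)

/-- blocking sets -/
structure BsBlk (k : ℕ) (B0 Bn : Set (Submodule F V)) : Prop where
  pt : ∀ p ∈ B0, finrank F p = 1
  hyp : ∀ H ∈ Bn, finrank F H = 2 * k + 1
  blk : ∀ W : Submodule F V, finrank F W = k + 1 → (∃ p ∈ B0, p ≤ W) ∨ (∃ H ∈ Bn, W ≤ H)

/-- subspaces containing no point of `B0` -/
def BsSkew (B0 : Set (Submodule F V)) (U : Submodule F V) : Prop := ∀ p ∈ B0, ¬ p ≤ U

/-- hyperplanes of `Bn` through `U` -/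
def bsThru (Bn : Set (Submodule F V)) (U : Submodule F V) : Set (Submodule F V) :=
  {H | H ∈ Bn ∧ U ≤ H}

/-- steps over `U` inside `H`, outside `H1` -/
def bsStep (k : ℕ) (U H1 H : Submodule F V) : Set (Submodule F V) :=
  {G | U ≤ G ∧ G ≤ H ∧ finrank F G = k + 1 ∧ ¬ G ≤ H1}

lemma bs_step_card {k : ℕ} (hV : finrank F V = 2 * k + 2) (U H1 H : Submodule F V)
    (hU : finrank F U = k) (hH1 : finrank F H1 = 2 * k + 1) (hH : finrank F H = 2 * k + 1)
    (h1 : U ≤ H1) (h2 : U ≤ H) (hne : H ≠ H1) :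
    (bsStep k U H1 H).ncard = Fintype.card F ^ k := by
  have hnle : ¬ H ≤ H1 := fun h => hne (Submodule.eq_of_le_of_finrank_le h (by omega))
  have h3 := bs_inf_hyp H1 H (by omega) hnle
  have := bs_cnt1 U (H1 ⊓ H) H k (le_inf h1 h2) inf_le_right (by omega) (by omega)
  rw [← this]
  congr 1
  ext G
  simp only [bsStep, Set.mem_setOf_eq, hU]
  constructor
  · rintro ⟨a, b, c, d⟩
    exact ⟨a, b, c, fun h => d (h.trans inf_le_left)⟩
  · rintro ⟨a, b, c, d⟩
    exact ⟨a, b, c, fun h => d (le_inf h b)⟩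

lemma bs_A {k : ℕ} (hV : finrank F V = 2 * k + 2) {B0 Bn : Set (Submodule F V)}
    (hB : BsBlk k B0 Bn) (U H1 : Submodule F V) (hU : finrank F U = k) (hs : BsSkew B0 U)
    (hH1 : H1 ∈ bsThru Bn U) :
    Fintype.card F ^ (k + 1) ≤ ((fun p => U ⊔ p) '' {p | p ∈ B0 ∧ ¬ p ≤ H1}).ncard
      + (⋃ H ∈ bsThru Bn U \ {H1}, bsStep k U H1 H).ncard := by
  have h1 := hB.hyp H1 hH1.1
  have hc := bs_cnt1 U H1 ⊤ (k + 1) hH1.2 le_top (by rw [finrank_top]; omega) (by omega)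
  rw [← hc]
  refine le_trans (Set.ncard_le_ncard ?_) (Set.ncard_union_le _ _)
  rintro G ⟨hUG, -, hG, hGH⟩
  rcases hB.blk G (by omega) with ⟨p, hp, hpG⟩ | ⟨H, hH, hGH'⟩
  · left
    have he := bs_sup_pt_eq U p G (hB.pt p hp) (hs p hp) hUG hpG hG
    refine ⟨p, ⟨hp, fun h => hGH ?_⟩, he⟩
    rw [← he]
    exact sup_le hH1.2 h
  · right
    simp only [Set.mem_iUnion]
    refine ⟨H, ⟨⟨hH, hUG.trans hGH'⟩, ?_⟩, hUG, hGH', by omega, hGH⟩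
    rintro rfl
    exact hGH hGH'

lemma bs_A1 {k : ℕ} (hV : finrank F V = 2 * k + 2) {B0 Bn : Set (Submodule F V)}
    (hB : BsBlk k B0 Bn) (U : Submodule F V) (hU : finrank F U = k) (hs : BsSkew B0 U)
    (hne : (bsThru Bn U).ncard ≠ 0) :
    (Fintype.card F + 1) * Fintype.card F ^ k
      ≤ B0.ncard + (bsThru Bn U).ncard * Fintype.card F ^ k := by
  obtain ⟨H1, hH1⟩ := Set.nonempty_of_ncard_ne_zero hne
  have h := bs_A hV hB U H1 hU hs hH1
  have h2 := bs_union_le (bsThru Bn U \ {H1}) (bsStep k U H1) (Fintype.card F ^ k)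
    (fun H hH => (bs_step_card hV U H1 H hU (hB.hyp _ hH1.1) (hB.hyp _ hH.1.1) hH1.2 hH.1.2
      hH.2).le)
  have h3 := Set.ncard_image_le (f := fun p => U ⊔ p) (Set.toFinite {p | p ∈ B0 ∧ ¬ p ≤ H1})
  have h4 : {p | p ∈ B0 ∧ ¬ p ≤ H1}.ncard ≤ B0.ncard := Set.ncard_le_ncard (fun p hp => hp.1)
  have h6 := Set.ncard_sdiff_singleton_add_one hH1
  rw [← h6, add_mul, add_mul, one_mul, ← pow_succ']
  omega

lemma bs_A2 {k : ℕ} (hV : finrank F V = 2 * k + 2) {B0 Bn : Set (Submodule F V)}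
    (hB : BsBlk k B0 Bn) (U : Submodule F V) (hU : finrank F U = k) (hs : BsSkew B0 U)
    (heq : B0.ncard + (bsThru Bn U).ncard * Fintype.card F ^ k
      ≤ (Fintype.card F + 1) * Fintype.card F ^ k) :
    (∀ H ∈ bsThru Bn U, Set.InjOn (fun p => U ⊔ p) B0 ∧ ∀ p ∈ B0, ¬ p ≤ H) ∧
    (∀ H1 ∈ bsThru Bn U, ∀ H2 ∈ bsThru Bn U, ∀ H3 ∈ bsThru Bn U, H1 ≠ H2 → H1 ⊓ H2 ≤ H3) := by
  have main : ∀ H1 ∈ bsThru Bn U, B0.ncard ≤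
      ((fun p => U ⊔ p) '' {p | p ∈ B0 ∧ ¬ p ≤ H1}).ncard ∧
      (bsThru Bn U \ {H1}).ncard * Fintype.card F ^ k ≤
        (⋃ H ∈ bsThru Bn U \ {H1}, bsStep k U H1 H).ncard := by
    intro H1 hH1
    have h := bs_A hV hB U H1 hU hs hH1
    have h2 := bs_union_le (bsThru Bn U \ {H1}) (bsStep k U H1) (Fintype.card F ^ k)
      (fun H hH => (bs_step_card hV U H1 H hU (hB.hyp _ hH1.1) (hB.hyp _ hH.1.1) hH1.2 hH.1.2
        hH.2).le)
    have h3 := Set.ncard_image_le (f := fun p => U ⊔ p) (Set.toFinite {p | p ∈ B0 ∧ ¬ p ≤ H1})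
    have h4 : {p | p ∈ B0 ∧ ¬ p ≤ H1}.ncard ≤ B0.ncard := Set.ncard_le_ncard (fun p hp => hp.1)
    have h6 := Set.ncard_sdiff_singleton_add_one hH1
    rw [← h6, add_mul, add_mul, one_mul, ← pow_succ'] at heq
    omega
  constructor
  · intro H1 hH1
    obtain ⟨h, -⟩ := main H1 hH1
    have h3 := Set.ncard_image_le (f := fun p => U ⊔ p) (Set.toFinite {p | p ∈ B0 ∧ ¬ p ≤ H1})
    have h4 : {p | p ∈ B0 ∧ ¬ p ≤ H1} = B0 :=
      Set.eq_of_subset_of_ncard_le (fun p hp => hp.1) (by omega)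
    rw [h4] at h h3
    refine ⟨Set.injOn_of_ncard_image_eq (le_antisymm h3 h), fun p hp => ?_⟩
    rw [← h4] at hp
    exact hp.2
  · intro H2 hH2 H3 hH3 H1 hH1 hne
    by_contra hcon
    obtain ⟨h12, h13⟩ : H2 ≠ H1 ∧ H3 ≠ H1 := by
      constructor
      · rintro rfl; exact hcon inf_le_left
      · rintro rfl; exact hcon inf_le_right
    obtain ⟨-, h⟩ := main H1 hH1
    obtain ⟨v, hv, hv1⟩ := SetLike.not_le_iff_exists.1 hcon
    have hvU : v ∉ U := fun h => hv1 (hH1.2 h)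
    have hst : ∀ H ∈ bsThru Bn U, v ∈ H → U ⊔ Submodule.span F {v} ∈ bsStep k U H1 H := by
      intro H hH hvH
      refine ⟨le_sup_left, sup_le hH.2 (by rwa [Submodule.span_singleton_le_iff_mem]), ?_, ?_⟩
      · rw [bs_finrank_sup_span U hvU, hU]
      · intro h
        exact hv1 (h (Submodule.mem_sup_right (Submodule.mem_span_singleton_self _)))
    have hlt := bs_union_lt (bsThru Bn U \ {H1}) (bsStep k U H1) (Fintype.card F ^ k)
      (fun H hH => (bs_step_card hV U H1 H hU (hB.hyp _ hH1.1) (hB.hyp _ hH.1.1) hH1.2 hH.1.2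
        hH.2).le) H2 H3 ⟨hH2, h12⟩ ⟨hH3, h13⟩ hne _ (hst H2 hH2 hv.1) (hst H3 hH3 hv.2)
    omega

lemma bs_three {α : Type} [Finite α] (A B C : Set α) (a : α) (q k : ℕ)
    (hA : A.ncard = q ^ (k + 1)) (hB : B.ncard = q ^ k) (hAB : ∀ G, G ∈ B → G ∉ A)
    (haA : a ∉ A) (haB : a ∉ B) (hAC : A ⊆ C) (hBC : B ⊆ C) (haC : a ∈ C) :
    (q + 1) * q ^ k < C.ncard := by
  have h1 : (A ∪ B).ncard = A.ncard + B.ncard :=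
    Set.ncard_union_eq (Set.disjoint_left.2 fun x hx hx' => hAB x hx' hx)
  have h2 : (insert a (A ∪ B)).ncard = (A ∪ B).ncard + 1 :=
    Set.ncard_insert_of_notMem (by simp [haA, haB])
  have h3 : (insert a (A ∪ B)).ncard ≤ C.ncard :=
    Set.ncard_le_ncard (Set.insert_subset haC (Set.union_subset hAC hBC))
  rw [add_mul, one_mul, ← pow_succ']
  omega

/-- many subspaces over `U` -/
lemma bs_many_up {k : ℕ} (hk : 1 ≤ k) (hV : finrank F V = 2 * k + 2) (U : Submodule F V)
    (hU : finrank F U = k) :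
    (Fintype.card F + 1) * Fintype.card F ^ k <
      {G : Submodule F V | U ≤ G ∧ finrank F G = k + 1}.ncard := by
  obtain ⟨C, hC⟩ := Submodule.exists_isCompl U
  have hCd := Submodule.finrank_add_eq_of_isCompl hC
  obtain ⟨D1, hD1, hd1⟩ := bs_exists_le_finrank C (k + 1) (by omega)
  obtain ⟨D2, hD2, hd2⟩ := bs_exists_le_finrank D1 k (by omega)
  have hdim : ∀ D ≤ C, finrank F (U ⊔ D : Submodule F V) = k + finrank F D := by
    intro D hD
    have h := Submodule.finrank_sup_add_finrank_inf_eq U D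
    have : U ⊓ D = ⊥ := le_bot_iff.1 (hC.inf_eq_bot ▸ inf_le_inf_left U hD)
    rw [this, finrank_bot] at h
    omega
  have e1 := hdim D1 hD1
  have e2 := hdim D2 (hD2.trans hD1)
  have c1 := bs_cnt1 U (U ⊔ D1) ⊤ (k + 1) le_sup_left le_top (by rw [finrank_top]; omega) (by omega)
  have c2 := bs_cnt1 U (U ⊔ D2) (U ⊔ D1) k le_sup_left (sup_le_sup_left hD2 U) (by omega) (by omega)
  obtain ⟨D0, hD0, hd0⟩ := bs_exists_le_finrank D2 1 (by omega)
  have e0 := hdim D0 (hD0.trans (hD2.trans hD1))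
  apply bs_three _ _ _ (U ⊔ D0) _ _ c1 c2
  · rintro G ⟨-, h, -⟩ ⟨-, -, -, h'⟩
    exact h' h
  · rintro ⟨-, -, -, h⟩
    exact h (sup_le_sup_left (hD0.trans hD2) U)
  · rintro ⟨-, -, -, h⟩
    exact h (sup_le_sup_left hD0 U)
  · rintro G ⟨h1, -, h2, -⟩
    exact ⟨h1, by omega⟩
  · rintro G ⟨h1, -, h2, -⟩
    exact ⟨h1, by omega⟩
  · exact ⟨le_sup_left, by omega⟩

/-- many hyperplanes of `L` -/
lemma bs_many_down {k : ℕ} (hk : 1 ≤ k) (L : Submodule F V) (hL : finrank F L = k + 2) :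
    (Fintype.card F + 1) * Fintype.card F ^ k <
      {W : Submodule F V | W ≤ L ∧ finrank F W = k + 1}.ncard := by
  obtain ⟨D2, hD2, hd2⟩ := bs_exists_le_finrank L (k + 1) (by omega)
  obtain ⟨D1, hD1, hd1⟩ := bs_exists_le_finrank D2 2 (by omega)
  obtain ⟨D0, hD0, hd0⟩ := bs_exists_le_finrank D1 1 (by omega)
  have c1 := bs_cnt2 ⊥ D0 L (k + 1) bot_le (hD0.trans (hD1.trans hD2))
    (by rw [finrank_bot, hd0]) (by omega)
  have c2 := bs_cnt2 D0 D1 L k hD0 (hD1.trans hD2) (by omega) (by omega)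
  apply bs_three _ _ _ D2 _ _ c1 c2
  · rintro G ⟨h, -⟩ ⟨-, -, -, h'⟩
    exact h' h
  · rintro ⟨-, -, -, h⟩
    exact h (hD0.trans hD1)
  · rintro ⟨-, -, -, h⟩
    exact h hD1
  · rintro G ⟨-, h1, h2, -⟩
    exact ⟨h1, by omega⟩
  · rintro G ⟨-, h1, h2, -⟩
    exact ⟨h1, by omega⟩
  · exact ⟨hD2, by omega⟩

lemma bs_A0 {k : ℕ} (hk : 1 ≤ k) (hV : finrank F V = 2 * k + 2) {B0 Bn : Set (Submodule F V)}
    (hB : BsBlk k B0 Bn) (U : Submodule F V) (hU : finrank F U = k) (hs : BsSkew B0 U)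
    (h0 : (bsThru Bn U).ncard = 0) :
    (Fintype.card F + 1) * Fintype.card F ^ k < B0.ncard := by
  refine lt_of_lt_of_le (bs_many_up hk hV U hU) ?_
  refine le_trans (Set.ncard_le_ncard ?_) (Set.ncard_image_le (f := fun p => U ⊔ p)
    (Set.toFinite B0))
  rintro G ⟨hUG, hG⟩
  rcases hB.blk G hG with ⟨p, hp, hpG⟩ | ⟨H, hH, hGH⟩
  · exact ⟨p, hp, bs_sup_pt_eq U p G (hB.pt p hp) (hs p hp) hUG hpG (by omega)⟩
  · rw [Set.ncard_eq_zero] at h0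
    have : H ∈ bsThru Bn U := ⟨hH, hUG.trans hGH⟩
    rw [h0] at this
    exact absurd this (Set.notMem_empty _)

/-- complement-type hyperplanes of `G` off the point `x` -/
def bsOff (k : ℕ) (x G : Submodule F V) : Set (Submodule F V) :=
  {U | U ≤ G ∧ finrank F U = k ∧ ¬ x ≤ U}

lemma bs_off_card {k : ℕ} (x G : Submodule F V) (hx : finrank F x = 1) (hG : finrank F G = k + 1)
    (hxG : x ≤ G) : (bsOff k x G).ncard = Fintype.card F ^ k := by
  rw [← bs_cnt2 ⊥ x G k bot_le hxG (by rw [finrank_bot, hx]) (by omega)]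
  congr 1
  ext U
  simp only [bsOff, Set.mem_setOf_eq, bot_le, true_and, hG, Nat.add_right_cancel_iff]

lemma bs_off_skew {k : ℕ} {B0 : Set (Submodule F V)} (x G U : Submodule F V)
    (hx : ∀ p ∈ B0, p ≤ G → p = x) (hU : U ∈ bsOff k x G) : BsSkew B0 U := by
  intro p hp hpU
  have := hx p hp (hpU.trans hU.1)
  exact hU.2.2 (this ▸ hpU)

lemma bs_off_disj {k : ℕ} (hV : finrank F V = 2 * k + 2) {Bn : Set (Submodule F V)}
    (hyp : ∀ H ∈ Bn, finrank F H = 2 * k + 1)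
    (x G : Submodule F V) (hG : finrank F G = k + 1)
    (hn : ∀ H ∈ Bn, ¬ G ≤ H) :
    ∀ U ∈ bsOff k x G, ∀ H ∈ bsThru Bn U, U = H ⊓ G := by
  intro U hU H hH
  have h1 := bs_inf_hyp H G (by rw [hyp H hH.1]; omega) (hn H hH.1)
  have h2 := hU.2.1
  exact Submodule.eq_of_le_of_finrank_le (le_inf hH.2 hU.1) (by omega)

lemma bs_B {k : ℕ} (hV : finrank F V = 2 * k + 2) {B0 Bn : Set (Submodule F V)}
    (hB : BsBlk k B0 Bn) (x G : Submodule F V) (hx0 : x ∈ B0) (hG : finrank F G = k + 1)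
    (hxG : x ≤ G) (hx : ∀ p ∈ B0, p ≤ G → p = x) (hn : ∀ H ∈ Bn, ¬ G ≤ H) (m : ℕ)
    (hm : ∀ U : Submodule F V, finrank F U = k → BsSkew B0 U → m ≤ (bsThru Bn U).ncard) :
    m * Fintype.card F ^ k ≤ {H | H ∈ Bn ∧ ¬ x ≤ H}.ncard ∧
    (Bn.ncard ≤ m * Fintype.card F ^ k → (∀ H ∈ Bn, ¬ x ≤ H) ∧
      ∀ U ∈ bsOff k x G, (bsThru Bn U).ncard = m) := by
  have hq : 0 < Fintype.card F := Fintype.card_pos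
  have hc := bs_off_card x G (hB.pt x hx0) hG hxG
  have hdisj := bs_off_disj hV hB.hyp x G hG hn
  have hd : ∀ a ∈ bsOff k x G, ∀ b ∈ bsOff k x G, ∀ H, H ∈ bsThru Bn a → H ∈ bsThru Bn b →
      a = b := by
    intro a ha b hb H h1 h2
    rw [hdisj a ha H h1, hdisj b hb H h2]
  have hge : ∀ U ∈ bsOff k x G, m ≤ (bsThru Bn U).ncard := fun U hU =>
    hm U hU.2.1 (bs_off_skew x G U hx hU)
  have hu := bs_union_ge (bsOff k x G) (bsThru Bn) m hge hd
  have hsub : (⋃ U ∈ bsOff k x G, bsThru Bn U) ⊆ {H | H ∈ Bn ∧ ¬ x ≤ H} := by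
    intro H hH
    simp only [Set.mem_iUnion] at hH
    obtain ⟨U, hU, hH⟩ := hH
    refine ⟨hH.1, fun h => hU.2.2 ?_⟩
    rw [hdisj U hU H hH]
    exact le_inf h hxG
  have h1 := Set.ncard_le_ncard hsub
  have h2 : {H | H ∈ Bn ∧ ¬ x ≤ H}.ncard ≤ Bn.ncard := Set.ncard_le_ncard (fun H h => h.1)
  rw [hc, mul_comm] at hu
  refine ⟨by omega, fun hle => ⟨fun H hH => ?_, fun U hU => ?_⟩⟩
  · have h4 : {H | H ∈ Bn ∧ ¬ x ≤ H} = Bn :=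
      Set.eq_of_subset_of_ncard_le (fun p hp => hp.1) (by omega)
    rw [← h4] at hH
    exact hH.2
  · by_contra hne
    have hgt : m + 1 ≤ (bsThru Bn U).ncard := by
      have := hge U hU
      omega
    have hu' := bs_union_ge (bsOff k x G \ {U}) (bsThru Bn) m (fun a ha => hge a ha.1)
      (fun a ha b hb => hd a ha.1 b hb.1)
    have hdj : Disjoint (bsThru Bn U) (⋃ a ∈ bsOff k x G \ {U}, bsThru Bn a) := by
      rw [Set.disjoint_left]
      intro H h1 h2
      simp only [Set.mem_iUnion] at h2
      obtain ⟨a, ha, h2⟩ := h2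
      exact ha.2 (hd a ha.1 U hU H h2 h1)
    have h5 := Set.ncard_union_eq hdj
    have h6 : (bsThru Bn U ∪ ⋃ a ∈ bsOff k x G \ {U}, bsThru Bn a).ncard ≤ Bn.ncard := by
      refine Set.ncard_le_ncard ?_
      rintro H (h | h)
      · exact h.1
      · simp only [Set.mem_iUnion] at h
        obtain ⟨a, -, h⟩ := h
        exact h.1
    have h7 := Set.ncard_sdiff_singleton_add_one hU
    rw [hc] at h7
    have h8 : m * Fintype.card F ^ k = (bsOff k x G \ {U}).ncard * m + m := by
      rw [← h7]; ring
    omega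

lemma bs_E_aux {k : ℕ} (hk : 1 ≤ k) (hV : finrank F V = 2 * k + 2) :
    ∀ (n : ℕ) (Bn : Set (Submodule F V)), Bn.ncard = n →
    (∀ H ∈ Bn, finrank F H = 2 * k + 1) →
    (∀ W : Submodule F V, finrank F W = k + 1 → ∃ H ∈ Bn, W ≤ H) →
    (Fintype.card F + 1) * Fintype.card F ^ k < Bn.ncard := by
  intro n
  induction n using Nat.strong_induction_on with
  | _ n ih =>
  intro Bn hn hyp hblk
  by_cases hmin : ∃ H0 ∈ Bn, ∀ W : Submodule F V, finrank F W = k + 1 → ∃ H ∈ Bn \ {H0}, W ≤ H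
  · obtain ⟨H0, hH0, hb⟩ := hmin
    have h7 := Set.ncard_sdiff_singleton_add_one hH0
    have := ih (Bn \ {H0}).ncard (by omega) (Bn \ {H0}) rfl (fun H hH => hyp H hH.1) hb
    omega
  · push Not at hmin
    obtain ⟨W0, -, hW0⟩ := bs_exists_le_finrank (⊤ : Submodule F V) (k + 1)
      (by rw [finrank_top]; omega)
    obtain ⟨H0, hH0, -⟩ := hblk W0 hW0
    obtain ⟨G, hG, hGn⟩ := hmin H0 hH0
    have hnt : ¬ (⊤ : Submodule F V) ≤ H0 := by
      intro h
      have h1 := Submodule.finrank_mono h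
      have h2 := hyp H0 hH0
      rw [finrank_top] at h1
      omega
    obtain ⟨v, -, hv⟩ := SetLike.not_le_iff_exists.1 hnt
    have hGH0 : G ≤ H0 := by
      obtain ⟨H, hH, hGH⟩ := hblk G hG
      by_cases h : H = H0
      · exact h ▸ hGH
      · exact absurd hGH (hGn H ⟨hH, h⟩)
    have hL := bs_finrank_sup_span G (fun h => hv (hGH0 h))
    set L := G ⊔ Submodule.span F {v} with hLdef
    have hLn : ∀ H ∈ Bn, ¬ L ≤ H := by
      intro H hH hLH
      by_cases h : H = H0
      · subst h
        exact hv (hLH (Submodule.mem_sup_right (Submodule.mem_span_singleton_self _)))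
      · exact hGn H ⟨hH, h⟩ (le_sup_left.trans hLH)
    refine lt_of_lt_of_le (bs_many_down hk L (by omega)) ?_
    refine le_trans (Set.ncard_le_ncard ?_) (Set.ncard_image_le (f := fun H => H ⊓ L)
      (Set.toFinite Bn))
    rintro W ⟨hWL, hW⟩
    obtain ⟨H, hH, hWH⟩ := hblk W hW
    refine ⟨H, hH, ?_⟩
    have := bs_inf_hyp H L (by rw [hyp H hH]; omega) (hLn H hH)
    exact (Submodule.eq_of_le_of_finrank_le (le_inf hWH hWL) (by omega)).symm

lemma bs_E {k : ℕ} (hk : 1 ≤ k) (hV : finrank F V = 2 * k + 2) {Bn : Set (Submodule F V)}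
    (hB : BsBlk k ∅ Bn) : (Fintype.card F + 1) * Fintype.card F ^ k < Bn.ncard := by
  apply bs_E_aux hk hV _ Bn rfl hB.hyp
  intro W hW
  rcases hB.blk W hW with ⟨p, hp, -⟩ | h
  · exact absurd hp (Set.notMem_empty _)
  · exact h

lemma bs_min_exists {k : ℕ} {B0 Bn : Set (Submodule F V)}
    (hne : ∃ U : Submodule F V, finrank F U = k ∧ BsSkew B0 U) :
    ∃ U : Submodule F V, finrank F U = k ∧ BsSkew B0 U ∧
      ∀ U' : Submodule F V, finrank F U' = k → BsSkew B0 U' →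
        (bsThru Bn U).ncard ≤ (bsThru Bn U').ncard := by
  obtain ⟨U, hU, h⟩ := Set.exists_min_image {U : Submodule F V | finrank F U = k ∧ BsSkew B0 U}
    (fun U => (bsThru Bn U).ncard) (Set.toFinite _) hne
  exact ⟨U, hU.1, hU.2, fun Y h1 h2 => h Y ⟨h1, h2⟩⟩

/-- essential point -/
lemma bs_ess {k : ℕ} {B0 Bn : Set (Submodule F V)} (hB : BsBlk k B0 Bn) (x : Submodule F V)
    (hx : ¬ BsBlk k (B0 \ {x}) Bn) :
    ∃ G : Submodule F V, finrank F G = k + 1 ∧ x ≤ G ∧ (∀ p ∈ B0, p ≤ G → p = x) ∧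
      ∀ H ∈ Bn, ¬ G ≤ H := by
  have : ∃ W : Submodule F V, finrank F W = k + 1 ∧
      ¬ ((∃ p ∈ B0 \ {x}, p ≤ W) ∨ (∃ H ∈ Bn, W ≤ H)) := by
    by_contra! hcon
    exact hx ⟨fun p hp => hB.pt p hp.1, hB.hyp, hcon⟩
  obtain ⟨W, hW, h⟩ := this
  push Not at h
  have h1 : ∀ p ∈ B0, p ≤ W → p = x := by
    intro p hp hpW
    by_contra hne
    exact h.1 p ⟨hp, hne⟩ hpW
  refine ⟨W, hW, ?_, h1, h.2⟩
  rcases hB.blk W hW with ⟨p, hp, hpW⟩ | ⟨H, hH, hWH⟩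
  · exact h1 p hp hpW ▸ hpW
  · exact absurd hWH (h.2 H hH)

/-- one essential point gives everything numerical -/
lemma bs_num {k : ℕ} (hk : 1 ≤ k) (hV : finrank F V = 2 * k + 2) {B0 Bn : Set (Submodule F V)}
    (hB : BsBlk k B0 Bn) (x : Submodule F V) (hx0 : x ∈ B0)
    (hx : ¬ BsBlk k (B0 \ {x}) Bn) :
    ∃ m : ℕ, ∃ U : Submodule F V, finrank F U = k ∧ BsSkew B0 U ∧ (bsThru Bn U).ncard = m ∧
      (∀ U' : Submodule F V, finrank F U' = k → BsSkew B0 U' → m ≤ (bsThru Bn U').ncard) ∧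
      m * Fintype.card F ^ k ≤ Bn.ncard ∧
      (m ≠ 0 → (Fintype.card F + 1) * Fintype.card F ^ k ≤ B0.ncard + m * Fintype.card F ^ k) ∧
      (m = 0 → (Fintype.card F + 1) * Fintype.card F ^ k < B0.ncard) := by
  obtain ⟨G, hG, hxG, hGx, hGn⟩ := bs_ess hB x hx
  have hc := bs_off_card x G (hB.pt x hx0) hG hxG
  have hne : (bsOff k x G).Nonempty := by
    rw [← Set.ncard_pos, hc]
    exact Nat.pow_pos Fintype.card_pos
  obtain ⟨U0, hU0⟩ := hne
  obtain ⟨U, hU, hs, hmin⟩ := bs_min_exists (Bn := Bn)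
    ⟨U0, hU0.2.1, bs_off_skew x G U0 hGx hU0⟩
  have hb := (bs_B hV hB x G hx0 hG hxG hGx hGn _ hmin).1
  have h2 : {H | H ∈ Bn ∧ ¬ x ≤ H}.ncard ≤ Bn.ncard := Set.ncard_le_ncard (fun H h => h.1)
  exact ⟨_, U, hU, hs, rfl, hmin, by omega, bs_A1 hV hB U hU hs, bs_A0 hk hV hB U hU hs⟩

lemma bs_bound_aux {k : ℕ} (hk : 1 ≤ k) (hV : finrank F V = 2 * k + 2) :
    ∀ (n : ℕ) (B0 Bn : Set (Submodule F V)), B0.ncard = n → BsBlk k B0 Bn →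
    (Fintype.card F + 1) * Fintype.card F ^ k ≤ B0.ncard + Bn.ncard := by
  intro n
  induction n using Nat.strong_induction_on with
  | _ n ih =>
  intro B0 Bn hn hB
  rcases B0.eq_empty_or_nonempty with rfl | ⟨x, hx0⟩
  · have := bs_E hk hV hB
    omega
  · by_cases hx : BsBlk k (B0 \ {x}) Bn
    · have h7 := Set.ncard_sdiff_singleton_add_one hx0
      have := ih _ (by omega) (B0 \ {x}) Bn rfl hx
      omega
    · obtain ⟨m, U, -, -, -, -, h1, h2, h3⟩ := bs_num hk hV hB x hx0 hx
      by_cases hm : m = 0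
      · have := h3 hm
        omega
      · have := h2 hm
        omega

lemma bs_bound {k : ℕ} (hk : 1 ≤ k) (hV : finrank F V = 2 * k + 2) {B0 Bn : Set (Submodule F V)}
    (hB : BsBlk k B0 Bn) :
    (Fintype.card F + 1) * Fintype.card F ^ k ≤ B0.ncard + Bn.ncard :=
  bs_bound_aux hk hV _ B0 Bn rfl hB

/-- counting the two parts of the construction -/
lemma bs_count {k : ℕ} (hV : finrank F V = 2 * k + 2) (SIG sig : Submodule F V)
    (K1 K2 : Set (Submodule F V)) (hS : finrank F SIG = k + 2) (hs : finrank F sig = k)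
    (hle : sig ≤ SIG) (hd : Disjoint K1 K2)
    (hK : K1 ∪ K2 = {κ : Submodule F V | finrank F κ = k + 1 ∧ sig ≤ κ ∧ κ ≤ SIG}) :
    {p : Submodule F V | finrank F p = 1 ∧ ∃ κ ∈ K1, p ≤ κ ∧ ¬ p ≤ sig}.ncard
      + {H : Submodule F V | finrank F H = 2 * k + 1 ∧ ∃ κ ∈ K2, κ ≤ H ∧ ¬ SIG ≤ H}.ncard
      = (Fintype.card F + 1) * Fintype.card F ^ k := by
  have hK1 : ∀ κ ∈ K1, finrank F κ = k + 1 ∧ sig ≤ κ ∧ κ ≤ SIG := fun κ h => by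
    have : κ ∈ K1 ∪ K2 := Or.inl h
    rwa [hK] at this
  have hK2 : ∀ κ ∈ K2, finrank F κ = k + 1 ∧ sig ≤ κ ∧ κ ≤ SIG := fun κ h => by
    have : κ ∈ K1 ∪ K2 := Or.inr h
    rwa [hK] at this
  have e1 : {p : Submodule F V | finrank F p = 1 ∧ ∃ κ ∈ K1, p ≤ κ ∧ ¬ p ≤ sig}.ncard
      = K1.ncard * Fintype.card F ^ k := by
    rw [← bs_union_eq K1 (fun κ => {p : Submodule F V | finrank F p = 1 ∧ p ≤ κ ∧ ¬ p ≤ sig})]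
    · congr 1
      ext p
      simp only [Set.mem_setOf_eq, Set.mem_iUnion]
      constructor
      · rintro ⟨a, κ, b, c⟩
        exact ⟨κ, b, a, c⟩
      · rintro ⟨κ, b, a, c⟩
        exact ⟨a, κ, b, c⟩
    · intro κ hκ
      obtain ⟨h1, h2, h3⟩ := hK1 κ hκ
      rw [← bs_cnt1 ⊥ sig κ k bot_le h2 (by omega) (by rw [finrank_bot]; omega)]
      congr 1
      ext p
      simp only [Set.mem_setOf_eq, finrank_bot, bot_le, true_and, zero_add]
      tauto
    · rintro a ha b hb p ⟨hp, hpa, hps⟩ ⟨-, hpb, -⟩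
      obtain ⟨h1, h2, h3⟩ := hK1 a ha
      obtain ⟨h1', h2', h3'⟩ := hK1 b hb
      rw [← bs_sup_pt_eq sig p a hp hps h2 hpa (by omega),
        ← bs_sup_pt_eq sig p b hp hps h2' hpb (by omega)]
  have e2 : {H : Submodule F V | finrank F H = 2 * k + 1 ∧ ∃ κ ∈ K2, κ ≤ H ∧ ¬ SIG ≤ H}.ncard
      = K2.ncard * Fintype.card F ^ k := by
    rw [← bs_union_eq K2
      (fun κ => {H : Submodule F V | finrank F H = 2 * k + 1 ∧ κ ≤ H ∧ ¬ SIG ≤ H})]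
    · congr 1
      ext p
      simp only [Set.mem_setOf_eq, Set.mem_iUnion]
      constructor
      · rintro ⟨a, κ, b, c⟩
        exact ⟨κ, b, a, c⟩
      · rintro ⟨κ, b, a, c⟩
        exact ⟨a, κ, b, c⟩
    · intro κ hκ
      obtain ⟨h1, h2, h3⟩ := hK2 κ hκ
      rw [← bs_cnt2 κ SIG ⊤ k h3 le_top (by omega) (by rw [finrank_top]; omega)]
      congr 1
      ext H
      simp only [Set.mem_setOf_eq, finrank_top, le_top, true_and, hV]
      constructor
      · rintro ⟨a, b, c⟩
        exact ⟨b, by omega, c⟩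
      · rintro ⟨a, b, c⟩
        exact ⟨by omega, a, c⟩
    · rintro a ha b hb H ⟨hH, hHa, hHs⟩ ⟨-, hHb, -⟩
      obtain ⟨h1, h2, h3⟩ := hK2 a ha
      obtain ⟨h1', h2', h3'⟩ := hK2 b hb
      have h := bs_inf_hyp H SIG (by omega) hHs
      rw [Submodule.eq_of_le_of_finrank_le (le_inf hHa h3) (by omega),
        Submodule.eq_of_le_of_finrank_le (le_inf hHb h3') (by omega)]
  have e3 : K1.ncard + K2.ncard = Fintype.card F + 1 := by
    rw [← Set.ncard_union_eq hd, hK]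
    have hn : ¬ SIG ≤ sig := fun h => by
      have := Submodule.finrank_mono h
      omega
    obtain ⟨v, hv, hvs⟩ := SetLike.not_le_iff_exists.1 hn
    have hκ0 := bs_finrank_sup_span sig hvs
    set κ0 := sig ⊔ Submodule.span F {v} with hκdef
    have hκS : κ0 ≤ SIG := sup_le hle (by rwa [Submodule.span_singleton_le_iff_mem])
    have hc := bs_cnt1 sig κ0 SIG 1 le_sup_left hκS (by omega) (by omega)
    rw [pow_one] at hc
    rw [← hc, ← Set.ncard_insert_of_notMem (a := κ0)]
    · congr 1
      ext κ
      simp only [Set.mem_setOf_eq, Set.mem_insert_iff]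
      constructor
      · rintro ⟨a, b, c⟩
        by_cases h : κ = κ0
        · exact Or.inl h
        · exact Or.inr ⟨b, c, by omega,
            fun h' => h (Submodule.eq_of_le_of_finrank_le h' (by omega))⟩
      · rintro (rfl | ⟨a, b, c, d⟩)
        · exact ⟨by omega, le_sup_left, hκS⟩
        · exact ⟨by omega, a, b⟩
    · rintro ⟨-, -, -, h⟩
      exact h le_rfl
  rw [e1, e2, ← add_mul, e3]

/-- minimal skew subspaces -/
structure BsGood (k m : ℕ) (B0 Bn : Set (Submodule F V)) (U : Submodule F V) : Prop where
  dim : finrank F U = k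
  skew : BsSkew B0 U
  thru : (bsThru Bn U).ncard = m

/-- the situation of equality -/
structure BsTight (k m : ℕ) (B0 Bn : Set (Submodule F V)) : Prop where
  blk : BsBlk k B0 Bn
  mpos : 1 ≤ m
  mle : m ≤ Fintype.card F
  hmin : ∀ U : Submodule F V, finrank F U = k → BsSkew B0 U → m ≤ (bsThru Bn U).ncard
  bn : Bn.ncard = m * Fintype.card F ^ k
  b0 : B0.ncard + m * Fintype.card F ^ k = (Fintype.card F + 1) * Fintype.card F ^ k
  ne : B0.Nonempty

lemma bs_tight {k : ℕ} (hk : 1 ≤ k) (hV : finrank F V = 2 * k + 2) {B0 Bn : Set (Submodule F V)}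
    (hB : BsBlk k B0 Bn)
    (heq : B0.ncard + Bn.ncard = (Fintype.card F + 1) * Fintype.card F ^ k) :
    ∃ m U, BsTight k m B0 Bn ∧ BsGood k m B0 Bn U := by
  rcases B0.eq_empty_or_nonempty with rfl | ⟨x, hx0⟩
  · have := bs_E hk hV hB
    rw [Set.ncard_empty] at heq
    omega
  · have hx : ¬ BsBlk k (B0 \ {x}) Bn := by
      intro h
      have h7 := Set.ncard_sdiff_singleton_add_one hx0
      have := bs_bound hk hV h
      omega
    obtain ⟨m, U, h1, h2, h3, h4, h5, h6, h7⟩ := bs_num hk hV hB x hx0 hx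
    have hm : m ≠ 0 := by
      intro hm
      have := h7 hm
      omega
    have h8 := h6 hm
    have hb0 : B0.ncard + m * Fintype.card F ^ k = (Fintype.card F + 1) * Fintype.card F ^ k := by
      omega
    refine ⟨m, U, ⟨hB, by omega, ?_, h4, by omega, hb0, ⟨x, hx0⟩⟩, ⟨h1, h2, h3⟩⟩
    by_contra hlt
    have h9 : (Fintype.card F + 1) * Fintype.card F ^ k ≤ m * Fintype.card F ^ k :=
      Nat.mul_le_mul_right _ (by omega)
    have h10 : 0 < B0.ncard := (Set.ncard_pos).2 ⟨x, hx0⟩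
    omega

lemma bs_good_move {k m : ℕ} (hV : finrank F V = 2 * k + 2) {B0 Bn : Set (Submodule F V)}
    (ht : BsTight k m B0 Bn) {U : Submodule F V} (hU : BsGood k m B0 Bn U) {x : Submodule F V}
    (hx : x ∈ B0) : (∀ H ∈ Bn, ¬ x ≤ H) ∧ ∀ U' ∈ bsOff k x (U ⊔ x), BsGood k m B0 Bn U' := by
  have hx1 := ht.blk.pt x hx
  have hA := (bs_A2 hV ht.blk U hU.dim hU.skew (by rw [hU.thru]; exact ht.b0.le)).1
  have hne : (bsThru Bn U).Nonempty := by
    rw [← Set.ncard_pos, hU.thru]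
    exact ht.mpos
  obtain ⟨H1, hH1⟩ := hne
  have hd := bs_finrank_sup_pt U x hx1 (hU.skew x hx)
  rw [hU.dim] at hd
  have honly : ∀ p ∈ B0, p ≤ U ⊔ x → p = x := by
    intro p hp hpG
    apply (hA H1 hH1).1 hp hx
    exact bs_sup_pt_eq U p (U ⊔ x) (ht.blk.pt p hp) (hU.skew p hp) le_sup_left hpG
      (by rw [hd, hU.dim])
  have hB := bs_B hV ht.blk x (U ⊔ x) hx hd le_sup_right honly
    (fun H hH h => (hA H ⟨hH, le_sup_left.trans h⟩).2 x hx (le_sup_right.trans h)) m ht.hmin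
  obtain ⟨h1, h2⟩ := hB.2 ht.bn.le
  exact ⟨h1, fun U' hU' => ⟨hU'.2.1, bs_off_skew x _ U' honly hU', h2 U' hU'⟩⟩

lemma bs_span {k m : ℕ} (hk : 1 ≤ k) (hV : finrank F V = 2 * k + 2) {B0 Bn : Set (Submodule F V)}
    (ht : BsTight k m B0 Bn) (T : Finset (Submodule F V)) :
    (∀ p ∈ T, p ∈ B0) → ∀ U, BsGood k m B0 Bn U → T.sup id ⊓ U = ⊥ := by
  classical
  induction T using Finset.induction_on with
  | empty =>
    intro _ U _
    simp
  | insert x T hxT ih =>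
    intro hT U hU
    have hx : x ∈ B0 := hT x (Finset.mem_insert_self _ _)
    have ih' := ih (fun p hp => hT p (Finset.mem_insert_of_mem hp))
    have hx1 := ht.blk.pt x hx
    have hxU : ∀ w ∈ x, w ∈ U → w = 0 := by
      intro w hwx hwU
      by_contra hw
      apply hU.skew x hx
      have : Submodule.span F {w} = x := by
        apply Submodule.eq_of_le_of_finrank_le
        · rwa [Submodule.span_singleton_le_iff_mem]
        · rw [hx1, finrank_span_singleton hw]
      rw [← this]
      rwa [Submodule.span_singleton_le_iff_mem]
    rw [Finset.sup_insert, id, eq_bot_iff]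
    rintro w ⟨hw, hwU⟩
    rw [Submodule.mem_bot]
    obtain ⟨a, ha, r, hr, rfl⟩ := Submodule.mem_sup.1 hw
    by_cases hrx : r ∈ x
    · exact hxU _ (x.add_mem ha hrx) hwU
    · exfalso
      have hr0 : r ≠ 0 := fun h => hrx (h ▸ x.zero_mem)
      have hrG : r ∈ U ⊔ x := by
        have h1 : a + r ∈ U ⊔ x := Submodule.mem_sup_left hwU
        have h2 : a ∈ U ⊔ x := Submodule.mem_sup_right ha
        simpa using (U ⊔ x).sub_mem h1 h2
      have hd := bs_finrank_sup_pt U x hx1 (hU.skew x hx)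
      rw [hU.dim] at hd
      have hs1 : finrank F (Submodule.span F {r}) = 1 := finrank_span_singleton hr0
      have hxr : ¬ x ≤ Submodule.span F {r} := by
        intro h
        have := bs_pt_eq x _ hx1 hs1 h
        exact hrx (this ▸ Submodule.mem_span_singleton_self r)
      have hs2 := bs_finrank_sup_pt (Submodule.span F {r}) x hx1 hxr
      have hsp : Submodule.span F {r} ≤ U ⊔ x := by
        rwa [Submodule.span_singleton_le_iff_mem]
      have hc := bs_cnt2 (Submodule.span F {r}) (Submodule.span F {r} ⊔ x) (U ⊔ x) (k - 1)
        le_sup_left (sup_le hsp le_sup_right) hs2 (by omega)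
      have hne : 0 < Fintype.card F ^ (k - 1) := Nat.pow_pos Fintype.card_pos
      rw [← hc, Set.ncard_pos] at hne
      obtain ⟨U', h1, h2, h3, h4⟩ := hne
      have hg := (bs_good_move hV ht hU hx).2 U' ⟨h2, by omega, fun h => h4 (sup_le h1 h)⟩
      have h5 := ih' U' hg
      have h6 : r ∈ T.sup id ⊓ U' := ⟨hr, h1 (Submodule.mem_span_singleton_self r)⟩
      rw [h5, Submodule.mem_bot] at h6
      exact hr0 h6

lemma bs_forward {k : ℕ} (hk : 1 ≤ k) (hV : finrank F V = 2 * k + 2) {B0 Bn : Set (Submodule F V)}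
    (hB : BsBlk k B0 Bn)
    (heq : B0.ncard + Bn.ncard = (Fintype.card F + 1) * Fintype.card F ^ k) :
    ∃ (SIG sig : Submodule F V) (K1 K2 : Set (Submodule F V)),
        finrank F SIG = k + 2 ∧ finrank F sig = k ∧ sig < SIG ∧
        K1.Nonempty ∧ K2.Nonempty ∧ Disjoint K1 K2 ∧
        K1 ∪ K2 = {κ : Submodule F V | finrank F κ = k + 1 ∧ sig ≤ κ ∧ κ ≤ SIG} ∧
        B0 = {p : Submodule F V | finrank F p = 1 ∧ ∃ κ ∈ K1, p ≤ κ ∧ ¬ p ≤ sig} ∧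
        Bn = {H : Submodule F V | finrank F H = 2 * k + 1 ∧ ∃ κ ∈ K2, κ ≤ H ∧ ¬ SIG ≤ H} := by
  obtain ⟨m, U, ht, hU⟩ := bs_tight hk hV hB heq
  have hB0n : B0.Finite := Set.toFinite B0
  have hdis := bs_span hk hV ht hB0n.toFinset (by simp) U hU
  obtain ⟨SIG, hle, hcompl⟩ := (disjoint_iff.2 hdis).exists_isCompl
  have hSd := Submodule.finrank_add_eq_of_isCompl hcompl
  have hUd := hU.dim
  have hS : finrank F SIG = k + 2 := by omega
  have hpS : ∀ p ∈ B0, p ≤ SIG := by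
    intro p hp
    refine le_trans ?_ hle
    exact Finset.le_sup (f := id) (by simpa using hp)
  have hpH : ∀ p ∈ B0, ∀ H ∈ Bn, ¬ p ≤ H := fun p hp => (bs_good_move hV ht hU hp).1
  obtain ⟨x, hx⟩ := ht.ne
  have hSH : ∀ H ∈ Bn, ¬ SIG ≤ H := fun H hH h => hpH x hx H hH ((hpS x hx).trans h)
  have hdim : ∀ H ∈ Bn, finrank F (H ⊓ SIG : Submodule F V) = k + 1 := by
    intro H hH
    have := bs_inf_hyp H SIG (by rw [hB.hyp H hH]; omega) (hSH H hH)
    omega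
  have hne : (bsThru Bn U).Nonempty := by
    rw [← Set.ncard_pos, hU.thru]
    exact ht.mpos
  obtain ⟨H1, hH1⟩ := hne
  have hrep : ∀ H ∈ Bn, ∃ Hj ∈ bsThru Bn U, H ⊓ SIG = Hj ⊓ SIG := by
    intro H hH
    obtain ⟨Hj, hHj, hT⟩ := bs_cover ((H ⊓ SIG) ⊔ U) (bsThru Bn U) (by rw [hU.thru]; exact ht.mle)
      (by
        intro v hv
        by_cases hvU : v ∈ U
        · exact ⟨H1, hH1, hH1.2 hvU⟩
        have hW := bs_finrank_sup_span U hvU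
        have hvW : v ∈ U ⊔ Submodule.span F {v} :=
          Submodule.mem_sup_right (Submodule.mem_span_singleton_self _)
        rcases hB.blk _ (by rw [hW, hUd]) with ⟨p, hp, hpW⟩ | ⟨H', hH', hWH⟩
        · exfalso
          have h1 : p ≤ (H ⊓ SIG) ⊔ U := by
            refine hpW.trans (sup_le le_sup_right ?_)
            rwa [Submodule.span_singleton_le_iff_mem]
          have h2 : ((H ⊓ SIG) ⊔ U) ⊓ SIG = H ⊓ SIG := by
            rw [sup_inf_assoc_of_le U inf_le_right, inf_comm U, hcompl.inf_eq_bot, sup_bot_eq]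
          exact hpH p hp H hH ((h2 ▸ le_inf h1 (hpS p hp)).trans inf_le_left)
        · exact ⟨H', ⟨hH', le_sup_left.trans hWH⟩, hWH hvW⟩)
    refine ⟨Hj, hHj, ?_⟩
    apply Submodule.eq_of_le_of_finrank_le
    · exact le_inf (le_sup_left.trans hT) inf_le_right
    · rw [hdim H hH, hdim Hj hHj.1]
  have hA := (bs_A2 hV hB U hUd hU.skew (by rw [hU.thru]; exact ht.b0.le)).2
  obtain ⟨sig, hs, hsS, hsT⟩ : ∃ sig : Submodule F V, finrank F sig = k ∧ sig ≤ SIG ∧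
      ∀ H ∈ bsThru Bn U, sig ≤ H := by
    by_cases h2 : ∃ H2 ∈ bsThru Bn U, H1 ≠ H2
    · obtain ⟨H2, hH2, hne⟩ := h2
      have h3 := Submodule.finrank_sup_add_finrank_inf_eq (H1 ⊓ SIG) (H2 ⊓ SIG)
      have h4 : finrank F ((H1 ⊓ SIG) ⊔ (H2 ⊓ SIG) : Submodule F V) ≤ finrank F SIG :=
        Submodule.finrank_mono (sup_le inf_le_right inf_le_right)
      have h5 := hdim H1 hH1.1
      have h6 := hdim H2 hH2.1
      obtain ⟨sig, h7, h8⟩ := bs_exists_le_finrank ((H1 ⊓ SIG) ⊓ (H2 ⊓ SIG)) k (by omega)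
      refine ⟨sig, h8, (h7.trans inf_le_left).trans inf_le_right, fun H hH => ?_⟩
      exact le_trans (h7.trans (inf_le_inf inf_le_left inf_le_left)) (hA H1 hH1 H2 hH2 H hH hne)
    · push Not at h2
      obtain ⟨sig, h7, h8⟩ := bs_exists_le_finrank (H1 ⊓ SIG) k (by rw [hdim H1 hH1.1]; omega)
      refine ⟨sig, h8, h7.trans inf_le_right, fun H hH => ?_⟩
      rw [← h2 H hH]
      exact h7.trans inf_le_left
  have hsH : ∀ H ∈ Bn, sig ≤ H := by
    intro H hH
    obtain ⟨Hj, hHj, he⟩ := hrep H hH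
    have : sig ≤ H ⊓ SIG := by
      rw [he]
      exact le_inf (hsT Hj hHj) hsS
    exact this.trans inf_le_left
  set 𝒦 : Set (Submodule F V) := {κ : Submodule F V | finrank F κ = k + 1 ∧ sig ≤ κ ∧ κ ≤ SIG}
    with h𝒦
  set K2 : Set (Submodule F V) := (fun H => H ⊓ SIG) '' Bn with hK2
  have hsub : K2 ⊆ 𝒦 := by
    rintro κ ⟨H, hH, rfl⟩
    exact ⟨hdim H hH, le_inf (hsH H hH) hsS, inf_le_right⟩
  have hdj : Disjoint (𝒦 \ K2) K2 := Set.disjoint_sdiff_left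
  have hun : 𝒦 \ K2 ∪ K2 = 𝒦 := Set.sdiff_union_of_subset hsub
  have hcount := bs_count hV SIG sig (𝒦 \ K2) K2 hS hs hsS hdj hun
  have hκ : ∀ p ∈ B0, ¬ p ≤ sig ∧ sig ⊔ p ∈ 𝒦 \ K2 := by
    intro p hp
    have hps : ¬ p ≤ sig := fun h => hpH p hp H1 hH1.1 (h.trans (hsH H1 hH1.1))
    refine ⟨hps, ⟨?_, le_sup_left, sup_le hsS (hpS p hp)⟩, ?_⟩
    · rw [bs_finrank_sup_pt sig p (hB.pt p hp) hps, hs]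
    · rintro ⟨H, hH, he⟩
      have he' : H ⊓ SIG = sig ⊔ p := he
      have : p ≤ H ⊓ SIG := by
        rw [he']
        exact le_sup_right
      exact hpH p hp H hH (this.trans inf_le_left)
  have s0 : B0 ⊆ {p : Submodule F V | finrank F p = 1 ∧ ∃ κ ∈ 𝒦 \ K2, p ≤ κ ∧ ¬ p ≤ sig} :=
    fun p hp => ⟨hB.pt p hp, sig ⊔ p, (hκ p hp).2, le_sup_right, (hκ p hp).1⟩
  have sn : Bn ⊆ {H : Submodule F V | finrank F H = 2 * k + 1 ∧ ∃ κ ∈ K2, κ ≤ H ∧ ¬ SIG ≤ H} :=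
    fun H hH => ⟨hB.hyp H hH, H ⊓ SIG, ⟨H, hH, rfl⟩, inf_le_left, hSH H hH⟩
  have l0 := Set.ncard_le_ncard s0
  have ln := Set.ncard_le_ncard sn
  refine ⟨SIG, sig, 𝒦 \ K2, K2, hS, hs, ?_, ⟨_, (hκ x hx).2⟩, ⟨_, H1, hH1.1, rfl⟩, hdj, hun,
    Set.eq_of_subset_of_ncard_le s0 (by omega), Set.eq_of_subset_of_ncard_le sn (by omega)⟩
  refine lt_of_le_of_ne hsS ?_
  rintro rfl
  omega

end BlockingHelpers


/-- Let `B = B0 ∪ Bn` be a blocking set of points and hyperplanes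
with respect to `k`-spaces in `PG(2k+1,q)`.  Then `|B| ≥ (q+1)·q^k`, with equality
iff `B` arises from Construction 1: there are a `(k+1)`-space `SIG`, a `(k-1)`-space
`sig ⊂ SIG` and nonempty sets `K1, K2` partitioning the `k`-spaces between `sig` and
`SIG` such that `B0` is the set of points in some `κ ∈ K1` but not in `sig`, and `Bn`
is the set of hyperplanes through some `κ ∈ K2` not containing `SIG`. -/
theorem stmt_5 {F : Type} [Field F] [Fintype F] (k : ℕ) (hk : 1 ≤ k)
    (B0 Bn : Set (Submodule F (Fin (2 * k + 2) → F)))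
    (hB0 : ∀ p ∈ B0, Module.finrank F p = 1)
    (hBn : ∀ H ∈ Bn, Module.finrank F H = 2 * k + 1)
    (hblock : ∀ W : Submodule F (Fin (2 * k + 2) → F), Module.finrank F W = k + 1 →
      (∃ p ∈ B0, p ≤ W) ∨ (∃ H ∈ Bn, W ≤ H)) :
    (Fintype.card F + 1) * (Fintype.card F) ^ k ≤ B0.ncard + Bn.ncard ∧
    (B0.ncard + Bn.ncard = (Fintype.card F + 1) * (Fintype.card F) ^ k ↔
      ∃ (SIG sig : Submodule F (Fin (2 * k + 2) → F)) (K1 K2 : Set (Submodule F (Fin (2 * k + 2) → F))),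
        Module.finrank F SIG = k + 2 ∧
        Module.finrank F sig = k ∧
        sig < SIG ∧
        K1.Nonempty ∧ K2.Nonempty ∧ Disjoint K1 K2 ∧
        K1 ∪ K2 = {κ : Submodule F (Fin (2 * k + 2) → F) | Module.finrank F κ = k + 1 ∧ sig ≤ κ ∧ κ ≤ SIG} ∧
        B0 = {p : Submodule F (Fin (2 * k + 2) → F) | Module.finrank F p = 1 ∧ ∃ κ ∈ K1, p ≤ κ ∧ ¬ p ≤ sig} ∧
        Bn = {H : Submodule F (Fin (2 * k + 2) → F) | Module.finrank F H = 2 * k + 1 ∧ ∃ κ ∈ K2, κ ≤ H ∧ ¬ SIG ≤ H}) := by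

  have hV : Module.finrank F (Fin (2 * k + 2) → F) = 2 * k + 2 := by simp
  have hB : BsBlk k B0 Bn := ⟨hB0, hBn, hblock⟩
  refine ⟨bs_bound hk hV hB, bs_forward hk hV hB, ?_⟩
  rintro ⟨SIG, sig, K1, K2, h1, h2, h3, -, -, h4, h5, h6, h7⟩
  rw [h6, h7]
  exact bs_count hV SIG sig K1 K2 h1 h2 h3.le h4 h5
end

section
/- Let q be a prime power and let d, s, n be integers with d ≥ 0 and d-1 ≤ s < n. Let B be a set of hyperplanes in PG(n,q) with |B| ≤ θ_d. Then the number of s-spaces of PG(n,q) that are not contained in any element of B is at least q^{(n-s)(d+1)}·C(n-d, n-s)_q + (θ_d - |B|)·q^{(n-s-1)d}·C(n-d, n-s-1)_q, where C(a,b)_q denotes the Gaussian binomial coefficient. -/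
/-- The Gaussian binomial coefficient `C(a,b)_q`, where `q = Fintype.card F`:
the number of `b`-dimensional linear subspaces of `F^a`; it equals
`∏ i in [1..b], (q^(a-b+i)-1)/(q^i-1)`, and is `0` unless `0 ≤ b ≤ a`. -/
noncomputable def gauss (F : Type) [Field F] [Fintype F] (a b : ℕ) : ℕ :=
  Nat.card {W : Submodule F (Fin a → F) // Module.finrank F W = b}

set_option linter.unusedSectionVars false

noncomputable section Metsch
open Finset Module
open scoped Classical

variable {F V : Type} [Field F] [Fintype F] [AddCommGroup V] [Module F V] [Finite V]

/-- subspaces of rank `k` above `S` -/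
def Up (S : Submodule F V) (k : ℕ) : Finset (Submodule F V) :=
  (Set.toFinite {W : Submodule F V | S ≤ W ∧ finrank F W = finrank F S + k}).toFinset

lemma mem_Up {S W : Submodule F V} {k : ℕ} :
    W ∈ Up S k ↔ S ≤ W ∧ finrank F W = finrank F S + k := by
  simp [Up]

def nr (q c : ℕ) : ℕ := ∑ i ∈ range c, q ^ i

lemma nr_succ (q c : ℕ) : nr q (c + 1) = nr q c + q ^ c := by
  simp [nr, sum_range_succ]

lemma nr_succ' (q c : ℕ) : nr q (c + 1) = q * nr q c + 1 := by
  simp [nr, sum_range_succ', mul_sum, pow_succ']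

lemma nr_zero (q : ℕ) : nr q 0 = 0 := by simp [nr]
lemma nr_one (q : ℕ) : nr q 1 = 1 := by simp [nr]
lemma nr_two (q : ℕ) : nr q 2 = q + 1 := by simp [nr_succ, nr_zero]; ring

lemma nr_mul (q c : ℕ) (hq : 1 ≤ q) : nr q c * (q - 1) = q ^ c - 1 := by
  obtain ⟨r, rfl⟩ : ∃ r, q = r + 1 := ⟨q - 1, by omega⟩
  have : nr (r + 1) c * r + 1 = (r + 1) ^ c := by
    induction c with
    | zero => simp [nr]
    | succ c ih => rw [nr_succ, pow_succ, ← ih]; ring_nf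
  rw [← this]; simp

lemma eq_of_rank {A B : Submodule F V} (h : A ≤ B) (hr : finrank F B ≤ finrank F A) : A = B :=
  Submodule.eq_of_le_of_finrank_le h hr

lemma rank_sup_pt {S P X : Submodule F V} (hP : P ∈ Up S 1) (hX : S ≤ X) (hPX : ¬ P ≤ X) :
    finrank F (X ⊔ P : Submodule F V) = finrank F X + 1 := by
  rw [mem_Up] at hP
  have h1 := Submodule.finrank_sup_add_finrank_inf_eq X P
  have h2 : S ≤ X ⊓ P := le_inf hX hP.1
  have h3 : X ⊓ P < P := lt_of_le_of_ne inf_le_right (fun h => hPX (h ▸ inf_le_left))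
  have h4 := Submodule.finrank_lt_finrank_of_lt h3
  have h5 := Submodule.finrank_mono h2
  omega

lemma not_le_pt {S P Q : Submodule F V} (hP : P ∈ Up S 1) (hQ : Q ∈ Up S 1) (h : P ≠ Q) :
    ¬ P ≤ Q := by
  intro hle
  rw [mem_Up] at hP hQ
  exact h (eq_of_rank hle (by omega))

lemma rank_sup_two {S P Q : Submodule F V} (hP : P ∈ Up S 1) (hQ : Q ∈ Up S 1) (h : P ≠ Q) :
    P ⊔ Q ∈ Up S 2 := by
  have := rank_sup_pt hQ (mem_Up.1 hP).1 (not_le_pt hQ hP h.symm)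
  rw [mem_Up]
  refine ⟨le_trans (mem_Up.1 hP).1 le_sup_left, ?_⟩
  rw [this, (mem_Up.1 hP).2]

lemma sup_eq_line {S P Q l : Submodule F V} (hP : P ∈ Up S 1) (hQ : Q ∈ Up S 1) (h : P ≠ Q)
    (hl : l ∈ Up S 2) (hPl : P ≤ l) (hQl : Q ≤ l) : P ⊔ Q = l := by
  apply eq_of_rank (sup_le hPl hQl)
  rw [(mem_Up.1 hl).2, (mem_Up.1 (rank_sup_two hP hQ h)).2]

lemma card_pts {S Z : Submodule F V} {c : ℕ} (hZ : Z ∈ Up S c) :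
    ((Up S 1).filter (· ≤ Z)).card = nr (Fintype.card F) c := by
  have : Fintype V := Fintype.ofFinite V
  obtain ⟨hSZ, hr⟩ := mem_Up.1 hZ
  set q := Fintype.card F with hq
  have hq2 : 2 ≤ q := Fintype.one_lt_card
  let vec : Submodule F V → Finset V := fun X => univ.filter (· ∈ X)
  have hvec : ∀ X, (vec X).card = q ^ finrank F X := by
    intro X
    have := Module.card_eq_pow_finrank (K := F) (V := X)
    rw [← this, Fintype.card_subtype]
    
  have hsub : ∀ {X Y : Submodule F V}, X ≤ Y → vec X ⊆ vec Y := by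
    intro X Y h v hv
    simp [vec] at hv ⊢; exact h hv
  have key : (vec Z \ vec S).card = ∑ P ∈ (Up S 1).filter (· ≤ Z), (vec P \ vec S).card := by
    rw [← card_biUnion]
    · congr 1
      ext v
      simp only [mem_sdiff, mem_biUnion, mem_filter, vec, mem_univ, true_and]
      constructor
      · rintro ⟨hv, hvS⟩
        refine ⟨S ⊔ F ∙ v, ⟨?_, ?_⟩, ?_, hvS⟩
        · rw [mem_Up]
          refine ⟨le_sup_left, ?_⟩
          have h1 := Submodule.finrank_sup_add_finrank_inf_eq S (F ∙ v)
          have hv0 : v ≠ 0 := fun h => hvS (h ▸ S.zero_mem)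
          have h2 : S ⊓ (F ∙ v) = ⊥ := by
            rw [← disjoint_iff]
            exact (Submodule.disjoint_span_singleton' hv0).2 hvS
          rw [h2, finrank_span_singleton hv0] at h1
          simpa using h1
        · exact sup_le hSZ ((Submodule.span_singleton_le_iff_mem _ _).2 hv)
        · exact Submodule.mem_sup_right (Submodule.mem_span_singleton_self v)
      · rintro ⟨P, ⟨hP, hPZ⟩, hv, hvS⟩
        exact ⟨hPZ hv, hvS⟩
    · intro P hP Q hQ hne
      simp only [coe_filter, Set.mem_ofPred_eq] at hP hQ
      rw [Function.onFun, Finset.disjoint_left]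
      intro v hv hv'
      simp only [mem_sdiff, mem_filter, vec, mem_univ, true_and] at hv hv'
      have h1 := Submodule.finrank_sup_add_finrank_inf_eq P Q
      have h2 := (mem_Up.1 (rank_sup_two hP.1 hQ.1 hne)).2
      have h3 := (mem_Up.1 hP.1)
      have h4 := (mem_Up.1 hQ.1)
      have h5 : S = P ⊓ Q := eq_of_rank (le_inf h3.1 h4.1) (by omega)
      exact hv.2 (h5 ▸ ⟨hv.1, hv'.1⟩)
  have h2 : ∀ P ∈ (Up S 1).filter (· ≤ Z), (vec P \ vec S).card = q ^ finrank F S * (q - 1) := by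
    intro P hP
    have hP := (mem_Up.1 (mem_filter.1 hP).1)
    rw [card_sdiff_of_subset (hsub hP.1), hvec, hvec, hP.2, pow_succ, Nat.mul_sub, mul_one]
  rw [sum_congr rfl h2, sum_const, card_sdiff_of_subset (hsub hSZ), hvec, hvec, hr, smul_eq_mul,
    pow_add] at key
  have h3 : q ^ finrank F S * (q ^ c - 1) = q ^ finrank F S * q ^ c - q ^ finrank F S := by
    rw [Nat.mul_sub, mul_one]
  rw [← h3, ← nr_mul q c (by omega)] at key
  have hpos : 0 < q ^ finrank F S * (q - 1) := Nat.mul_pos (by positivity) (by omega)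
  apply Nat.eq_of_mul_eq_mul_right hpos
  rw [← key]; ring

/-- number of members of `B` below `X` -/
def mu (B : Finset (Submodule F V)) (X : Submodule F V) : ℕ := (B.filter (· ≤ X)).card

/-- projection from `P` -/
def proj (B : Finset (Submodule F V)) (P : Submodule F V) : Finset (Submodule F V) :=
  B.image (· ⊔ P)

/-- total excess over lines -/
def Wt (S : Submodule F V) (B : Finset (Submodule F V)) : ℕ := ∑ l ∈ Up S 2, (mu B l - 1)

/-- loss of the projection -/
def cc (B : Finset (Submodule F V)) (P : Submodule F V) : ℕ := B.card - (proj B P).card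

/-- total loss -/
def TT (S : Submodule F V) (B : Finset (Submodule F V)) : ℕ := ∑ P ∈ Up S 1 \ B, cc B P

/-- excess over the lines missing `P` which span `E` with `P` -/
def Wp (S : Submodule F V) (B : Finset (Submodule F V)) (P E : Submodule F V) : ℕ :=
  ∑ l ∈ ((Up S 2).filter (fun l => ¬ P ≤ l)).filter (fun l => l ⊔ P = E), (mu B l - 1)

lemma Up_trans {S P : Submodule F V} {j : ℕ} (hP : P ∈ Up S j) {k : ℕ} {X : Submodule F V} :
    X ∈ Up P k ↔ X ∈ Up S (j + k) ∧ P ≤ X := by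
  simp only [mem_Up] at *
  constructor
  · rintro ⟨h1, h2⟩
    exact ⟨⟨hP.1.trans h1, by omega⟩, h1⟩
  · rintro ⟨⟨h1, h2⟩, h3⟩
    exact ⟨h3, by omega⟩

lemma sup_mem {S P Q : Submodule F V} (hP : P ∈ Up S 1) (hQ : Q ∈ Up S 1) (h : P ≠ Q) :
    Q ⊔ P ∈ Up P 1 := by
  rw [Up_trans hP, sup_comm]
  exact ⟨rank_sup_two hP hQ h, le_sup_left⟩

lemma proj_sub {S P : Submodule F V} {B : Finset (Submodule F V)} (hB : B ⊆ Up S 1)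
    (hP : P ∈ Up S 1) (hPB : P ∉ B) : proj B P ⊆ Up P 1 := by
  intro x hx
  obtain ⟨Q, hQ, rfl⟩ := mem_image.1 hx
  exact sup_mem hP (hB hQ) (fun h => hPB (h ▸ hQ))

lemma mu_sum {S P X : Submodule F V} {B : Finset (Submodule F V)} (hB : B ⊆ Up S 1)
    (hP : P ∈ Up S 1) (hPB : P ∉ B) (hX : P ≤ X) :
    mu B X = ∑ x ∈ (proj B P).filter (· ≤ X), mu B x := by
  rw [mu, card_eq_sum_card_fiberwise (f := (· ⊔ P)) (t := (proj B P).filter (· ≤ X))]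
  · apply sum_congr rfl
    intro x hx
    rw [mu]
    congr 1
    ext Q
    simp only [mem_filter] at hx ⊢
    constructor
    · rintro ⟨⟨h1, h2⟩, h3⟩
      exact ⟨h1, h3 ▸ le_sup_left⟩
    · rintro ⟨h1, h2⟩
      refine ⟨⟨h1, h2.trans hx.2⟩, ?_⟩
      have h3 := mem_Up.1 (proj_sub hB hP hPB hx.1)
      have h4 := mem_Up.1 (sup_mem hP (hB h1) (fun h => hPB (h ▸ h1)))
      exact eq_of_rank (sup_le h2 h3.1) (by omega)
  · intro Q hQ
    simp only [coe_filter, Set.mem_ofPred_eq] at hQ ⊢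
    exact ⟨mem_image_of_mem _ hQ.1, sup_le hQ.2 hX⟩

lemma mu_pos {P x : Submodule F V} {B : Finset (Submodule F V)} (hx : x ∈ proj B P) :
    1 ≤ mu B x := by
  obtain ⟨Q, hQ, rfl⟩ := mem_image.1 hx
  exact card_pos.2 ⟨Q, mem_filter.2 ⟨hQ, le_sup_left⟩⟩

lemma mu_zero {S P x : Submodule F V} {B : Finset (Submodule F V)} (hB : B ⊆ Up S 1)
    (hP : P ∈ Up S 1) (hPB : P ∉ B) (hx : x ∈ Up P 1) (hx' : x ∉ proj B P) :
    mu B x = 0 := by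
  rw [mu, card_eq_zero, filter_eq_empty_iff]
  intro Q hQ hQx
  apply hx'
  have h3 := mem_Up.1 hx
  have h4 := mem_Up.1 (sup_mem hP (hB hQ) (fun h => hPB (h ▸ hQ)))
  have : Q ⊔ P = x := eq_of_rank (sup_le hQx h3.1) (by omega)
  exact this ▸ mem_image_of_mem _ hQ

lemma card_proj {S P : Submodule F V} {B : Finset (Submodule F V)} (hB : B ⊆ Up S 1)
    (hP : P ∈ Up S 1) (hPB : P ∉ B) :
    B.card = (proj B P).card + ∑ x ∈ proj B P, (mu B x - 1) := by
  have h := mu_sum hB hP hPB (X := ⊤) le_top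
  simp only [mu, le_top, filter_true] at h
  rw [h, card_eq_sum_ones, ← sum_add_distrib]
  apply sum_congr rfl
  intro x hx
  have := mu_pos hx
  simp only [mu] at this ⊢
  omega

lemma cc_eq {S P : Submodule F V} {B : Finset (Submodule F V)} (hB : B ⊆ Up S 1)
    (hP : P ∈ Up S 1) (hPB : P ∉ B) :
    cc B P = ∑ x ∈ proj B P, (mu B x - 1) := by
  have := card_proj hB hP hPB
  rw [cc]; omega

lemma cc_eq' {S P : Submodule F V} {B : Finset (Submodule F V)} (hB : B ⊆ Up S 1)
    (hP : P ∈ Up S 1) (hPB : P ∉ B) :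
    cc B P = ∑ x ∈ (Up S 2).filter (P ≤ ·), (mu B x - 1) := by
  rw [cc_eq hB hP hPB]
  apply sum_subset
  · intro x hx
    exact mem_filter.2 ((Up_trans hP).1 (proj_sub hB hP hPB hx))
  · intro x hx hx'
    simp [mu_zero hB hP hPB ((Up_trans hP).2 (mem_filter.1 hx)) hx']

lemma pair_sum {S : Submodule F V} {B : Finset (Submodule F V)} (hB : B ⊆ Up S 1)
    (g : Submodule F V → Submodule F V → ℤ) :
    ∑ l ∈ Up S 2, ∑ x ∈ B.filter (· ≤ l), ∑ z ∈ (B.filter (· ≤ l)).erase x, g x z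
      = ∑ x ∈ B, ∑ z ∈ B.erase x, g x z := by
  have h1 : ∀ l ∈ Up S 2, ∑ x ∈ B.filter (· ≤ l), ∑ z ∈ (B.filter (· ≤ l)).erase x, g x z
      = ∑ x ∈ B, ∑ z ∈ B.erase x, if x ≤ l ∧ z ≤ l then g x z else 0 := by
    intro l hl
    rw [sum_filter]
    apply sum_congr rfl
    intro x hx
    split_ifs with h
    · rw [← filter_erase, sum_filter]
      simp [h]
    · simp [h]
  rw [sum_congr rfl h1, sum_comm]
  apply sum_congr rfl
  intro x hx
  rw [sum_comm]
  apply sum_congr rfl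
  intro z hz
  obtain ⟨hzx, hz⟩ := mem_erase.1 hz
  rw [sum_eq_single (x ⊔ z)]
  · simp
  · intro l hl hne
    rw [if_neg]
    rintro ⟨h1, h2⟩
    exact hne (sup_eq_line (hB hx) (hB hz) hzx.symm hl h1 h2).symm
  · intro h
    exact absurd (rank_sup_two (hB hx) (hB hz) hzx.symm) h

lemma pair_count {S : Submodule F V} {B : Finset (Submodule F V)} (hB : B ⊆ Up S 1) :
    ∑ l ∈ Up S 2, ((mu B l : ℤ) * ((mu B l - 1 : ℕ) : ℤ)) = (B.card : ℤ) * (B.card - 1 : ℕ) := by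
  have h := pair_sum hB (fun _ _ => 1)
  have e : ∀ D : Finset (Submodule F V),
      (∑ x ∈ D, ∑ z ∈ D.erase x, (1 : ℤ)) = (D.card : ℤ) * (D.card - 1 : ℕ) := by
    intro D
    rw [sum_congr rfl (g := fun _ => ((D.card - 1 : ℕ) : ℤ))]
    · simp
    · intro x hx
      rw [← card_erase_of_mem hx]; simp
  simp only [e] at h
  exact h

lemma T_eq {S : Submodule F V} {B : Finset (Submodule F V)} (hB : B ⊆ Up S 1) :
    (TT S B : ℤ) = (Fintype.card F + 1) * Wt S B - (B.card : ℤ) * (B.card - 1 : ℕ) := by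
  rw [← pair_count hB, TT, Wt]
  have h1 : ∑ P ∈ Up S 1 \ B, cc B P
      = ∑ P ∈ Up S 1 \ B, ∑ x ∈ (Up S 2).filter (P ≤ ·), (mu B x - 1) :=
    sum_congr rfl (fun P hP => cc_eq' hB (mem_sdiff.1 hP).1 (mem_sdiff.1 hP).2)
  rw [h1]
  simp only [sum_filter]
  rw [sum_comm]
  push_cast
  rw [mul_sum, ← sum_sub_distrib]
  apply sum_congr rfl
  intro l hl
  have h2 := card_pts hl
  rw [nr_two] at h2
  have h3 : ((Up S 1 \ B).filter (· ≤ l)).card + mu B l = Fintype.card F + 1 := by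
    rw [← h2, mu, ← card_union_of_disjoint]
    · congr 1
      rw [← filter_union, sdiff_union_of_subset hB]
    · exact disjoint_filter_filter sdiff_disjoint
  rw [← sum_filter, sum_const, nsmul_eq_mul]
  have h4 : (((Up S 1 \ B).filter (· ≤ l)).card : ℤ) = Fintype.card F + 1 - mu B l := by
    have : ((((Up S 1 \ B).filter (· ≤ l)).card + mu B l : ℕ) : ℤ) = ((Fintype.card F + 1 : ℕ) : ℤ) := by
      rw [h3]
    push_cast at this; linarith
  rw [h4]; ring

lemma W_split {S P : Submodule F V} {B : Finset (Submodule F V)} (hB : B ⊆ Up S 1)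
    (hP : P ∈ Up S 1) (hPB : P ∉ B) :
    Wt S B = cc B P + ∑ E ∈ Up P 2, Wp S B P E := by
  rw [Wt, cc_eq' hB hP hPB, ← sum_filter_add_sum_filter_not (Up S 2) (P ≤ ·)]
  congr 1
  simp only [Wp]
  rw [sum_fiberwise_of_maps_to]
  intro l hl
  obtain ⟨hl, hPl⟩ := mem_filter.1 hl
  rw [Up_trans hP]
  refine ⟨?_, le_sup_right⟩
  have := rank_sup_pt hP (mem_Up.1 hl).1 hPl
  rw [mem_Up] at hl ⊢
  exact ⟨hl.1.trans le_sup_left, by omega⟩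

lemma planar_pairs {S P E x : Submodule F V} {B : Finset (Submodule F V)} (hB : B ⊆ Up S 1)
    (hP : P ∈ Up S 1) (hPB : P ∉ B) (hE : E ∈ Up P 2) (hx : x ∈ proj B P) (hxE : x ≤ E) :
    mu B x * (mu B E - mu B x) ≤ Wp S B P E := by
  have hxP := proj_sub hB hP hPB hx
  have hPx : P ≤ x := (mem_Up.1 hxP).1
  have hxS : x ∈ Up S 2 := ((Up_trans hP).1 hxP).1
  have hc : mu B E - mu B x = (B.filter (fun Q => Q ≤ E ∧ ¬ Q ≤ x)).card := by
    rw [mu, mu, ← card_sdiff_of_subset]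
    · congr 1
      ext Q
      simp only [mem_sdiff, mem_filter]; tauto
    · intro Q hQ
      simp only [mem_filter] at hQ ⊢
      exact ⟨hQ.1, hQ.2.trans hxE⟩
  rw [hc, mu, ← card_product, Wp]
  have hne : ∀ {Q1 Q2 : Submodule F V}, Q1 ≤ x → ¬ Q2 ≤ x → Q1 ≠ Q2 := by
    rintro Q1 Q2 h1 h2 rfl; exact h2 h1
  rw [card_eq_sum_card_fiberwise (f := fun p => p.1 ⊔ p.2)
    (t := ((Up S 2).filter (fun l => ¬ P ≤ l)).filter (fun l => l ⊔ P = E))]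
  · apply sum_le_sum
    intro l hl
    simp only [mem_filter] at hl
    rcases Finset.eq_empty_or_nonempty
      ((((B.filter (· ≤ x)) ×ˢ (B.filter (fun Q => Q ≤ E ∧ ¬ Q ≤ x)))).filter
        (fun p => p.1 ⊔ p.2 = l)) with h | ⟨⟨R1, R2⟩, hR⟩
    · rw [h]; simp
    · simp only [mem_filter, mem_product] at hR
      have huniq : ∀ Q1 ∈ B, Q1 ≤ x → Q1 ≤ l → Q1 = R1 := by
        intro Q1 hQ1 h1 h2
        by_contra hh
        have e1 := sup_eq_line (hB hQ1) (hB hR.1.1.1) hh hxS h1 hR.1.1.2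
        have e2 := sup_eq_line (hB hQ1) (hB hR.1.1.1) hh hl.1.1 h2 (hR.2 ▸ le_sup_left)
        apply hl.1.2
        rw [← e2, e1]; exact hPx
      have hRl : R1 ∈ B.filter (· ≤ l) := mem_filter.2 ⟨hR.1.1.1, hR.2 ▸ le_sup_left⟩
      rw [mu, ← card_erase_of_mem hRl]
      apply card_le_card_of_injOn (fun p => p.2)
      · rintro ⟨Q1, Q2⟩ hQ
        simp only [coe_filter, mem_product, mem_filter, Set.mem_ofPred_eq] at hQ
        simp only [coe_erase, Set.mem_sdiff, coe_filter, Set.mem_ofPred_eq, Set.mem_singleton_iff]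
        refine ⟨⟨hQ.1.2.1, hQ.2 ▸ le_sup_right⟩, fun h => hQ.1.2.2.2 (h ▸ hR.1.1.2)⟩
      · rintro ⟨Q1, Q2⟩ hQ ⟨Q3, Q4⟩ hQ' h
        simp only [coe_filter, mem_product, mem_filter, Set.mem_ofPred_eq] at hQ hQ' h
        rw [huniq Q1 hQ.1.1.1 hQ.1.1.2 (hQ.2 ▸ le_sup_left),
          huniq Q3 hQ'.1.1.1 hQ'.1.1.2 (hQ'.2 ▸ le_sup_left), h]
  · rintro ⟨Q1, Q2⟩ hQ
    simp only [coe_product, Set.mem_prod, coe_filter, Set.mem_ofPred_eq] at hQ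
    obtain ⟨⟨h1, h1x⟩, h2, h2E, h2x⟩ := hQ
    simp only [coe_filter, mem_filter, Set.mem_ofPred_eq]
    have hl := rank_sup_two (hB h1) (hB h2) (hne h1x h2x)
    have e1 : Q1 ⊔ P = x :=
      sup_eq_line (hB h1) hP (fun h => hPB (h ▸ h1)) hxS h1x hPx
    have hr := rank_sup_pt (hB h2) (mem_Up.1 hxS).1 h2x
    have e2 : x ⊔ Q2 = E := by
      apply eq_of_rank (sup_le hxE h2E)
      have := (mem_Up.1 hE).2
      have := (mem_Up.1 hxP).2
      omega
    have e3 : Q1 ⊔ Q2 ⊔ P = E := by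
      rw [sup_right_comm, e1, e2]
    refine ⟨⟨hl, fun h => ?_⟩, e3⟩
    rw [sup_eq_left.2 h] at e3
    have a1 := mem_Up.1 hE
    have a2 := mem_Up.1 hP
    have a3 := mem_Up.1 hl
    rw [e3] at a3
    omega

lemma sum_sq_le {ι : Type} (D : Finset ι) (y : ι → ℤ) (hy : ∀ x ∈ D, 0 ≤ y x) :
    ∑ x ∈ D, y x ^ 2 ≤ (∑ x ∈ D, y x) ^ 2 := by
  rw [sq (∑ x ∈ D, y x), sum_mul]
  apply sum_le_sum
  intro x hx
  rw [sq]
  exact mul_le_mul_of_nonneg_left (single_le_sum hy hx) (hy x hx)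

lemma planar_ineq {ι : Type} (D : Finset ι) (m : ι → ℤ) (q W : ℤ) (hq : 0 ≤ q)
    (hm : ∀ x ∈ D, 1 ≤ m x) (ht : (D.card : ℤ) ≤ q + 1) (hW0 : 0 ≤ W)
    (h : ∀ x ∈ D, m x * (∑ z ∈ D, m z - m x) ≤ W) :
    ((D.card - 1 : ℕ) : ℤ) +
      ∑ x ∈ D, ∑ z ∈ D.erase x, (m x - 1) * (m z - (q + 1) * (m z - 1)) ≤ W := by
  rcases D.eq_empty_or_nonempty with rfl | ⟨x0, hx0⟩
  · simpa using hW0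
  have hcard : 1 ≤ D.card := card_pos.2 ⟨x0, hx0⟩
  set t : ℤ := (D.card : ℤ) with htdef
  have ht1 : ((D.card - 1 : ℕ) : ℤ) = t - 1 := by push_cast [hcard]; rfl
  rw [ht1]
  set y : ι → ℤ := fun x => m x - 1 with hy
  have hy0 : ∀ x ∈ D, 0 ≤ y x := fun x hx => by have := hm x hx; simp only [hy]; linarith
  set C := ∑ x ∈ D, y x with hC
  have hM : ∑ z ∈ D, m z = t + C := by
    simp only [hC, hy, sum_sub_distrib, sum_const, nsmul_eq_mul, mul_one]
    rw [htdef]; ring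
  have hsum : ∑ x ∈ D, ∑ z ∈ D.erase x, (m x - 1) * (m z - (q + 1) * (m z - 1))
      = C * (t - 1) - q * C ^ 2 + q * ∑ x ∈ D, y x ^ 2 := by
    have : ∀ x ∈ D, ∑ z ∈ D.erase x, (m x - 1) * (m z - (q + 1) * (m z - 1))
        = y x * (t - 1 - q * C) + q * y x ^ 2 := by
      intro x hx
      rw [← mul_sum, sum_erase_eq_sub hx, sum_sub_distrib, ← mul_sum, hM]
      have : ∑ i ∈ D, (m i - 1) = C := rfl
      rw [this]
      simp only [hy]; ring
    rw [sum_congr rfl this, sum_add_distrib, ← sum_mul, ← mul_sum, ← hC]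
    ring
  rw [hsum]
  have hmy : ∀ x, m x = 1 + y x := fun x => by simp [hy]
  by_cases hall : ∀ x ∈ D, y x = 0
  · have hC0 : C = 0 := sum_eq_zero hall
    have hS0 : ∑ x ∈ D, y x ^ 2 = 0 := sum_eq_zero (fun x hx => by rw [hall x hx]; simp)
    have := h x0 hx0
    rw [hM, hmy, hall x0 hx0, hC0] at this
    rw [hC0, hS0]; linarith
  · push Not at hall
    obtain ⟨x, hx, hne⟩ := hall
    have hyx : 1 ≤ y x := by have := hy0 x hx; omega
    have h1 := h x hx
    rw [hM, hmy] at h1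
    have h2 : ∑ z ∈ D, y z ^ 2 ≤ y x ^ 2 + (C - y x) ^ 2 := by
      rw [← add_sum_erase D _ hx]
      have := sum_sq_le (D.erase x) y (fun z hz => hy0 z (mem_of_mem_erase hz))
      rw [sum_erase_eq_sub (f := y) hx, ← hC] at this
      linarith
    have h3 : y x ≤ C := single_le_sum hy0 hx
    have h4 := mul_le_mul_of_nonneg_left h2 hq
    have h5 : 0 ≤ (C - y x) * (1 + y x + 2 * q * y x - (t - 1)) := by
      apply mul_nonneg (by linarith)
      have : q * 1 ≤ q * y x := mul_le_mul_of_nonneg_left hyx hq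
      nlinarith
    nlinarith

lemma mu_le {P E : Submodule F V} {D : Finset (Submodule F V)} (hD : D ⊆ Up P 1)
    (hE : E ∈ Up P 2) : mu D E ≤ Fintype.card F + 1 := by
  rw [← nr_two, ← card_pts hE, mu]
  exact card_le_card (filter_subset_filter _ hD)

lemma W_step {S P : Submodule F V} {B : Finset (Submodule F V)} (hB : B ⊆ Up S 1)
    (hP : P ∈ Up S 1) (hPB : P ∉ B) :
    (cc B P : ℤ) + Wt P (proj B P) + ∑ x ∈ proj B P, ((mu B x : ℤ) - 1) *
      ((B.card - mu B x) - (Fintype.card F + 1) * (cc B P - ((mu B x : ℤ) - 1))) ≤ Wt S B := by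
  set D := proj B P with hDdef
  have hD : D ⊆ Up P 1 := proj_sub hB hP hPB
  have hplane : ∀ E ∈ Up P 2, ((mu D E - 1 : ℕ) : ℤ) +
      ∑ x ∈ D.filter (· ≤ E), ∑ z ∈ (D.filter (· ≤ E)).erase x, ((mu B x : ℤ) - 1) *
        (mu B z - (Fintype.card F + 1) * ((mu B z : ℤ) - 1)) ≤ (Wp S B P E : ℤ) := by
    intro E hE
    apply planar_ineq (D.filter (· ≤ E)) (fun x => (mu B x : ℤ)) (Fintype.card F) (Wp S B P E)
      (by positivity)
    · intro x hx
      have := mu_pos (mem_filter.1 hx).1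
      exact_mod_cast this
    · have := mu_le hD hE
      rw [mu] at this
      exact_mod_cast this
    · positivity
    · intro x hx
      obtain ⟨hx, hxE⟩ := mem_filter.1 hx
      have h1 := planar_pairs hB hP hPB hE hx hxE
      have h2 := mu_sum hB hP hPB (mem_Up.1 hE).1
      have h3 : mu B x ≤ mu B E :=
        card_le_card (fun Q hQ => by
          simp only [mem_filter] at hQ ⊢; exact ⟨hQ.1, hQ.2.trans hxE⟩)
      rw [← Nat.cast_sum, ← h2, ← Nat.cast_sub h3]
      exact_mod_cast h1
  have hs := sum_le_sum hplane
  rw [sum_add_distrib, pair_sum hD (fun x z => ((mu B x : ℤ) - 1) *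
        (mu B z - (Fintype.card F + 1) * ((mu B z : ℤ) - 1)))] at hs
  have hw := W_split hB hP hPB
  have hb : (B.card : ℤ) = ∑ x ∈ D, (mu B x : ℤ) := by
    have h := mu_sum hB hP hPB (X := ⊤) le_top
    simp only [mu, le_top, filter_true] at h
    simp only [mu]
    rw [h]; push_cast; rfl
  have hc : (cc B P : ℤ) = ∑ x ∈ D, ((mu B x : ℤ) - 1) := by
    rw [cc_eq hB hP hPB]
    push_cast
    apply sum_congr rfl
    intro x hx
    have := mu_pos hx
    push_cast [this]; rfl
  have e : ∑ x ∈ D, ∑ z ∈ D.erase x, ((mu B x : ℤ) - 1) *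
        (mu B z - (Fintype.card F + 1) * ((mu B z : ℤ) - 1)) =
      ∑ x ∈ D, ((mu B x : ℤ) - 1) *
      ((B.card - mu B x) - (Fintype.card F + 1) * (cc B P - ((mu B x : ℤ) - 1))) := by
    apply sum_congr rfl
    intro x hx
    rw [← mul_sum, sum_sub_distrib, ← mul_sum, sum_erase_eq_sub hx, sum_erase_eq_sub hx, ← hb, ← hc]
  rw [e] at hs
  have e2 : ∑ E ∈ Up P 2, ((mu D E - 1 : ℕ) : ℤ) = Wt P D := by
    rw [Wt]; push_cast; rfl
  rw [e2] at hs
  rw [hw]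
  push_cast
  linarith

lemma card_Up_one {S : Submodule F V} {c : ℕ} (h : finrank F V = finrank F S + c) :
    (Up S 1).card = nr (Fintype.card F) c := by
  rw [← card_pts (S := S) (Z := ⊤) (c := c)]
  · simp
  · rw [mem_Up]; simp [h]

lemma cast_mul_pred (b : ℕ) : (b : ℤ) * ((b - 1 : ℕ) : ℤ) = b * (b - 1) := by
  cases b <;> simp

lemma card_proj_le (B : Finset (Submodule F V)) (P : Submodule F V) :
    (proj B P).card ≤ B.card := card_image_le

lemma cc_cast (B : Finset (Submodule F V)) (P : Submodule F V) :
    (cc B P : ℤ) = B.card - (proj B P).card := by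
  rw [cc]; push_cast [card_proj_le B P]; rfl

lemma nr_mono (q : ℕ) {a b : ℕ} (h : a ≤ b) : nr q a ≤ nr q b := by
  exact sum_le_sum_of_subset (range_subset_range.2 h)

lemma T_lemma (d n : ℕ) (hdn : d ≤ n) : ∀ (S : Submodule F V) (B : Finset (Submodule F V)),
    finrank F V = finrank F S + (n + 1) → B ⊆ Up S 1 →
    ((B.card : ℤ) - nr (Fintype.card F) d) * (nr (Fintype.card F) (d + 1) - B.card) ≤ TT S B := by
  induction n, hdn using Nat.le_induction with
  | base =>
    intro S B hV hB
    have h1 : ∀ P ∈ Up S 1 \ B, (B.card : ℤ) - nr (Fintype.card F) d ≤ cc B P := by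
      intro P hP
      obtain ⟨hP, hPB⟩ := mem_sdiff.1 hP
      have h2 := card_le_card (proj_sub hB hP hPB)
      rw [card_Up_one (c := d)] at h2
      · rw [cc_cast]
        have : ((proj B P).card : ℤ) ≤ nr (Fintype.card F) d := by exact_mod_cast h2
        linarith
      · rw [hV, (mem_Up.1 hP).2]; ring
    have h2 := sum_le_sum h1
    rw [sum_const, card_sdiff_of_subset hB, card_Up_one hV, nsmul_eq_mul] at h2
    have h3 : B.card ≤ nr (Fintype.card F) (d + 1) := by
      rw [← card_Up_one hV]; exact card_le_card hB
    push_cast [h3] at h2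
    rw [TT]; push_cast; linarith
  | succ n hdn ih =>
    intro S B hV hB
    set q := Fintype.card F with hq
    by_cases hj : (B.card : ℤ) ≤ nr q d
    · by_cases he : (B.card : ℤ) ≤ nr q (d + 1)
      · refine le_trans (mul_nonpos_of_nonpos_of_nonneg (by linarith) (by linarith)) (by positivity)
      · have : (nr q d : ℤ) ≤ nr q (d + 1) := by exact_mod_cast nr_mono q (Nat.le_succ d)
        omega
    by_cases he : (nr q (d + 1) : ℤ) ≤ B.card
    · refine le_trans (mul_nonpos_of_nonneg_of_nonpos (by linarith) (by linarith)) (by positivity)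
    push Not at hj he
    have hs1 : (nr q (d + 1) : ℤ) = q * nr q d + 1 := by rw [nr_succ']; push_cast; rfl
    have hs2 : (nr q (d + 1) : ℤ) = nr q d + q ^ d := by rw [nr_succ]; push_cast; rfl
    have hq0 : (0 : ℤ) ≤ q := by positivity
    by_cases hex : ∃ P ∈ Up S 1 \ B, ((q : ℤ) + 1) * cc B P ≤ B.card - nr q d
    · obtain ⟨P, hP, hc⟩ := hex
      obtain ⟨hP, hPB⟩ := mem_sdiff.1 hP
      have hD := proj_sub hB hP hPB
      have h1 := ih P (proj B P) (by rw [hV, (mem_Up.1 hP).2]; ring) hD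
      rw [T_eq hD, cast_mul_pred] at h1
      rw [T_eq hB, cast_mul_pred]
      have h2 := W_step hB hP hPB
      have hcc : (cc B P : ℤ) = ∑ x ∈ proj B P, ((mu B x : ℤ) - 1) := by
        rw [cc_eq hB hP hPB]
        push_cast
        apply sum_congr rfl
        intro x hx
        have := mu_pos hx
        push_cast [this]; rfl
      have h3 : (cc B P : ℤ) * (nr q d - 1) ≤ ∑ x ∈ proj B P, ((mu B x : ℤ) - 1) *
        ((B.card - mu B x) - (q + 1) * (cc B P - ((mu B x : ℤ) - 1))) := by
        nth_rw 1 [hcc]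
        rw [sum_mul]
        apply sum_le_sum
        intro x hx
        have hmx : (1 : ℤ) ≤ mu B x := by exact_mod_cast mu_pos hx
        apply mul_le_mul_of_nonneg_left _ (by linarith)
        have : 0 ≤ (q : ℤ) * (mu B x - 1) := mul_nonneg hq0 (by linarith)
        nlinarith
      have hb' : ((proj B P).card : ℤ) = B.card - cc B P := by rw [cc_cast]; ring
      rw [hb'] at h1
      rw [← hq] at h1 h2 ⊢
      have h4 : (cc B P : ℤ) * nr q d + Wt P (proj B P) ≤ Wt S B := by linarith
      have h5 := mul_le_mul_of_nonneg_left h4 (show (0 : ℤ) ≤ q + 1 by positivity)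
      rw [hs1] at h1 ⊢
      nlinarith
    · push Not at hex
      have h1 : ∑ P ∈ Up S 1 \ B, ((B.card : ℤ) - nr q d) ≤ ∑ P ∈ Up S 1 \ B, ((q : ℤ) + 1) * cc B P :=
        sum_le_sum (fun P hP => (hex P hP).le)
      rw [← mul_sum, sum_const, card_sdiff_of_subset hB, nsmul_eq_mul, card_Up_one hV] at h1
      have h2 : (TT S B : ℤ) = ∑ P ∈ Up S 1 \ B, (cc B P : ℤ) := by rw [TT]; push_cast; rfl
      rw [← h2, Nat.cast_sub (by rw [← card_Up_one hV]; exact card_le_card hB)] at h1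
      have h3 : (nr q (d + 1 + 1) : ℤ) ≤ nr q (n + 1 + 1) := by
        exact_mod_cast nr_mono q (by omega)
      have h4 : (nr q (d + 1 + 1) : ℤ) = nr q (d + 1) + q * q ^ d := by
        rw [nr_succ]; push_cast; ring
      have h6 : ((nr q (d + 1) : ℤ) - B.card) ≤ q ^ d := by linarith
      have h7 := mul_le_mul_of_nonneg_left h6 hq0
      have h8 : ((q : ℤ) + 1) * (nr q (d + 1) - B.card) ≤ nr q (n + 1 + 1) - B.card := by linarith
      have h9 := mul_le_mul_of_nonneg_right h8 (show (0 : ℤ) ≤ B.card - nr q d by linarith)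
      have h10 : ((q : ℤ) + 1) * (((B.card : ℤ) - nr q d) * (nr q (d + 1) - B.card))
          ≤ (q + 1) * TT S B := by linarith
      exact le_of_mul_le_mul_left h10 (by positivity)

/-- Gaussian binomials through the Pascal recursion -/
def Cq (q : ℕ) : ℕ → ℕ → ℕ
  | _, 0 => 1
  | 0, _ + 1 => 0
  | m + 1, j + 1 => Cq q m j + q ^ (j + 1) * Cq q m (j + 1)

lemma Cq_zero (q m : ℕ) : Cq q m 0 = 1 := by cases m <;> rfl
lemma Cq_zero_succ (q j : ℕ) : Cq q 0 (j + 1) = 0 := rfl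
lemma Cq_succ (q m j : ℕ) :
    Cq q (m + 1) (j + 1) = Cq q m j + q ^ (j + 1) * Cq q m (j + 1) := rfl

lemma Cq_one (q m : ℕ) : Cq q m 1 = nr q m := by
  induction m with
  | zero => simp [Cq_zero_succ, nr_zero]
  | succ m ih => rw [Cq_succ, Cq_zero, zero_add, ih, nr_succ']; ring

lemma absorb (q m j : ℕ) : nr q (m + 1) * Cq q m j = nr q (j + 1) * Cq q (m + 1) (j + 1) := by
  induction m generalizing j with
  | zero =>
    cases j with
    | zero => simp [Cq_zero, Cq_succ, Cq_zero_succ]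
    | succ j => simp [Cq_succ, Cq_zero_succ]
  | succ m ih =>
    cases j with
    | zero => simp [Cq_zero, Cq_one, nr_one]
    | succ j =>
      have h1 := ih j
      have h2 := ih (j + 1)
      rw [Cq_succ q (m + 1) (j + 1)]
      have e1 : nr q (m + 1 + 1) = nr q (m + 1) * q + 1 := by rw [nr_succ']; ring
      have e2 : nr q (j + 1 + 1) = nr q (j + 1) + q ^ (j + 1) := nr_succ _ _
      have e3 : nr q (j + 1 + 1) = nr q (j + 1) * q + 1 := by rw [nr_succ']; ring
      have e4 := Cq_succ q m j
      zify at *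
      have : (nr q (j + 1 + 1) : ℤ) * (q ^ (j + 1 + 1) * Cq q (m + 1) (j + 1 + 1))
        = q ^ (j + 1 + 1) * (nr q (m + 1) * Cq q m (j + 1)) := by rw [h2]; ring
      rw [mul_add, this, e1, e3]
      have h5 : (q : ℤ) * (nr q (m + 1) * Cq q m j) = q * (nr q (j + 1) * Cq q (m + 1) (j + 1)) := by
        rw [h1]
      linear_combination (nr q (m + 1) : ℤ) * q * e4 + h5

lemma Up_zero (S : Submodule F V) : Up S 0 = {S} := by
  ext W
  rw [mem_Up, mem_singleton]
  constructor
  · rintro ⟨h1, h2⟩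
    exact (eq_of_rank h1 (by omega)).symm
  · rintro rfl; simp

/-- members of `Up S k` missing `B` -/
def ff (S : Submodule F V) (B : Finset (Submodule F V)) (k : ℕ) : Finset (Submodule F V) :=
  (Up S k).filter (fun W => ∀ Q ∈ B, ¬ Q ≤ W)

lemma ff_rec {S : Submodule F V} {B : Finset (Submodule F V)} (_hB : B ⊆ Up S 1) (k : ℕ) :
    nr (Fintype.card F) (k + 1) * (ff S B (k + 1)).card
      = ∑ P ∈ Up S 1 \ B, (ff P (proj B P) k).card := by
  have h1 : ∀ P ∈ Up S 1 \ B, (ff P (proj B P) k) = (ff S B (k + 1)).filter (P ≤ ·) := by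
    intro P hP
    obtain ⟨hP, hPB⟩ := mem_sdiff.1 hP
    ext W
    simp only [ff, mem_filter, Up_trans hP, proj, mem_image, forall_exists_index, and_imp,
      forall_apply_eq_imp_iff₂, sup_le_iff, not_and, add_comm 1 k]
    constructor
    · rintro ⟨⟨h1, h2⟩, h3⟩
      exact ⟨⟨h1, fun Q hQ h => h3 Q hQ h h2⟩, h2⟩
    · rintro ⟨⟨h1, h2⟩, h3⟩
      exact ⟨⟨h1, h3⟩, fun Q hQ h _ => h2 Q hQ h⟩
  rw [sum_congr rfl (fun P hP => by rw [h1 P hP])]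
  simp only [card_filter _ (ff S B (k + 1))]
  rw [sum_comm]
  simp only [← card_filter]
  rw [sum_congr rfl (g := fun _ => nr (Fintype.card F) (k + 1))]
  · rw [sum_const, smul_eq_mul, mul_comm]
  · intro W hW
    obtain ⟨hW, hWB⟩ := mem_filter.1 hW
    rw [← card_pts hW]
    congr 1
    ext P
    simp only [mem_filter, mem_sdiff]
    constructor
    · rintro ⟨⟨h1, h2⟩, h3⟩; exact ⟨h1, h3⟩
    · rintro ⟨h1, h3⟩; exact ⟨⟨h1, fun h => hWB P h h3⟩, h3⟩

lemma nr_pos (q c : ℕ) : 0 < nr q (c + 1) := by rw [nr_succ']; omega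

lemma card_Up (j : ℕ) : ∀ (m : ℕ) (S : Submodule F V), finrank F V = finrank F S + m →
    (Up S j).card = Cq (Fintype.card F) m j := by
  induction j with
  | zero => intro m S _; rw [Up_zero, Cq_zero, card_singleton]
  | succ j ih =>
    intro m S hm
    have h := ff_rec (S := S) (B := ∅) (by simp) j
    simp only [ff, proj, image_empty, notMem_empty, false_imp_iff, implies_true, filter_true,
      sdiff_empty] at h
    cases m with
    | zero =>
      have : (Up S 1).card = 0 := by rw [card_Up_one hm, nr_zero]
      rw [card_eq_zero.1 this, sum_empty] at h
      have := nr_pos (Fintype.card F) j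
      rw [Cq_zero_succ]
      rcases Nat.mul_eq_zero.1 h with h | h
      · omega
      · exact h
    | succ m =>
      rw [sum_congr rfl (fun P hP => ih m P (by rw [hm, (mem_Up.1 hP).2]; ring)), sum_const,
        card_Up_one hm, smul_eq_mul, absorb] at h
      exact Nat.eq_of_mul_eq_mul_left (nr_pos _ _) h

lemma nr_add (q a b : ℕ) : nr q (a + b) = nr q a + q ^ a * nr q b := by
  induction b with
  | zero => simp [nr_zero]
  | succ b ih => rw [← add_assoc, nr_succ, ih, nr_succ, pow_add]; ring

/-- the main bound; here `k = κ + 1` -/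
lemma main_bound (d κ : ℕ) : ∀ (m : ℕ) (S : Submodule F V) (B : Finset (Submodule F V)),
    κ ≤ m → finrank F V = finrank F S + (d + m + 1) → B ⊆ Up S 1 →
    B.card ≤ nr (Fintype.card F) (d + 1) →
    (Fintype.card F : ℤ) ^ ((κ + 1) * (d + 1)) * Cq (Fintype.card F) m (κ + 1) +
      (nr (Fintype.card F) (d + 1) - B.card) * ((Fintype.card F : ℤ) ^ (κ * d) *
        Cq (Fintype.card F) m κ) ≤ (ff S B (κ + 1)).card := by
  induction κ with
  | zero =>
    intro m S B _ hV hB hb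
    set q := Fintype.card F with hq
    have h : ff S B (0 + 1) = Up S 1 \ B := by
      ext W
      simp only [ff, zero_add, mem_filter, mem_sdiff]
      constructor
      · rintro ⟨h1, h2⟩; exact ⟨h1, fun h => h2 W h le_rfl⟩
      · rintro ⟨h1, h2⟩
        exact ⟨h1, fun Q hQ h => not_le_pt (hB hQ) h1 (fun e => h2 (e ▸ hQ)) h⟩
    rw [h, card_sdiff_of_subset hB, Nat.cast_sub (card_le_card hB), card_Up_one hV,
      show d + m + 1 = (d + 1) + m by ring, ← hq, nr_add q (d + 1) m, Cq_one, Cq_zero]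
    push_cast
    apply le_of_eq
    ring
  | succ κ ih =>
    intro m S B hkm hV hB hb
    obtain ⟨m, rfl⟩ : ∃ r, m = r + 1 := ⟨m - 1, by omega⟩
    have hrec := ff_rec hB (κ + 1)
    have hT := T_lemma d (d + (m + 1)) (by omega) S B hV hB
    have hcardU := card_Up_one hV
    have hbU : B.card ≤ nr (Fintype.card F) (d + (m + 1) + 1) := by
      rw [← hcardU]; exact card_le_card hB
    set q := Fintype.card F with hq
    obtain ⟨A, hA⟩ : ∃ A : ℤ, A = (q : ℤ) ^ ((κ + 1) * (d + 1)) * Cq q m (κ + 1) := ⟨_, rfl⟩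
    obtain ⟨D, hD⟩ : ∃ D : ℤ, D = (q : ℤ) ^ (κ * d) * Cq q m κ := ⟨_, rfl⟩
    have h1 : ∀ P ∈ Up S 1 \ B, A + (nr q (d + 1) - B.card + cc B P) * D
        ≤ ((ff P (proj B P) (κ + 1)).card : ℤ) := by
      intro P hP
      obtain ⟨hP, hPB⟩ := mem_sdiff.1 hP
      have := ih m P (proj B P) (by omega) (by rw [hV, (mem_Up.1 hP).2]; ring)
        (proj_sub hB hP hPB) ((card_proj_le B P).trans hb)
      rw [cc_cast]
      have e : (nr q (d + 1) : ℤ) - B.card + (B.card - (proj B P).card)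
        = nr q (d + 1) - (proj B P).card := by ring
      rw [e, hA, hD]
      exact this
    have h2 := sum_le_sum h1
    rw [sum_add_distrib, ← sum_mul, sum_add_distrib, sum_const, sum_const,
      card_sdiff_of_subset hB, nsmul_eq_mul, nsmul_eq_mul, hcardU, Nat.cast_sub hbU,
      ← Nat.cast_sum, ← Nat.cast_sum, ← hrec] at h2
    have hTT : (∑ P ∈ Up S 1 \ B, cc B P) = TT S B := rfl
    rw [hTT] at h2
    set e : ℤ := (nr q (d + 1) : ℤ) - B.card with he
    have hD0 : 0 ≤ D := by rw [hD]; positivity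
    have hn1 : (nr q (d + (m + 1) + 1) : ℤ) - B.card = q ^ (d + 1) * nr q (m + 1) + e := by
      rw [he, show d + (m + 1) + 1 = (d + 1) + (m + 1) by ring, nr_add q (d + 1) (m + 1)]; push_cast; ring
    have hn2 : (nr q (d + (m + 1) + 1) : ℤ) = nr q d + q ^ d * nr q (m + 1 + 1) := by
      rw [show d + (m + 1) + 1 = d + (m + 1 + 1) by ring, nr_add q d (m + 1 + 1)]; push_cast; ring
    have h3 : e * (q ^ d * nr q (m + 1 + 1)) ≤
        ((nr q (d + (m + 1) + 1) : ℤ) - B.card) * e + TT S B := by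
      rw [hn2]; nlinarith
    have h4 := mul_le_mul_of_nonneg_right h3 hD0
    rw [hn1] at h2 h4
    have a1 : (nr q (m + 1) : ℤ) * Cq q m (κ + 1) = nr q (κ + 1 + 1) * Cq q (m + 1) (κ + 1 + 1) := by
      exact_mod_cast absorb q m (κ + 1)
    have a2 : (nr q (m + 1) : ℤ) * Cq q m κ = nr q (κ + 1) * Cq q (m + 1) (κ + 1) := by
      exact_mod_cast absorb q m κ
    have a3 : (Cq q (m + 1) (κ + 1) : ℤ) = Cq q m κ + q ^ (κ + 1) * Cq q m (κ + 1) := by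
      exact_mod_cast Cq_succ q m κ
    have a4 : (nr q (m + 1 + 1) : ℤ) = q * nr q (m + 1) + 1 := by exact_mod_cast nr_succ' q (m + 1)
    have a5 : (nr q (κ + 1 + 1) : ℤ) = q * nr q (κ + 1) + 1 := by exact_mod_cast nr_succ' q (κ + 1)
    have i1 : (q : ℤ) ^ (d + 1) * nr q (m + 1) * A =
        nr q (κ + 1 + 1) * (q ^ ((κ + 1 + 1) * (d + 1)) * Cq q (m + 1) (κ + 1 + 1)) := by
      have : (q : ℤ) ^ ((κ + 1 + 1) * (d + 1)) = q ^ (d + 1) * q ^ ((κ + 1) * (d + 1)) := by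
        rw [← pow_add]; congr 1; ring
      rw [this, hA]
      linear_combination (q : ℤ) ^ (d + 1) * q ^ ((κ + 1) * (d + 1)) * a1
    have i2 : A + q ^ d * nr q (m + 1 + 1) * D =
        nr q (κ + 1 + 1) * ((q : ℤ) ^ ((κ + 1) * d) * Cq q (m + 1) (κ + 1)) := by
      have p1 : (q : ℤ) ^ ((κ + 1) * (d + 1)) = q ^ (κ * d) * q ^ d * q ^ (κ + 1) := by
        rw [← pow_add, ← pow_add]; congr 1; ring
      have p2 : (q : ℤ) ^ ((κ + 1) * d) = q ^ (κ * d) * q ^ d := by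
        rw [← pow_add]; congr 1; ring
      rw [hA, hD, p1, p2, a4, a5]
      linear_combination (q : ℤ) ^ (κ * d) * q ^ d * (q * a2 - a3)
    have hpos : (0 : ℤ) < nr q (κ + 1 + 1) := by exact_mod_cast nr_pos q (κ + 1)
    apply le_of_mul_le_mul_left _ hpos
    push_cast at h2
    have j2 : (nr q (κ + 1 + 1) : ℤ) * (e * ((q : ℤ) ^ ((κ + 1) * d) * Cq q (m + 1) (κ + 1)))
      = e * (A + q ^ d * nr q (m + 1 + 1) * D) := by rw [i2]; ring
    rw [mul_add, ← i1, j2]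
    linarith

end Metsch

noncomputable section MetschDual
open Finset Module
open scoped Classical

lemma theta_eq {q : ℕ} (hq : 2 ≤ q) (d : ℕ) : theta q d = nr q (d + 1) := by
  rw [theta, nr, Nat.geomSum_eq hq]

lemma gauss_eq (F : Type) [Field F] [Fintype F] (a b : ℕ) :
    gauss F a b = Cq (Fintype.card F) a b := by
  rw [← card_Up b a (⊥ : Submodule F (Fin a → F)) (by simp), gauss]
  apply Nat.subtype_card
  intro W
  rw [mem_Up, finrank_bot]
  simp

lemma dual_bound {F : Type} [Field F] [Fintype F] (d s n : ℕ)
    (hds : d ≤ s + 1) (hsn : s < n)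
    (B : Set (Submodule F (Fin (n + 1) → F)))
    (hB : ∀ H ∈ B, Module.finrank F H = n)
    (hcard : B.ncard ≤ nr (Fintype.card F) (d + 1)) :
    (Fintype.card F) ^ ((n - s) * (d + 1)) * Cq (Fintype.card F) (n - d) (n - s) +
      (nr (Fintype.card F) (d + 1) - B.ncard) * ((Fintype.card F) ^ ((n - s - 1) * d) *
        Cq (Fintype.card F) (n - d) (n - s - 1)) ≤
    {W : Submodule F (Fin (n + 1) → F) | Module.finrank F W = s + 1 ∧ ∀ H ∈ B, ¬ W ≤ H}.ncard := by
  have hfin : Finite (Dual F (Fin (n + 1) → F)) := Module.finite_of_finite F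
  have hrk : ∀ W : Submodule F (Fin (n + 1) → F),
      finrank F W + finrank F W.dualAnnihilator = n + 1 := by
    intro W
    rw [Subspace.finrank_add_finrank_dualAnnihilator_eq]; simp
  have hinj : Function.Injective
      (fun W : Submodule F (Fin (n + 1) → F) => W.dualAnnihilator) := by
    intro W W' h
    exact Subspace.dualAnnihilator_inj.1 h
  obtain ⟨B', hB'⟩ : ∃ B' : Finset (Submodule F (Dual F (Fin (n + 1) → F))),
      B' = (Set.toFinite B).toFinset.image (fun W => W.dualAnnihilator) := ⟨_, rfl⟩
  have hc : B'.card = B.ncard := by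
    rw [hB', card_image_of_injective _ hinj, Set.ncard_eq_toFinset_card B]
  have hsub : B' ⊆ Up (⊥ : Submodule F (Dual F (Fin (n + 1) → F))) 1 := by
    intro Q hQ
    rw [hB', mem_image] at hQ
    obtain ⟨H, hH, rfl⟩ := hQ
    rw [Set.Finite.mem_toFinset] at hH
    rw [mem_Up]
    refine ⟨bot_le, ?_⟩
    have := hrk H
    have := hB H hH
    simp only [finrank_bot]
    omega
  obtain ⟨κ, hκ⟩ : ∃ κ, n - s = κ + 1 := ⟨n - s - 1, by omega⟩
  have hm := main_bound d κ (n - d) ⊥ B' (by omega) (by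
    rw [Subspace.dual_finrank_eq, finrank_bot]; simp; omega) hsub (by rw [hc]; exact hcard)
  rw [hκ, Nat.add_sub_cancel]
  have h2 : (ff ⊥ B' (κ + 1)).card ≤
    {W : Submodule F (Fin (n + 1) → F) | Module.finrank F W = s + 1 ∧ ∀ H ∈ B, ¬ W ≤ H}.ncard := by
    rw [Set.ncard_eq_toFinset_card _ (Set.toFinite _)]
    apply card_le_card_of_injOn (fun W => W.dualCoannihilator)
    · intro W hW
      have hW := mem_filter.1 (mem_coe.1 hW)
      obtain ⟨h1, h2⟩ := hW
      rw [Set.Finite.coe_toFinset]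
      have e : W.dualCoannihilator.dualAnnihilator = W :=
        Subspace.dualCoannihilator_dualAnnihilator_eq
      refine ⟨?_, ?_⟩
      · have := hrk W.dualCoannihilator
        rw [e, (mem_Up.1 h1).2, finrank_bot] at this
        change finrank F W.dualCoannihilator = s + 1
        omega
      · intro H hH hle
        apply h2 H.dualAnnihilator
        · rw [hB']
          exact mem_image_of_mem _ ((Set.Finite.mem_toFinset _).2 hH)
        · rw [← e]
          exact Submodule.dualAnnihilator_anti hle
    · intro W _ W' _ h
      have h : W.dualCoannihilator = W'.dualCoannihilator := h
      rw [← Subspace.dualCoannihilator_dualAnnihilator_eq (W := W), h,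
        Subspace.dualCoannihilator_dualAnnihilator_eq]
  refine le_trans ?_ h2
  rw [hc] at hm
  zify [hcard]
  exact hm

end MetschDual

/-- dual of Metsch's theorem.  Let `d ≥ 0`, `d - 1 ≤ s < n`, and
let `B` be a set of hyperplanes of `PG(n,q)` with `|B| ≤ θ_d`.  Then the number of
`s`-spaces not contained in any element of `B` is at least
`q^((n-s)(d+1))·C(n-d, n-s)_q + (θ_d - |B|)·q^((n-s-1)d)·C(n-d, n-s-1)_q`. -/
theorem stmt_6 {F : Type} [Field F] [Fintype F] (d s n : ℕ)
    (hds : d ≤ s + 1) (hsn : s < n)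
    (B : Set (Submodule F (Fin (n + 1) → F)))
    (hB : ∀ H ∈ B, Module.finrank F H = n)
    (hcard : B.ncard ≤ theta (Fintype.card F) d) :
    (Fintype.card F) ^ ((n - s) * (d + 1)) * gauss F (n - d) (n - s) +
      (theta (Fintype.card F) d - B.ncard) * ((Fintype.card F) ^ ((n - s - 1) * d) * gauss F (n - d) (n - s - 1)) ≤
    {W : Submodule F (Fin (n + 1) → F) | Module.finrank F W = s + 1 ∧ ∀ H ∈ B, ¬ W ≤ H}.ncard := by
  rw [theta_eq Fintype.one_lt_card] at hcard ⊢
  rw [gauss_eq, gauss_eq]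
  exact dual_bound d s n hds hsn B hB hcard
end

section
/- Let q be a prime power, k ≥ 1, and n = 2k+1. Let B = B_0 ∪ B_{n-1} be a blocking set with respect to k-spaces in PG(2k+1,q) consisting of points and hyperplanes, and let ρ be a (k-1)-space containing no point of B_0. Then the number N of hyperplanes of B_{n-1} containing ρ satisfies q^k·N ≥ (q+1)·q^k - |B_0| (equivalently, N ≥ q + 1 - |B_0|/q^k). -/
open Classical in
lemma aux_diff {F V : Type} [Field F] [Fintype F] [AddCommGroup V] [Module F V] [Fintype V]
    (A C : Submodule F V) (a c : ℕ) (ha : Module.finrank F A ≤ a)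
    (hc : c ≤ Module.finrank F (A ⊓ C : Submodule F V)) :
    (Finset.univ.filter (fun v => v ∈ A ∧ v ∉ C)).card ≤
      Fintype.card F ^ a - Fintype.card F ^ c := by
  have h1 : (Finset.univ.filter (fun v => v ∈ A)).card = Fintype.card F ^ Module.finrank F A := by
    rw [← Module.card_eq_pow_finrank (K := F) (V := A), Fintype.card_subtype]
  have h2 : (Finset.univ.filter (fun v => v ∈ A ⊓ C)).card =
      Fintype.card F ^ Module.finrank F (A ⊓ C : Submodule F V) := by
    rw [← Module.card_eq_pow_finrank (K := F) (V := (A ⊓ C : Submodule F V)),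
      Fintype.card_subtype]
  have h3 : (Finset.univ.filter (fun v => v ∈ A)).card =
      (Finset.univ.filter (fun v => v ∈ A ⊓ C)).card +
      (Finset.univ.filter (fun v => v ∈ A ∧ v ∉ C)).card := by
    rw [← Finset.card_filter_add_card_filter_not (s := Finset.univ.filter (fun v => v ∈ A))
      (fun v => v ∈ C)]
    simp [Finset.filter_filter, Submodule.mem_inf]
  have q1 : 1 ≤ Fintype.card F := Fintype.card_pos
  have h4 := Nat.pow_le_pow_right q1 ha
  have h5 := Nat.pow_le_pow_right q1 hc
  omega


/-- Let `B = B0 ∪ Bn` be a blocking set of points and hyperplanes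
with respect to `k`-spaces in `PG(2k+1,q)` and let `ρ` be a `(k-1)`-space containing
no point of `B0`.  Then the number `N` of hyperplanes of `Bn` through `ρ` satisfies
`q^k·N ≥ (q+1)·q^k - |B0|`, stated here as `(q+1)·q^k ≤ q^k·N + |B0|`. -/
theorem stmt_7 {F : Type} [Field F] [Fintype F] (k : ℕ) (hk : 1 ≤ k)
    (B0 Bn : Set (Submodule F (Fin (2 * k + 2) → F)))
    (hB0 : ∀ p ∈ B0, Module.finrank F p = 1)
    (hBn : ∀ H ∈ Bn, Module.finrank F H = 2 * k + 1)
    (hblock : ∀ W : Submodule F (Fin (2 * k + 2) → F), Module.finrank F W = k + 1 →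
      (∃ p ∈ B0, p ≤ W) ∨ (∃ H ∈ Bn, W ≤ H))
    (ρ : Submodule F (Fin (2 * k + 2) → F)) (hρ : Module.finrank F ρ = k)
    (hρB0 : ∀ p ∈ B0, ¬ p ≤ ρ) :
    (Fintype.card F + 1) * (Fintype.card F) ^ k ≤
      (Fintype.card F) ^ k * {H ∈ Bn | ρ ≤ H}.ncard + B0.ncard := by
  classical
  set q := Fintype.card F with hq
  have q2 : 2 ≤ q := Fintype.one_lt_card
  have hcover : ∀ v, v ∉ ρ → (∃ p ∈ B0, v ∈ ρ ⊔ p) ∨ ∃ H ∈ Bn, ρ ≤ H ∧ v ∈ H := by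
    intro v hv
    have hv0 : v ≠ 0 := fun h => hv (h ▸ ρ.zero_mem)
    have hinf : ρ ⊓ Submodule.span F {v} = ⊥ := by
      rw [← disjoint_iff, Submodule.disjoint_span_singleton' hv0]
      exact hv
    have hW : Module.finrank F (ρ ⊔ Submodule.span F {v} : Submodule F _) = k + 1 := by
      have h := Submodule.finrank_sup_add_finrank_inf_eq ρ (Submodule.span F {v})
      rw [hinf, finrank_bot, finrank_span_singleton hv0, hρ] at h
      simpa using h
    have hvW : v ∈ ρ ⊔ Submodule.span F {v} :=
      (le_sup_right : _ ≤ ρ ⊔ Submodule.span F {v}) (Submodule.mem_span_singleton_self v)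
    rcases hblock _ hW with ⟨p, hp, hpW⟩ | ⟨H, hH, hWH⟩
    · left
      refine ⟨p, hp, ?_⟩
      have hlt : ρ < ρ ⊔ p := lt_of_le_of_ne le_sup_left
        (fun h => hρB0 p hp (h ▸ le_sup_right))
      have hle : ρ ⊔ p ≤ ρ ⊔ Submodule.span F {v} := sup_le le_sup_left hpW
      have h1 := Submodule.finrank_lt_finrank_of_lt hlt
      have heq := Submodule.eq_of_le_of_finrank_le hle (by omega)
      rw [heq]; exact hvW
    · right
      exact ⟨H, hH, le_sup_left.trans hWH, hWH hvW⟩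
  have hVdim : Module.finrank F (Fin (2 * k + 2) → F) = 2 * k + 2 := by simp
  have hVcard : Fintype.card (Fin (2 * k + 2) → F) = q ^ (2 * k + 2) := by simp [hq]
  have hsplit : ∀ C : Submodule F (Fin (2 * k + 2) → F),
      q ^ (2 * k + 2) = q ^ Module.finrank F C +
        (Finset.univ.filter (fun v => v ∉ C)).card := by
    intro C
    rw [← hVcard, hq, ← Module.card_eq_pow_finrank (K := F) (V := C), Fintype.card_subtype,
      Finset.card_filter_add_card_filter_not, Finset.card_univ]
  obtain ⟨P, hP⟩ := (Set.toFinite B0).exists_finset_coe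
  obtain ⟨T, hT⟩ := (Set.toFinite {H ∈ Bn | ρ ≤ H}).exists_finset_coe
  rw [← hP, ← hT, Set.ncard_coe_finset, Set.ncard_coe_finset]
  have memP : ∀ p, p ∈ P ↔ p ∈ B0 := fun p => by rw [← hP]; simp
  have memT : ∀ H, H ∈ T ↔ H ∈ Bn ∧ ρ ≤ H := fun H => by
    rw [← Finset.mem_coe, hT]; rfl
  have hPcard : (P.biUnion (fun p => Finset.univ.filter (fun v => v ∈ ρ ⊔ p ∧ v ∉ ρ))).card
      ≤ P.card * (q ^ (k + 1) - q ^ k) := by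
    refine Finset.card_biUnion_le_card_mul _ _ _ (fun p hp => ?_)
    refine aux_diff (ρ ⊔ p) ρ (k + 1) k ?_ ?_
    · have h := Submodule.finrank_add_le_finrank_add_finrank ρ p
      rw [hρ, hB0 p ((memP p).1 hp)] at h
      exact h
    · rw [inf_eq_right.2 le_sup_left, hρ]
  obtain ⟨r, hr⟩ : ∃ r, q = r + 1 := ⟨q - 1, by omega⟩
  have hr1 : 1 ≤ r := by omega
  have e1 : q ^ (k + 1) - q ^ k = q ^ k * r := by
    rw [pow_succ, hr, Nat.mul_succ]; simp
  have e2 : q ^ (2 * k + 1) - q ^ (2 * k) = q ^ k * q ^ k * r := by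
    have : q ^ (2 * k) = q ^ k * q ^ k := by ring
    rw [pow_succ, this, hr, Nat.mul_succ]; simp
  have qk : 1 ≤ q ^ k := Nat.one_le_pow _ _ (by omega)
  rw [e1] at hPcard
  rcases T.eq_empty_or_nonempty with hTe | ⟨H0, hH0⟩
  · have hsub : Finset.univ.filter (fun v => v ∉ ρ) ⊆
        P.biUnion (fun p => Finset.univ.filter (fun v => v ∈ ρ ⊔ p ∧ v ∉ ρ)) := by
      intro v hv
      have hv : v ∉ ρ := by simpa using hv
      rcases hcover v hv with ⟨p, hp, hvp⟩ | ⟨H, hH, hρH, _⟩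
      · simp only [Finset.mem_biUnion, Finset.mem_filter, Finset.mem_univ, true_and]
        exact ⟨p, (memP p).2 hp, hvp, hv⟩
      · have := (memT H).2 ⟨hH, hρH⟩
        simp [hTe] at this
    have h1 := (Finset.card_le_card hsub).trans hPcard
    have h2 := hsplit ρ
    rw [hρ] at h2
    have h3 : q ^ (2 * k + 2) = q ^ k * q ^ k * (q * q) := by ring
    rw [h3] at h2
    have h4 : q ^ k * (q ^ k * (q * q)) ≤ q ^ k * (1 + P.card * r) := by nlinarith
    have h5 := Nat.le_of_mul_le_mul_left h4 qk
    have h6 : r * ((q + 1) * q ^ k) ≤ r * P.card := by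
      have : q ^ k * (q * q) = r * ((q + 1) * q ^ k) + q ^ k := by rw [hr]; ring
      nlinarith
    have h7 := Nat.le_of_mul_le_mul_left h6 hr1
    simpa [hTe] using h7
  · have hH0' := (memT H0).1 hH0
    have hTcard : ((T.erase H0).biUnion
        (fun H => Finset.univ.filter (fun v => v ∈ H ∧ v ∉ H0))).card
        ≤ (T.erase H0).card * (q ^ (2 * k + 1) - q ^ (2 * k)) := by
      refine Finset.card_biUnion_le_card_mul _ _ _ (fun H hH => ?_)
      have hHB := hBn H ((memT H).1 (Finset.mem_of_mem_erase hH)).1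
      refine aux_diff H H0 (2 * k + 1) (2 * k) hHB.le ?_
      have h := Submodule.finrank_sup_add_finrank_inf_eq H H0
      have h' := Submodule.finrank_le (H ⊔ H0)
      rw [hHB, hBn H0 hH0'.1] at h
      rw [hVdim] at h'
      omega
    have hsub : Finset.univ.filter (fun v => v ∉ H0) ⊆
        (T.erase H0).biUnion (fun H => Finset.univ.filter (fun v => v ∈ H ∧ v ∉ H0)) ∪
        P.biUnion (fun p => Finset.univ.filter (fun v => v ∈ ρ ⊔ p ∧ v ∉ ρ)) := by
      intro v hv
      have hv : v ∉ H0 := by simpa using hv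
      have hvρ : v ∉ ρ := fun h => hv (hH0'.2 h)
      simp only [Finset.mem_union, Finset.mem_biUnion, Finset.mem_filter, Finset.mem_univ,
        true_and]
      rcases hcover v hvρ with ⟨p, hp, hvp⟩ | ⟨H, hH, hρH, hvH⟩
      · right
        exact ⟨p, (memP p).2 hp, hvp, hvρ⟩
      · left
        refine ⟨H, Finset.mem_erase.2 ⟨?_, (memT H).2 ⟨hH, hρH⟩⟩, hvH, hv⟩
        rintro rfl
        exact hv hvH
    have h1 := (Finset.card_le_card hsub).trans (Finset.card_union_le _ _)
    have h2 := hsplit H0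
    rw [hBn H0 hH0'.1] at h2
    rw [e2] at hTcard
    have hc := Finset.card_erase_add_one hH0
    set m := (T.erase H0).card
    rw [← hc]
    have h3 : q ^ (2 * k + 2) = q ^ (2 * k + 1) + q ^ k * r * (q ^ k * q) := by
      have : q ^ (2 * k + 2) = q ^ (2 * k + 1) * q := by ring
      have h' : q ^ (2 * k + 1) = q ^ k * (q ^ k * q) := by ring
      rw [this, h']
      nth_rewrite 3 [hr]
      ring
    have h4 : q ^ k * r * (q ^ k * q) ≤ q ^ k * r * (m * q ^ k + P.card) := by nlinarith
    have h5 := Nat.le_of_mul_le_mul_left h4 (Nat.mul_pos qk hr1)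
    nlinarith
end
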